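/- arXiv:1311.0539 — 4 statements merged into one kernel-verified Lean document; each statement's English description precedes it below -/
import Mathlib

section
/- Let H be a graph with no isolated vertices and minimum degree δ(H), and suppose there exists an N such that every proper edge coloring of K_N contains a rainbow copy of H. Then 2·AR_s(H) ≥ AR_loc(H)·δ(H). -/
open SimpleGraph

/-- A proper edge coloring of `G`: adjacent (distinct, vertex-sharing) edges get
different colors. -/
def IsProperEdgeColoring {V : Type*} (G : SimpleGraph V) (c : Sym2 V → ℕ) : Prop :=
  ∀ e₁ ∈ G.edgeSet, ∀ e₂ ∈ G.edgeSet, e₁ ≠ e₂ → (∃ v, v ∈ e₁ ∧ v ∈ e₂) → c e₁ ≠ c e₂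

/-- `G` contains a rainbow copy of `H` with respect to the edge coloring `c`:
there is an injective graph homomorphism `H → G` whose image edges receive
pairwise distinct colors. -/
def HasRainbowCopy {V W : Type*} (G : SimpleGraph V) (H : SimpleGraph W) (c : Sym2 V → ℕ) : Prop :=
  ∃ f : H →g G, Function.Injective f ∧
    ∀ e₁ ∈ H.edgeSet, ∀ e₂ ∈ H.edgeSet, c (Sym2.map f e₁) = c (Sym2.map f e₂) → e₁ = e₂

/-- `G → H`: every proper edge coloring of `G` contains a rainbow copy of `H`. -/
def ArrowsTo {V W : Type*} (G : SimpleGraph V) (H : SimpleGraph W) : Prop :=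
  ∀ c : Sym2 V → ℕ, IsProperEdgeColoring G c → HasRainbowCopy G H c

/-- The size anti-Ramsey number: the minimum number of edges of a (finite) graph
`G` with `G → H`. -/
noncomputable def ARs {W : Type*} (H : SimpleGraph W) : ℕ :=
  sInf {m | ∃ (n : ℕ) (G : SimpleGraph (Fin n)), ArrowsTo G H ∧ G.edgeSet.ncard = m}

/-- The local anti-Ramsey number: the minimum `n` such that `K_n → H`. -/
noncomputable def ARloc {W : Type*} (H : SimpleGraph W) : ℕ :=
  sInf {n | ArrowsTo (⊤ : SimpleGraph (Fin n)) H}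

/-- If `G → H`, and `g` injectively enumerates (at least) all vertices of `G` of degree at
least `δ(H)`, then `K_k → H`. -/
theorem arrows_top_of_arrows {W : Type} [Fintype W] (H : SimpleGraph W) [DecidableRel H.Adj]
    {n k : ℕ} (G : SimpleGraph (Fin n)) [DecidableRel G.Adj] (hG : ArrowsTo G H)
    (g : Fin k → Fin n) (hg : Function.Injective g)
    (hS : ∀ v, H.minDegree ≤ G.degree v → ∃ i, g i = v) :
    ArrowsTo (⊤ : SimpleGraph (Fin k)) H := by
  classical
  intro c hc
  have hmi : Function.Injective (Sym2.map g) := Sym2.map.injective hg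
  let enc : Sym2 (Fin n) → ℕ := fun e => 2 * (Fintype.equivFin (Sym2 (Fin n)) e : ℕ) + 1
  let c' : Sym2 (Fin n) → ℕ := Function.extend (Sym2.map g) (fun e => 2 * c e) enc
  have hc1 : ∀ e, c' (Sym2.map g e) = 2 * c e := fun e => hmi.extend_apply _ _ e
  have hc2 : ∀ e, (¬ ∃ a, Sym2.map g a = e) → c' e = enc e :=
    fun e he => Function.extend_apply' _ _ e he
  have hproper : IsProperEdgeColoring G c' := by
    rintro e₁ h₁ e₂ h₂ hne ⟨v, hv₁, hv₂⟩ heq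
    by_cases r₁ : ∃ a, Sym2.map g a = e₁ <;> by_cases r₂ : ∃ a, Sym2.map g a = e₂
    · obtain ⟨a, rfl⟩ := r₁
      obtain ⟨b, rfl⟩ := r₂
      rw [hc1, hc1] at heq
      rw [Sym2.mem_map] at hv₁ hv₂
      obtain ⟨x, hx, rfl⟩ := hv₁
      obtain ⟨y, hy, hyx⟩ := hv₂
      obtain rfl := hg hyx
      have aux : ∀ e : Sym2 (Fin k), Sym2.map g e ∈ G.edgeSet →
          e ∈ (⊤ : SimpleGraph (Fin k)).edgeSet := by
        intro e
        induction e with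
        | _ p q =>
          intro hpq
          rw [Sym2.map_mk, SimpleGraph.mem_edgeSet] at hpq
          rw [SimpleGraph.mem_edgeSet, SimpleGraph.top_adj]
          rintro rfl
          exact G.loopless.irrefl _ hpq
      exact hc a (aux a h₁) b (aux b h₂) (fun hab => hne (by rw [hab])) ⟨y, hx, hy⟩ (by omega)
    · obtain ⟨a, rfl⟩ := r₁
      rw [hc1, hc2 _ r₂] at heq
      simp only [enc] at heq
      omega
    · obtain ⟨a, rfl⟩ := r₂
      rw [hc1, hc2 _ r₁] at heq
      simp only [enc] at heq
      omega
    · rw [hc2 _ r₁, hc2 _ r₂] at heq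
      simp only [enc] at heq
      exact hne ((Fintype.equivFin (Sym2 (Fin n))).injective (Fin.ext (by omega)))
  obtain ⟨f, hf, hrain⟩ := hG c' hproper
  have hdeg : ∀ w, H.minDegree ≤ G.degree (f w) := by
    intro w
    refine (H.minDegree_le_degree w).trans ?_
    rw [← SimpleGraph.card_neighborFinset_eq_degree, ← SimpleGraph.card_neighborFinset_eq_degree]
    refine Finset.card_le_card_of_injOn f ?_ hf.injOn
    intro x hx
    simp only [Finset.mem_coe, SimpleGraph.mem_neighborFinset] at hx ⊢
    exact f.map_adj hx
  choose f' hf' using fun w => hS (f w) (hdeg w)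
  have hinj : Function.Injective f' := fun a b hab => hf (by rw [← hf', ← hf', hab])
  refine ⟨⟨f', ?_⟩, hinj, ?_⟩
  · intro a b hab
    rw [SimpleGraph.top_adj]
    exact fun he => hab.ne (hinj he)
  · intro e₁ h₁ e₂ h₂ he
    have key : ∀ e : Sym2 W, Sym2.map f e = Sym2.map g (Sym2.map f' e) := by
      intro e
      rw [Sym2.map_map]
      congr 1
      funext w
      exact (hf' w).symm
    refine hrain e₁ h₁ e₂ h₂ ?_
    rw [key, key, hc1, hc1]
    exact congrArg (2 * ·) he

theorem stmt_1 {W : Type} [Fintype W] (H : SimpleGraph W) [DecidableRel H.Adj]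
    (hiso : ∀ v : W, ∃ w, H.Adj v w)
    (h : ∃ N : ℕ, ArrowsTo (⊤ : SimpleGraph (Fin N)) H) :
    ARloc H * H.minDegree ≤ 2 * ARs H := by
  classical
  obtain ⟨N, hN⟩ := h
  have hne : {m | ∃ (n : ℕ) (G : SimpleGraph (Fin n)), ArrowsTo G H ∧
      G.edgeSet.ncard = m}.Nonempty := ⟨_, N, ⊤, hN, rfl⟩
  obtain ⟨n, G, hG, hm⟩ := Nat.sInf_mem hne
  change _ = ARs H at hm
  let S : Finset (Fin n) := Finset.univ.filter fun v => H.minDegree ≤ G.degree v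
  have hloc : ARloc H ≤ S.card := by
    refine Nat.sInf_le ?_
    refine arrows_top_of_arrows H G hG (fun i => (S.equivFin.symm i : Fin n))
      (Subtype.val_injective.comp S.equivFin.symm.injective) ?_
    intro v hv
    have hvS : v ∈ S := by simp [S, hv]
    exact ⟨S.equivFin ⟨v, hvS⟩, by simp⟩
  have hcard : G.edgeSet.ncard = G.edgeFinset.card := by
    rw [← SimpleGraph.coe_edgeFinset, Set.ncard_coe_finset]
  calc ARloc H * H.minDegree ≤ S.card * H.minDegree := Nat.mul_le_mul_right _ hloc
    _ = ∑ v ∈ S, H.minDegree := by rw [Finset.sum_const, smul_eq_mul]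
    _ ≤ ∑ v ∈ S, G.degree v := Finset.sum_le_sum fun v hv => (Finset.mem_filter.mp hv).2
    _ ≤ ∑ v, G.degree v :=
      Finset.sum_le_sum_of_subset (Finset.subset_univ S)
    _ = 2 * ARs H := by rw [G.sum_degrees_eq_twice_card_edges, ← hm, hcard]
end

section
/- AR_loc(K_4) = 7. That is, every proper edge coloring of the complete graph K_7 contains a rainbow copy of K_4, while the complete graph K_6 admits a proper edge coloring containing no rainbow copy of K_4. -/
open SimpleGraph

/-- A symmetric function giving the standard 1-factorization of `K_6`. -/
def auxCol (a b : ℕ) : ℕ :=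
  if a = 5 then (2 * b) % 5 else if b = 5 then (2 * a) % 5 else (a + b) % 5

lemma auxCol_comm (a b : ℕ) : auxCol a b = auxCol b a := by
  unfold auxCol
  split_ifs <;> omega

lemma auxCol_lt (a b : ℕ) : auxCol a b < 5 := by
  unfold auxCol
  split_ifs <;> omega

lemma auxCol_inj {a b d : ℕ} (ha : a < 6) (hb : b < 6) (hd : d < 6) (hab : a ≠ b) (had : a ≠ d)
    (h : auxCol a b = auxCol a d) : b = d := by
  unfold auxCol at h
  split_ifs at h <;> omega

/-- The induced coloring of `K_n`. -/
def auxColor (n : ℕ) : Sym2 (Fin n) → ℕ :=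
  Sym2.lift ⟨fun a b => auxCol a.val b.val, fun a b => auxCol_comm _ _⟩

lemma not_arrows (n : ℕ) (hn : n ≤ 6) :
    ¬ ArrowsTo (⊤ : SimpleGraph (Fin n)) (⊤ : SimpleGraph (Fin 4)) := by
  intro h
  obtain ⟨f, -, hf⟩ := h (auxColor n) (by
    rintro e₁ h₁ e₂ h₂ hne ⟨v, hv₁, hv₂⟩ hc
    obtain ⟨a, rfl⟩ := hv₁
    obtain ⟨b, rfl⟩ := hv₂
    simp only [mem_edgeSet, top_adj] at h₁ h₂
    apply hne
    have : a = b := by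
      apply Fin.ext
      refine auxCol_inj (a := v.val) (by omega) (by omega) (by omega) ?_ ?_ hc
      · exact fun h => h₁ (Fin.ext h)
      · exact fun h => h₂ (Fin.ext h)
    rw [this])
  obtain ⟨x, hx, y, hy, hxy, he⟩ := Finset.exists_ne_map_eq_of_card_lt_of_maps_to
    (s := (Finset.univ : Finset (Sym2 (Fin 4))).filter (fun e => ¬ e.IsDiag))
    (t := Finset.range 5) (f := fun e => auxColor n (Sym2.map f e)) (by
      rw [Finset.card_range]
      decide) (by
      intro e _
      induction e with
      | _ a b => simpa [auxColor] using auxCol_lt _ _)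
  refine hxy (hf x ?_ y ?_ he)
  · simpa using hx
  · simpa using hy

lemma fin4_compl : ∀ i j k l : Fin 4, i ≠ j → k ≠ l → i ≠ k → i ≠ l → j ≠ k → j ≠ l →
    ({k, l} : Finset (Fin 4)) = Finset.univ \ {i, j} := by
  decide

lemma exists_setColor (c : Sym2 (Fin 7) → ℕ) :
    ∃ d : Finset (Fin 7) → ℕ, ∀ a b, d {a, b} = c s(a, b) := by
  refine ⟨fun e => c s(e.inf id, e.sup id), fun a b => ?_⟩
  rcases le_total a b with h | h
  · simp [h]
  · simp [h, Sym2.eq_swap]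

lemma arrows7 : ArrowsTo (⊤ : SimpleGraph (Fin 7)) (⊤ : SimpleGraph (Fin 4)) := by
  intro c hc
  by_contra hno
  obtain ⟨d, hd⟩ := exists_setColor c
  have hc' : ∀ v a b, v ≠ a → v ≠ b → c s(v, a) = c s(v, b) → a = b := by
    intro v a b ha hb h
    by_contra hab
    refine hc s(v, a) (by simpa using ha) s(v, b) (by simpa using hb) ?_ ⟨v, by simp, by simp⟩ h
    intro heq
    exact hab (Sym2.congr_right.1 heq)
  -- every 4-set contains two disjoint edges of the same color
  have key : ∀ S : Finset (Fin 7), S.card = 4 →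
      ∃ e ⊆ S, e.card = 2 ∧ d (S \ e) = d e := by
    intro S hS
    by_contra hcon
    push Not at hcon
    apply hno
    let g : Fin 4 ↪ Fin 7 := (S.orderEmbOfFin hS).toEmbedding
    have hg : Finset.univ.map g = S := Finset.map_orderEmbOfFin_univ S hS
    refine ⟨⟨g, fun {a b} h => ?_⟩, g.injective, ?_⟩
    · simpa using h
    · intro e₁ h₁ e₂ h₂ he
      induction e₁ with
      | _ i j =>
      induction e₂ with
      | _ k l =>
      simp only [mem_edgeSet, top_adj] at h₁ h₂
      change c s(g i, g j) = c s(g k, g l) at he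
      have gi : ∀ {x y}, x ≠ y → g x ≠ g y := fun h => g.injective.ne h
      by_cases hik : i = k
      · subst hik
        rw [g.injective (hc' _ _ _ (gi h₁) (gi h₂) he)]
      by_cases hil : i = l
      · subst hil
        rw [Sym2.eq_swap (a := g k)] at he
        rw [g.injective (hc' _ _ _ (gi h₁) (gi h₂.symm) he), Sym2.eq_swap]
      by_cases hjk : j = k
      · subst hjk
        rw [Sym2.eq_swap (a := g i)] at he
        rw [g.injective (hc' _ _ _ (gi h₁.symm) (gi h₂) he), Sym2.eq_swap]
      by_cases hjl : j = l
      · subst hjl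
        rw [Sym2.eq_swap (a := g i), Sym2.eq_swap (a := g k)] at he
        rw [g.injective (hc' _ _ _ (gi h₁.symm) (gi h₂.symm) he)]
      exfalso
      have hcompl := fin4_compl i j k l h₁ h₂ hik hil hjk hjl
      refine hcon (({i, j} : Finset (Fin 4)).map g) ?_ ?_ ?_
      · rw [← hg]
        exact Finset.map_subset_map.2 (Finset.subset_univ _)
      · rw [Finset.card_map, Finset.card_pair h₁]
      · rw [← hg, ← Finset.map_sdiff, ← hcompl]
        simp [hd, he]
  -- double counting
  let r : Finset (Fin 7) → Finset (Fin 7) → Prop := fun S e => e ⊆ S ∧ d (S \ e) = d e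
  classical
  have count := Finset.card_mul_le_card_mul (s := Finset.powersetCard 4 Finset.univ)
    (t := Finset.powersetCard 2 Finset.univ) (m := 2) (n := 2) r (by
      intro S hS
      rw [Finset.mem_powersetCard_univ] at hS
      obtain ⟨e, heS, he, hde⟩ := key S hS
      have hcard : (S \ e).card = 2 := by rw [Finset.card_sdiff_of_subset heS]; omega
      have hne : e ≠ S \ e := by
        intro h
        have hdj : Disjoint e (S \ e) := Finset.disjoint_sdiff
        rw [← h] at hdj
        rw [disjoint_self.1 hdj] at he
        simp at he
      refine (Finset.card_pair hne).symm.le.trans ?_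
      apply Finset.card_le_card
      intro x hx
      rw [Finset.mem_bipartiteAbove, Finset.mem_powersetCard_univ]
      rcases Finset.mem_insert.1 hx with rfl | hx
      · exact ⟨he, heS, hde⟩
      · rw [Finset.mem_singleton.1 hx]
        exact ⟨hcard, Finset.sdiff_subset, by rw [Finset.sdiff_sdiff_eq_self heS, hde]⟩) (by
      intro e he
      rw [Finset.mem_powersetCard_univ] at he
      set B := Finset.bipartiteBelow r (Finset.powersetCard 4 Finset.univ) e with hB
      have hmem : ∀ S ∈ B, S.card = 4 ∧ e ⊆ S ∧ d (S \ e) = d e := by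
        intro S hS
        rwa [hB, Finset.mem_bipartiteBelow, Finset.mem_powersetCard_univ] at hS
      have hcard : ∀ S ∈ B, (S \ e).card = 2 := by
        intro S hS
        obtain ⟨h1, h2, h3⟩ := hmem S hS
        rw [Finset.card_sdiff_of_subset h2]; omega
      have hdisj : (B : Set (Finset (Fin 7))).PairwiseDisjoint (fun S => S \ e) := by
        intro S hS T hT hST
        obtain ⟨-, hS2, hS3⟩ := hmem S hS
        obtain ⟨-, hT2, hT3⟩ := hmem T hT
        by_contra hnd
        obtain ⟨v, hvS, hvT⟩ := Finset.not_disjoint_iff.1 hnd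
        have pr : ∀ X : Finset (Fin 7), X.card = 2 → v ∈ X → ∃ a, v ≠ a ∧ X = {v, a} := by
          intro X hX hv
          obtain ⟨a, b, hab, rfl⟩ := Finset.card_eq_two.1 hX
          rcases Finset.mem_insert.1 hv with rfl | hv
          · exact ⟨b, hab, rfl⟩
          · rw [Finset.mem_singleton] at hv
            subst hv
            exact ⟨a, hab.symm, Finset.pair_comm _ _⟩
        obtain ⟨a, hva, hSa⟩ := pr _ (hcard S hS) hvS
        obtain ⟨b, hvb, hTb⟩ := pr _ (hcard T hT) hvT
        have hab : a = b := hc' v a b hva hvb (by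
          rw [← hd, ← hd, ← hSa, ← hTb, hS3, hT3])
        apply hST
        rw [← Finset.sdiff_union_of_subset hS2, ← Finset.sdiff_union_of_subset hT2, hSa, hTb, hab]
      have h1 := Finset.card_biUnion hdisj
      rw [Finset.sum_const_nat hcard] at h1
      have h2 : (B.biUnion (fun S => S \ e)).card ≤ (Finset.univ \ e).card := by
        apply Finset.card_le_card
        intro x hx
        obtain ⟨S, -, hx⟩ := Finset.mem_biUnion.1 hx
        simpa using (Finset.mem_sdiff.1 hx).2
      rw [Finset.card_sdiff_of_subset (Finset.subset_univ _), he] at h2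
      simp at h2
      omega)
  rw [Finset.card_powersetCard, Finset.card_powersetCard, Finset.card_univ, Fintype.card_fin] at count
  revert count
  decide

theorem stmt_2 :
    ARloc (⊤ : SimpleGraph (Fin 4)) = 7 ∧
    ArrowsTo (⊤ : SimpleGraph (Fin 7)) (⊤ : SimpleGraph (Fin 4)) ∧
    ¬ ArrowsTo (⊤ : SimpleGraph (Fin 6)) (⊤ : SimpleGraph (Fin 4)) := by
  refine ⟨le_antisymm (Nat.sInf_le arrows7) ?_, arrows7, not_arrows 6 le_rfl⟩
  apply le_csInf ⟨7, arrows7⟩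
  intro n hn
  by_contra hlt
  exact not_arrows n (by omega) hn
end

section
/- AR_s(K_4) = 15. That is: (i) the 15-edge graph on 7 vertices obtained from the disjoint union of a triangle on a vertex set X and an independent set Y of 4 vertices by adding all edges between X and Y has the property that every proper edge coloring of it contains a rainbow copy of K_4; and (ii) every graph with at most 14 edges admits a proper edge coloring containing no rainbow copy of K_4. -/
open SimpleGraph

def F6 : Fin 6 → Fin 6 → ℕ := fun i j =>
  ![![9, 0, 1, 2, 3, 4], ![0, 9, 4, 3, 1, 2], ![1, 4, 9, 0, 2, 3], ![2, 3, 0, 9, 4, 1],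
    ![3, 1, 2, 4, 9, 0], ![4, 2, 3, 1, 0, 9]] i j

lemma F6_symm : ∀ i j, F6 i j = F6 j i := by decide
lemma F6_proper : ∀ i j k, i ≠ j → i ≠ k → j ≠ k → F6 i j ≠ F6 i k := by decide
lemma F6_k4 : ∀ i j k l, i ≠ j → i ≠ k → i ≠ l → j ≠ k → j ≠ l → k ≠ l →
    F6 i j = F6 k l ∨ F6 i k = F6 j l ∨ F6 i l = F6 j k := by
  have h : ∀ i j k l : Fin 6, (i ≠ j ∧ i ≠ k ∧ i ≠ l ∧ j ≠ k ∧ j ≠ l ∧ k ≠ l) →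
      (F6 i j = F6 k l ∨ F6 i k = F6 j l ∨ F6 i l = F6 j k) := by
    decide +kernel
  exact fun i j k l a b c d e f => h i j k l ⟨a, b, c, d, e, f⟩


section helpers
open Classical

variable {V : Type*}

/-- proper symmetric coloring without rainbow K4 -/
def GC {α : Type*} (G : SimpleGraph V) (c : V → V → α) : Prop :=
  (∀ x y, c x y = c y x) ∧
  (∀ x y z, G.Adj x y → G.Adj x z → y ≠ z → c x y ≠ c x z) ∧
  (∀ x y z w, G.Adj x y → G.Adj x z → G.Adj x w → G.Adj y z → G.Adj y w → G.Adj z w →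
    c x y = c z w ∨ c x z = c y w ∨ c x w = c y z)

def Good (G : SimpleGraph V) : Prop := ∃ c : V → V → ℕ, GC G c

lemma good_of_gc {α : Type*} [Countable α] {G : SimpleGraph V} {c : V → V → α} (h : GC G c) :
    Good G := by
  obtain ⟨g, hg⟩ := exists_injective_nat α
  refine ⟨fun x y => g (c x y), fun x y => congrArg g (h.1 x y), ?_, ?_⟩
  · intro x y z h1 h2 h3 h4
    exact h.2.1 x y z h1 h2 h3 (hg h4)
  · intro x y z w h1 h2 h3 h4 h5 h6
    rcases h.2.2 x y z w h1 h2 h3 h4 h5 h6 with h | h | h <;> simp [h]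

lemma not_arrows_of_good {G : SimpleGraph V} (h : Good G) :
    ¬ ArrowsTo G (⊤ : SimpleGraph (Fin 4)) := by
  obtain ⟨c, hs, hp, hk⟩ := h
  intro hA
  have key := hA (Sym2.lift ⟨c, hs⟩) ?_
  · obtain ⟨f, hf, hr⟩ := key
    have adj : ∀ i j : Fin 4, i ≠ j → G.Adj (f i) (f j) := fun i j hij => f.map_adj (by simpa using hij)
    have hr' : ∀ i j k l : Fin 4, i ≠ j → k ≠ l → c (f i) (f j) = c (f k) (f l) →
        s(i, j) = s(k, l) := by
      intro i j k l h1 h2 h3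
      exact hr s(i,j) (by simpa using h1) s(k,l) (by simpa using h2) (by simpa using h3)
    rcases hk (f 0) (f 1) (f 2) (f 3) (adj _ _ (by decide)) (adj _ _ (by decide))
      (adj _ _ (by decide)) (adj _ _ (by decide)) (adj _ _ (by decide)) (adj _ _ (by decide))
      with h | h | h
    · exact absurd (hr' 0 1 2 3 (by decide) (by decide) h) (by simp)
    · exact absurd (hr' 0 2 1 3 (by decide) (by decide) h) (by simp)
    · exact absurd (hr' 0 3 1 2 (by decide) (by decide) h) (by simp)
  · rintro e₁ h1 e₂ h2 hne ⟨v, hv1, hv2⟩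
    obtain ⟨x, rfl⟩ := hv1
    obtain ⟨y, rfl⟩ := hv2
    simp only [SimpleGraph.mem_edgeSet] at h1 h2
    simp only [Sym2.lift_mk]
    exact hp v x y h1 h2 (fun h => hne (by rw [h]))

/-- remove all edges at `v` -/
def del (G : SimpleGraph V) (v : V) : SimpleGraph V where
  Adj x y := G.Adj x y ∧ x ≠ v ∧ y ≠ v
  symm := ⟨fun _ _ h => ⟨h.1.symm, h.2.2, h.2.1⟩⟩
  loopless := ⟨fun _ h => G.loopless.irrefl _ h.1⟩

lemma extend {α : Type*} {G : SimpleGraph V} {v : V} {c : V → V → α} (h : GC (del G v) c)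
    (f : V → α) (hinj : ∀ x y, G.Adj v x → G.Adj v y → x ≠ y → f x ≠ f y)
    (hfree : ∀ x y, G.Adj v x → (del G v).Adj x y → f x ≠ c x y)
    (htri : ∀ x y z, G.Adj v x → G.Adj v y → G.Adj v z → G.Adj x y → G.Adj x z → G.Adj y z →
      f x = c y z ∨ f y = c x z ∨ f z = c x y) :
    GC G (fun x y => if x = v then f y else if y = v then f x else c x y) := by
  obtain ⟨hs, hp, hk⟩ := h
  refine ⟨?_, ?_, ?_⟩
  · intro x y
    by_cases hx : x = v <;> by_cases hy : y = v <;> simp [hx, hy, hs x y]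
  · intro x y z h1 h2 h3
    by_cases hx : x = v
    · subst hx; simpa using hinj y z h1 h2 h3
    · by_cases hy : y = v
      · subst hy
        have hz : z ≠ y := h3.symm
        simpa [hx, hz] using hfree x z h1.symm ⟨h2, hx, hz⟩
      · by_cases hz : z = v
        · subst hz
          simpa [hx, hy] using (hfree x y h2.symm ⟨h1, hx, hy⟩).symm
        · simpa [hx, hy, hz] using hp x y z ⟨h1, hx, hy⟩ ⟨h2, hx, hz⟩ h3
  · intro x y z w h1 h2 h3 h4 h5 h6
    by_cases hx : x = v
    · subst hx
      have := htri y z w h1 h2 h3 h4 h5 h6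
      simp only [h1.ne', h2.ne', h3.ne', if_true, if_false]
      exact this
    · by_cases hy : y = v
      · subst hy
        have := htri x z w h1.symm h4 h5 h2 h3 h6
        simp only [hx, h4.ne', h5.ne', if_true, if_false]
        tauto
      · by_cases hz : z = v
        · subst hz
          have := htri x y w h2.symm h4.symm h6 h1 h3 h5
          simp only [hx, hy, h6.ne', if_true, if_false]
          rcases this with h | h | h <;> simp [h]
        · by_cases hw : w = v
          · subst hw
            have := htri x y z h3.symm h5.symm h6.symm h1 h2 h4
            simp only [hx, hy, hz, if_true, if_false]
            rcases this with h | h | h <;> simp [h]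
          · simpa [hx, hy, hz, hw] using hk x y z w ⟨h1, hx, hy⟩ ⟨h2, hx, hz⟩ ⟨h3, hx, hw⟩
              ⟨h4, hy, hz⟩ ⟨h5, hy, hw⟩ ⟨h6, hz, hw⟩

lemma gc_inl {G : SimpleGraph V} {c : V → V → ℕ} (h : GC G c) :
    GC G (fun x y => (Sum.inl (c x y) : ℕ ⊕ V)) := by
  simpa [GC] using h

lemma extend0 [Finite V] {G : SimpleGraph V} {v : V} (h : Good (del G v))
    (htri : ∀ x y z, G.Adj v x → G.Adj v y → G.Adj v z → G.Adj x y → G.Adj x z → ¬ G.Adj y z) :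
    Good G := by
  obtain ⟨c, hc⟩ := h
  refine good_of_gc (extend (gc_inl hc) (fun x => Sum.inr x) ?_ ?_ ?_)
  · intro x y _ _ h; simpa using h
  · intro x y _ _; simp
  · intro x y z h1 h2 h3 h4 h5 h6
    exact absurd h6 (htri x y z h1 h2 h3 h4 h5)

lemma extend1 [Finite V] {G : SimpleGraph V} {v a b d : V} {c : V → V → ℕ} (hc : GC (del G v) c)
    (hN : ∀ x, G.Adj v x → x = a ∨ x = b ∨ x = d)
    (hab : a ≠ b) (had : a ≠ d)
    (hfree : ∀ y, (del G v).Adj a y → c b d ≠ c a y) : Good G := by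
  have hs := hc.1
  refine good_of_gc (extend (gc_inl hc)
    (fun x => if x = a then Sum.inl (c b d) else Sum.inr x) ?_ ?_ ?_)
  · intro x y _ _ h
    by_cases hx : x = a <;> by_cases hy : y = a <;> simp [hx, hy]
    · exact h (hx.trans hy.symm)
    · exact h
  · intro x y h1 h2
    by_cases hx : x = a
    · subst hx; simpa using hfree y h2
    · simp [hx]
  · intro x y z h1 h2 h3 h4 h5 h6
    have e1 := h4.ne
    have e2 := h5.ne
    have e3 := h6.ne
    rcases hN x h1 with rfl | rfl | rfl <;> rcases hN y h2 with rfl | rfl | rfl <;>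
      rcases hN z h3 with rfl | rfl | rfl <;> simp_all

lemma gc_six {G : SimpleGraph V} (f : V → Fin 6) (S : Finset V)
    (hS : ∀ x y, G.Adj x y → x ∈ S) (hf : Set.InjOn f S) :
    GC G (fun x y => F6 (f x) (f y)) := by
  have hS' : ∀ x y, G.Adj x y → y ∈ S := fun x y h => hS y x h.symm
  have ne : ∀ x y, x ∈ S → y ∈ S → x ≠ y → f x ≠ f y := fun x y hx hy h e => h (hf hx hy e)
  have ne' : ∀ x y, G.Adj x y → f x ≠ f y := fun x y h => ne x y (hS _ _ h) (hS' _ _ h) h.ne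
  refine ⟨fun x y => F6_symm _ _, ?_, ?_⟩
  · intro x y z h1 h2 h3
    exact F6_proper _ _ _ (ne' _ _ h1) (ne' _ _ h2) (ne _ _ (hS' _ _ h1) (hS' _ _ h2) h3)
  · intro x y z w h1 h2 h3 h4 h5 h6
    exact F6_k4 _ _ _ _ (ne' _ _ h1) (ne' _ _ h2) (ne' _ _ h3) (ne' _ _ h4) (ne' _ _ h5)
      (ne' _ _ h6)

lemma good_six {G : SimpleGraph V} (S : Finset V)
    (hS : ∀ x y, G.Adj x y → x ∈ S) (hc : S.card ≤ 6) : Good G := by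
  obtain ⟨e⟩ : Nonempty (S ↪ Fin 6) :=
    Function.Embedding.nonempty_of_card_le (by simpa using hc)
  refine ⟨_, gc_six (fun x => if h : x ∈ S then e ⟨x, h⟩ else 0) S hS ?_⟩
  intro x hx y hy h
  have hx' : x ∈ S := hx
  have hy' : y ∈ S := hy
  simp only [hx', hy', dif_pos] at h
  simpa using e.injective h

/-- seven non-isolated vertices, `v` of degree three, `a` a neighbour of `v` not adjacent to `d` -/
lemma good_seven [Fintype V] {G : SimpleGraph V} (S : Finset V)
    (hS : ∀ x y, G.Adj x y → x ∈ S) (hc : S.card = 7) {v a b c d : V}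
    (hN : G.neighborFinset v = {a, b, c}) (hab : a ≠ b) (hac : a ≠ c) (hbc : b ≠ c)
    (hd : d ∈ S) (hdv : d ≠ v) (hda : d ≠ a) (hdb : d ≠ b) (hdc : d ≠ c) (hn : ¬ G.Adj a d) :
    Good G := by
  have hN' : ∀ x, G.Adj v x ↔ x = a ∨ x = b ∨ x = c := by
    intro x; rw [← G.mem_neighborFinset, hN]; simp
  have ha := (hN' a).2 (by simp)
  have hb := (hN' b).2 (by simp)
  have hc' := (hN' c).2 (by simp)
  have h5 : ({v, a, b, c, d} : Finset V).card = 5 := by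
    rw [Finset.card_eq_succ]
    refine ⟨v, {a, b, c, d}, ?_, rfl, ?_⟩
    · simp [ha.ne, hb.ne, hc'.ne, hdv.symm]
    · rw [Finset.card_eq_succ]
      refine ⟨a, {b, c, d}, ?_, rfl, ?_⟩
      · simp [hab, hac, hda.symm]
      · exact Finset.card_eq_three.2 ⟨b, c, d, hbc, hdb.symm, hdc.symm, rfl⟩
  have hsub : ({v, a, b, c, d} : Finset V) ⊆ S := by
    intro x hx
    simp only [Finset.mem_insert, Finset.mem_singleton] at hx
    rcases hx with rfl | rfl | rfl | rfl | rfl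
    · exact hS _ _ ha
    · exact hS _ _ ha.symm
    · exact hS _ _ hb.symm
    · exact hS _ _ hc'.symm
    · exact hd
  have h2 : (S \ {v, a, b, c, d}).card = 2 := by
    rw [Finset.card_sdiff_of_subset hsub, hc, h5]
  obtain ⟨p, q, hpq, he⟩ := Finset.card_eq_two.1 h2
  have hmem : ∀ x ∈ S, x = v ∨ x = a ∨ x = b ∨ x = c ∨ x = d ∨ x = p ∨ x = q := by
    intro x hx
    by_cases h : x ∈ ({v, a, b, c, d} : Finset V)
    · simp only [Finset.mem_insert, Finset.mem_singleton] at h; tauto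
    · have : x ∈ S \ {v, a, b, c, d} := Finset.mem_sdiff.2 ⟨hx, h⟩
      rw [he] at this
      simp only [Finset.mem_insert, Finset.mem_singleton] at this; tauto
  have hp : p ∈ S \ {v, a, b, c, d} := by rw [he]; simp
  have hq : q ∈ S \ {v, a, b, c, d} := by rw [he]; simp
  simp only [Finset.mem_sdiff, Finset.mem_insert, Finset.mem_singleton, not_or] at hp hq
  obtain ⟨hpS, hpv, hpa, hpb, hpc, hpd⟩ := hp
  obtain ⟨hqS, hqv, hqa, hqb, hqc, hqd⟩ := hq
  let f : V → Fin 6 := fun x => if x = a then 0 else if x = d then 1 else if x = b then 2 else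
    if x = c then 3 else if x = p then 4 else 5
  have fa : f a = 0 := by simp [f]
  have fd : f d = 1 := by simp [f, hda]
  have fb : f b = 2 := by simp [f, hab.symm, hdb.symm]
  have fc : f c = 3 := by simp [f, hac.symm, hdc.symm, hbc.symm]
  have fp : f p = 4 := by simp [f, *]
  have fq : f q = 5 := by simp [f, hqa, hqd, hqb, hqc, hpq.symm]
  have hinj : Set.InjOn f (S.erase v) := by
    intro x hx y hy hxy
    simp only [Finset.coe_erase, Set.mem_sdiff, Finset.mem_coe, Set.mem_singleton_iff] at hx hy
    have mx := (hmem x hx.1).resolve_left hx.2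
    have my := (hmem y hy.1).resolve_left hy.2
    rcases mx with rfl | rfl | rfl | rfl | rfl | rfl <;>
      rcases my with rfl | rfl | rfl | rfl | rfl | rfl <;>
      first
      | rfl
      | (exfalso; simp only [fa, fb, fc, fd, fp, fq] at hxy; revert hxy; decide)
  have hg := gc_six (G := del G v) f (S.erase v)
    (fun x y h => Finset.mem_erase.2 ⟨h.2.1, hS _ _ h.1⟩) hinj
  refine extend1 hg (fun x hx => (hN' x).1 hx) hab hac ?_
  rintro y ⟨h1, h2, h3⟩
  have hy := (hmem y (hS _ _ h1.symm)).resolve_left h3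
  have hya := h1.ne'
  have hyd : y ≠ d := fun h => hn (h ▸ h1)
  show F6 (f b) (f c) ≠ F6 (f a) (f y)
  rcases hy with rfl | rfl | rfl | rfl | rfl | rfl
  · exact absurd rfl hya
  · rw [fa, fb, fc]; decide
  · rw [fa, fb, fc]; decide
  · exact absurd rfl hyd
  · rw [fa, fb, fc, fp]; decide
  · rw [fa, fb, fc, fq]; decide

lemma double_count [Fintype V] (G : SimpleGraph V) (A B : Finset V) :
    ∑ a ∈ A, (G.neighborFinset a ∩ B).card = ∑ b ∈ B, (G.neighborFinset b ∩ A).card := by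
  have h := Finset.sum_card_bipartiteAbove_eq_sum_card_bipartiteBelow (s := A) (t := B)
    (fun a b => G.Adj a b)
  convert h using 3
  · ext x; simp [Finset.bipartiteAbove, and_comm]
  · ext x; simp [Finset.bipartiteBelow, and_comm, G.adj_comm]

/-- The regular case: no `K_4`. -/
lemma regular_case [Fintype V] {G : SimpleGraph V} (S : Finset V)
    (hS : ∀ x y, G.Adj x y → x ∈ S) (hc : S.card = 7)
    (hdeg : ∀ x ∈ S, (G.neighborFinset x).card = 4) (x y z w : V) (h1 : G.Adj x y)
    (h2 : G.Adj x z) (h3 : G.Adj x w) (h4 : G.Adj y z) (h5 : G.Adj y w) (h6 : G.Adj z w) :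
    False := by
  let A : Finset V := {x, y, z, w}
  have hA : A.card = 4 := by
    simp [A, h1.ne, h2.ne, h3.ne, h4.ne, h5.ne, h6.ne]
  have hAS : A ⊆ S := by
    intro u hu
    simp only [A, Finset.mem_insert, Finset.mem_singleton] at hu
    rcases hu with rfl | rfl | rfl | rfl
    · exact hS _ _ h1
    · exact hS _ _ h1.symm
    · exact hS _ _ h2.symm
    · exact hS _ _ h3.symm
  have hB : (S \ A).card = 3 := by rw [Finset.card_sdiff_of_subset hAS, hc, hA]
  have hNS : ∀ u, G.neighborFinset u ⊆ S := fun u t ht =>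
    hS _ _ ((G.mem_neighborFinset _ _).1 ht).symm
  have clique : ∀ u ∈ A, A.erase u ⊆ G.neighborFinset u ∩ A := by
    intro u hu t ht
    simp only [A, Finset.mem_insert, Finset.mem_singleton, Finset.mem_erase, Finset.mem_inter,
      SimpleGraph.mem_neighborFinset] at hu ht ⊢
    refine ⟨?_, ht.2⟩
    rcases hu with rfl | rfl | rfl | rfl <;> rcases ht with ⟨h, rfl | rfl | rfl | rfl⟩ <;>
      first
      | exact absurd rfl h
      | assumption
      | (apply SimpleGraph.Adj.symm; assumption)
  have split : ∀ u, (G.neighborFinset u ∩ A).card + (G.neighborFinset u ∩ (S \ A)).card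
      = (G.neighborFinset u).card := by
    intro u
    rw [← Finset.card_inter_add_card_sdiff (G.neighborFinset u) A]
    congr 2
    ext t
    have := @hNS u t
    simp only [Finset.mem_inter, Finset.mem_sdiff]; tauto
  have up : ∑ a ∈ A, (G.neighborFinset a ∩ (S \ A)).card ≤ ∑ a ∈ A, 1 := by
    apply Finset.sum_le_sum
    intro u hu
    have e1 := Finset.card_le_card (clique u hu)
    rw [Finset.card_erase_of_mem hu, hA] at e1
    have e2 := split u
    rw [hdeg u (hAS hu)] at e2
    omega
  have low : ∑ b ∈ S \ A, 2 ≤ ∑ b ∈ S \ A, (G.neighborFinset b ∩ A).card := by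
    apply Finset.sum_le_sum
    intro u hu
    have e1 : (G.neighborFinset u ∩ (S \ A)).card ≤ ((S \ A).erase u).card := by
      apply Finset.card_le_card
      intro t ht
      simp only [Finset.mem_inter, SimpleGraph.mem_neighborFinset] at ht
      exact Finset.mem_erase.2 ⟨ht.1.ne', ht.2⟩
    rw [Finset.card_erase_of_mem hu, hB] at e1
    have e2 := split u
    rw [hdeg u (Finset.mem_sdiff.1 hu).1] at e2
    omega
  rw [← double_count] at low
  have := low.trans up
  simp [hA, hB] at this

/-- At least eight non-isolated vertices. -/
lemma eight_case [Fintype V] {G : SimpleGraph V} (S : Finset V)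
    (hS : ∀ x y, G.Adj x y → x ∈ S) (hc : 8 ≤ S.card)
    (hsum : ∑ x ∈ S, (G.neighborFinset x).card ≤ 28)
    (hdeg : ∀ x ∈ S, 3 ≤ (G.neighborFinset x).card)
    (hind : ∀ x y, G.Adj x y → (G.neighborFinset x).card = 3 → (G.neighborFinset y).card ≠ 3)
    (htri : ∀ x y z, G.Adj x y → G.Adj x z → y ≠ z → (G.neighborFinset x).card = 3 → G.Adj y z) :
    False := by
  let T := S.filter (fun x => (G.neighborFinset x).card = 3)
  have hTS : T ⊆ S := Finset.filter_subset _ _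
  have hT : ∀ x ∈ T, (G.neighborFinset x).card = 3 := fun x hx => (Finset.mem_filter.1 hx).2
  have hNS : ∀ u, G.neighborFinset u ⊆ S := fun u t ht =>
    hS _ _ ((G.mem_neighborFinset _ _).1 ht).symm
  have s1 := Finset.sum_sdiff (f := fun x => (G.neighborFinset x).card) hTS
  have s2 : ∑ x ∈ T, (G.neighborFinset x).card = T.card * 3 := Finset.sum_const_nat hT
  have s3 : (S \ T).card * 4 ≤ ∑ x ∈ S \ T, (G.neighborFinset x).card := by
    rw [← smul_eq_mul]
    apply Finset.card_nsmul_le_sum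
    intro x hx
    have h1 := Finset.mem_sdiff.1 hx
    have h2 := hdeg x h1.1
    have h3 : (G.neighborFinset x).card ≠ 3 := fun h => h1.2 (Finset.mem_filter.2 ⟨h1.1, h⟩)
    omega
  have s4 := Finset.card_sdiff_add_card_eq_card hTS
  have ht : 4 ≤ T.card := by omega
  obtain ⟨v, hv⟩ : T.Nonempty := Finset.card_pos.1 (by omega)
  have hNT : ∀ u ∈ T, G.neighborFinset u ⊆ S \ T := by
    intro u hu t h
    refine Finset.mem_sdiff.2 ⟨hNS u h, fun h' => ?_⟩
    exact hind u t ((G.mem_neighborFinset _ _).1 h) (hT u hu) (hT t h')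
  have split : ∀ u, (G.neighborFinset u ∩ T).card + (G.neighborFinset u ∩ (S \ T)).card
      = (G.neighborFinset u).card := by
    intro u
    rw [← Finset.card_inter_add_card_sdiff (G.neighborFinset u) T]
    congr 2
    ext t
    have := @hNS u t
    simp only [Finset.mem_inter, Finset.mem_sdiff]; tauto
  have c1 : ∑ x ∈ S \ T, (G.neighborFinset x ∩ T).card = T.card * 3 := by
    rw [double_count, ← s2]
    apply Finset.sum_congr rfl
    intro u hu
    rw [Finset.inter_eq_left.2 (hNT u hu)]
  have c2 : 6 ≤ ∑ x ∈ S \ T, (G.neighborFinset x ∩ (S \ T)).card := by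
    calc 6 = ∑ x ∈ G.neighborFinset v, 2 := by simp only [Finset.sum_const, hT v hv, smul_eq_mul]
      _ ≤ ∑ x ∈ G.neighborFinset v, (G.neighborFinset x ∩ (S \ T)).card := by
          apply Finset.sum_le_sum
          intro x hx
          have h1 : (G.neighborFinset v).erase x ⊆ G.neighborFinset x ∩ (S \ T) := by
            intro y hy
            have hy' := Finset.mem_erase.1 hy
            refine Finset.mem_inter.2 ⟨?_, hNT v hv hy'.2⟩
            rw [SimpleGraph.mem_neighborFinset] at hx ⊢
            exact htri v x y hx ((G.mem_neighborFinset _ _).1 hy'.2) hy'.1.symm (hT v hv)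
          have h2 := Finset.card_le_card h1
          rw [Finset.card_erase_of_mem hx, hT v hv] at h2
          exact h2
      _ ≤ _ := Finset.sum_le_sum_of_subset (hNT v hv)
  have c3 : ∑ x ∈ S \ T, (G.neighborFinset x).card = ∑ x ∈ S \ T, (G.neighborFinset x ∩ T).card
      + ∑ x ∈ S \ T, (G.neighborFinset x ∩ (S \ T)).card := by
    rw [← Finset.sum_add_distrib]
    exact Finset.sum_congr rfl (fun u _ => (split u).symm)
  omega

lemma del_lt [Fintype V] {G : SimpleGraph V} {v w : V} (h : G.Adj v w) :
    (del G v).edgeSet.ncard < G.edgeSet.ncard := by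
  apply Set.ncard_lt_ncard _ (Set.toFinite _)
  refine ⟨SimpleGraph.edgeSet_mono (fun x y h => h.1), fun hs => ?_⟩
  have : s(v, w) ∈ (del G v).edgeSet := hs (by simpa using h)
  rw [SimpleGraph.mem_edgeSet] at this
  exact this.2.1 rfl

theorem all_good [Fintype V] : ∀ (n : ℕ) (G : SimpleGraph V), G.edgeSet.ncard = n → n ≤ 14 →
    Good G := by
  intro n
  induction n using Nat.strong_induction_on with
  | _ n ih =>
  intro G hG hn
  by_contra hbad
  have hdel : ∀ v w, G.Adj v w → Good (del G v) := by
    intro v w h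
    have := del_lt h
    exact ih _ (by omega) _ rfl (by omega)
  let S : Finset V := Finset.univ.filter (fun x => ∃ y, G.Adj x y)
  have hS : ∀ x y, G.Adj x y → x ∈ S := fun x y h => by simpa [S] using ⟨y, h⟩
  have hNS : ∀ u, G.neighborFinset u ⊆ S := fun u t ht =>
    hS _ _ ((G.mem_neighborFinset _ _).1 ht).symm
  have hk4 : ∀ v ∈ S, ∃ x y z, G.Adj v x ∧ G.Adj v y ∧ G.Adj v z ∧ G.Adj x y ∧ G.Adj x z ∧
      G.Adj y z := by
    intro v hv
    obtain ⟨w, hw⟩ := (Finset.mem_filter.1 hv).2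
    by_contra hcon
    push Not at hcon
    exact hbad (extend0 (hdel v w hw) hcon)
  have hsum : ∑ x ∈ S, (G.neighborFinset x).card ≤ 28 := by
    have h1 := G.sum_degrees_eq_twice_card_edges
    have h2 : G.edgeFinset.card = n := by
      rw [← hG, ← SimpleGraph.coe_edgeFinset, Set.ncard_coe_finset]
    have h3 : ∑ x ∈ S, (G.neighborFinset x).card ≤ ∑ x, G.degree x :=
      Finset.sum_le_sum_of_subset (Finset.subset_univ _)
    omega
  have hdeg : ∀ x ∈ S, 3 ≤ (G.neighborFinset x).card := by
    intro v hv
    obtain ⟨x, y, z, h1, h2, h3, h4, h5, h6⟩ := hk4 v hv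
    rw [← Finset.card_eq_three.2 ⟨x, y, z, h4.ne, h5.ne, h6.ne, rfl⟩]
    apply Finset.card_le_card
    intro t ht
    simp only [Finset.mem_insert, Finset.mem_singleton] at ht
    rw [SimpleGraph.mem_neighborFinset]
    rcases ht with rfl | rfl | rfl <;> assumption
  have h3 : ∀ v ∈ S, (G.neighborFinset v).card = 3 → ∃ x y z, G.neighborFinset v = {x, y, z} ∧
      G.Adj x y ∧ G.Adj x z ∧ G.Adj y z := by
    intro v hv hd
    obtain ⟨x, y, z, h1, h2, h3, h4, h5, h6⟩ := hk4 v hv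
    refine ⟨x, y, z, ?_, h4, h5, h6⟩
    symm
    apply Finset.eq_of_subset_of_card_le
    · intro t ht
      simp only [Finset.mem_insert, Finset.mem_singleton] at ht
      rw [SimpleGraph.mem_neighborFinset]
      rcases ht with rfl | rfl | rfl <;> assumption
    · rw [Finset.card_eq_three.2 ⟨x, y, z, h4.ne, h5.ne, h6.ne, rfl⟩, hd]
  have htri : ∀ x y z, G.Adj x y → G.Adj x z → y ≠ z → (G.neighborFinset x).card = 3 →
      G.Adj y z := by
    intro v y z h1 h2 hne hd
    obtain ⟨a, b, c, hN, hab, hac, hbc⟩ := h3 v (hS _ _ h1) hd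
    rw [← SimpleGraph.mem_neighborFinset, hN] at h1 h2
    simp only [Finset.mem_insert, Finset.mem_singleton] at h1 h2
    rcases h1 with rfl | rfl | rfl <;> rcases h2 with rfl | rfl | rfl <;>
      first
      | exact absurd rfl hne
      | assumption
      | (apply SimpleGraph.Adj.symm; assumption)
  -- choose the labelling so that a given neighbour comes first
  have h3' : ∀ v a, G.Adj v a → (G.neighborFinset v).card = 3 → ∃ y z,
      G.neighborFinset v = {a, y, z} ∧ G.Adj a y ∧ G.Adj a z ∧ G.Adj y z := by
    intro v a h hd
    obtain ⟨x, y, z, hN, hxy, hxz, hyz⟩ := h3 v (hS _ _ h) hd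
    have h' := h
    rw [← SimpleGraph.mem_neighborFinset, hN] at h'
    simp only [Finset.mem_insert, Finset.mem_singleton] at h'
    rcases h' with rfl | rfl | rfl
    · exact ⟨y, z, hN, hxy, hxz, hyz⟩
    · refine ⟨x, z, ?_, hxy.symm, hyz, hxz⟩
      rw [hN]; ext t; simp only [Finset.mem_insert, Finset.mem_singleton]; tauto
    · refine ⟨x, y, ?_, hxz.symm, hyz.symm, hxy⟩
      rw [hN]; ext t; simp only [Finset.mem_insert, Finset.mem_singleton]; tauto
  have hind : ∀ x y, G.Adj x y → (G.neighborFinset x).card = 3 →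
      (G.neighborFinset y).card ≠ 3 := by
    intro v a h hd hd'
    obtain ⟨b, d, hN, hab, had, hbd⟩ := h3' v a h hd
    have hN' : ∀ x, G.Adj v x ↔ x = a ∨ x = b ∨ x = d := by
      intro x; rw [← G.mem_neighborFinset, hN]; simp
    have hb := (hN' b).2 (by simp)
    have hd2 := (hN' d).2 (by simp)
    have hNa : ({v, b, d} : Finset V) = G.neighborFinset a := by
      apply Finset.eq_of_subset_of_card_le
      · intro t ht
        simp only [Finset.mem_insert, Finset.mem_singleton] at ht
        rw [SimpleGraph.mem_neighborFinset]
        rcases ht with rfl | rfl | rfl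
        · exact h.symm
        · exact hab
        · exact had
      · rw [Finset.card_eq_three.2 ⟨v, b, d, hb.ne, hd2.ne, hbd.ne, rfl⟩, hd']
    obtain ⟨c, hc⟩ := hdel v a h
    apply hbad
    refine extend1 hc (fun x hx => (hN' x).1 hx) hab.ne had.ne ?_
    rintro y ⟨h1, h2, h3⟩
    have hy : y ∈ ({v, b, d} : Finset V) := by rw [hNa]; simpa using h1
    simp only [Finset.mem_insert, Finset.mem_singleton] at hy
    have db : (del G v).Adj b a := ⟨hab.symm, hb.ne', h2⟩
    have dd : (del G v).Adj d a := ⟨had.symm, hd2.ne', h2⟩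
    have bd : (del G v).Adj b d := ⟨hbd, hb.ne', hd2.ne'⟩
    rcases hy with rfl | rfl | rfl
    · exact absurd rfl h3
    · rw [hc.1 a y]; exact hc.2.1 y d a bd db had.ne'
    · rw [hc.1 b y, hc.1 a y]; exact hc.2.1 y b a bd.symm dd hab.ne'
  have hcard : S.card = 7 := by
    by_contra h7
    rcases Nat.lt_or_ge S.card 7 with h | h
    · exact hbad (good_six S hS (by omega))
    · exact eight_case S hS (by omega) hsum hdeg hind htri
  by_cases hex : ∃ v ∈ S, (G.neighborFinset v).card = 3
  · obtain ⟨v, hv, hd⟩ := hex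
    have hadj : ∀ a, G.Adj v a → 6 ≤ (G.neighborFinset a).card := by
      intro a ha
      obtain ⟨b, c, hN, hab, hac, hbc⟩ := h3' v a ha hd
      have hsub : S.erase a ⊆ G.neighborFinset a := by
        intro d hdS
        obtain ⟨hda, hdS⟩ := Finset.mem_erase.1 hdS
        rw [SimpleGraph.mem_neighborFinset]
        by_contra hnad
        refine hbad (good_seven S hS hcard hN hab.ne hac.ne hbc.ne hdS ?_ hda ?_ ?_ hnad)
        · rintro rfl; exact hnad ha.symm
        · rintro rfl; exact hnad hab
        · rintro rfl; exact hnad hac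
      have := Finset.card_le_card hsub
      rw [Finset.card_erase_of_mem (hS _ _ ha.symm), hcard] at this
      exact this
    have s1 := Finset.sum_sdiff (f := fun x => (G.neighborFinset x).card) (hNS v)
    have s2 := Finset.card_nsmul_le_sum (G.neighborFinset v) (fun x => (G.neighborFinset x).card) 6
      (fun x hx => hadj x ((G.mem_neighborFinset _ _).1 hx))
    have s3 := Finset.card_nsmul_le_sum (S \ G.neighborFinset v)
      (fun x => (G.neighborFinset x).card) 3 (fun x hx => hdeg x (Finset.mem_sdiff.1 hx).1)
    have s4 := Finset.card_sdiff_add_card_eq_card (hNS v)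
    simp only [smul_eq_mul] at s2 s3
    omega
  · push Not at hex
    have h4 : ∀ x ∈ S, 4 ≤ (G.neighborFinset x).card := by
      intro x hx
      have := hdeg x hx
      have := hex x hx
      omega
    have h4' : ∀ x ∈ S, (G.neighborFinset x).card = 4 := by
      intro x hx
      have s1 := Finset.add_sum_erase S (fun x => (G.neighborFinset x).card) hx
      have s2 := Finset.card_nsmul_le_sum (S.erase x) (fun x => (G.neighborFinset x).card) 4
        (fun y hy => h4 y (Finset.mem_of_mem_erase hy))
      rw [Finset.card_erase_of_mem hx, hcard] at s2
      simp only [smul_eq_mul] at s2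
      have := h4 x hx
      omega
    obtain ⟨v, hv⟩ : S.Nonempty := Finset.card_pos.1 (by omega)
    obtain ⟨x, y, z, a1, a2, a3, a4, a5, a6⟩ := hk4 v hv
    exact regular_case S hS hcard h4' v x y z a1 a2 a3 a4 a5 a6

end helpers

/-- The 15-edge graph. -/
def G15 : SimpleGraph (Fin 7) := SimpleGraph.fromRel (fun v w : Fin 7 => v.val < 3 ∨ w.val < 3)

lemma G15_adj (v w : Fin 7) : G15.Adj v w ↔ v ≠ w ∧ (v.val < 3 ∨ w.val < 3) := by
  simp only [G15, SimpleGraph.fromRel_adj]; tauto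

instance : DecidableRel G15.Adj := fun v w => decidable_of_iff _ (G15_adj v w).symm

lemma G15_card : G15.edgeSet.ncard = 15 := by
  rw [← SimpleGraph.coe_edgeFinset, Set.ncard_coe_finset]
  decide +kernel

lemma disj_pairs : ∀ i j k l : Fin 4, i ≠ j → k ≠ l → i ≠ k → i ≠ l → j ≠ k → j ≠ l →
    (s(i, j) = s(0, 1) ∧ s(k, l) = s(2, 3)) ∨ (s(i, j) = s(2, 3) ∧ s(k, l) = s(0, 1)) ∨
    (s(i, j) = s(0, 2) ∧ s(k, l) = s(1, 3)) ∨ (s(i, j) = s(1, 3) ∧ s(k, l) = s(0, 2)) ∨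
    (s(i, j) = s(1, 2) ∧ s(k, l) = s(0, 3)) ∨ (s(i, j) = s(0, 3) ∧ s(k, l) = s(1, 2)) := by
  decide +kernel

lemma G15_copy (c : Sym2 (Fin 7) → ℕ) (hc : IsProperEdgeColoring G15 c)
    (hn : ¬ HasRainbowCopy G15 (⊤ : SimpleGraph (Fin 4)) c) (y : Fin 7) (hy : 3 ≤ y.val) :
    c s(0, y) = c s(1, 2) ∨ c s(1, y) = c s(0, 2) ∨ c s(2, y) = c s(0, 1) := by
  by_contra hcon
  push Not at hcon
  obtain ⟨n1, n2, n3⟩ := hcon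
  apply hn
  let g : Fin 4 → Fin 7 := ![0, 1, 2, y]
  have hadj : ∀ i j : Fin 4, i ≠ j → G15.Adj (g i) (g j) := by
    have : ∀ y : Fin 7, 3 ≤ y.val → ∀ i j : Fin 4, i ≠ j →
        G15.Adj ((![0, 1, 2, y] : Fin 4 → Fin 7) i) ((![0, 1, 2, y] : Fin 4 → Fin 7) j) := by
      decide +kernel
    exact this y hy
  have hinj : Function.Injective g := by
    intro i j h
    by_contra hne
    exact (hadj i j hne).ne h
  refine ⟨⟨g, fun {i j} h => hadj i j (by simpa using h)⟩, hinj, ?_⟩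
  intro e₁ h1 e₂ h2 h
  by_contra hne
  induction e₁ using Sym2.ind with | _ i j =>
  induction e₂ using Sym2.ind with | _ k l =>
  have hij : i ≠ j := by simpa using h1
  have hkl : k ≠ l := by simpa using h2
  have h' : c (Sym2.map g s(i, j)) = c (Sym2.map g s(k, l)) := h
  have share : ¬ ∃ t, t ∈ s(i, j) ∧ t ∈ s(k, l) := by
    rintro ⟨t, t1, t2⟩
    refine hc (Sym2.map g s(i, j)) ?_ (Sym2.map g s(k, l)) ?_ ?_ ⟨g t, ?_, ?_⟩ h'
    · simpa using hadj i j hij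
    · simpa using hadj k l hkl
    · exact fun e => hne (Sym2.map.injective hinj e)
    · exact Sym2.mem_map.2 ⟨t, t1, rfl⟩
    · exact Sym2.mem_map.2 ⟨t, t2, rfl⟩
  have q1 : i ≠ k := by rintro rfl; exact share ⟨i, by simp, by simp⟩
  have q2 : i ≠ l := by rintro rfl; exact share ⟨i, by simp, by simp⟩
  have q3 : j ≠ k := by rintro rfl; exact share ⟨j, by simp, by simp⟩
  have q4 : j ≠ l := by rintro rfl; exact share ⟨j, by simp, by simp⟩
  rcases disj_pairs i j k l hij hkl q1 q2 q3 q4 with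
    ⟨e, e'⟩ | ⟨e, e'⟩ | ⟨e, e'⟩ | ⟨e, e'⟩ | ⟨e, e'⟩ | ⟨e, e'⟩ <;> rw [e, e'] at h' <;>
    simp [g] at h'
  · exact n3 h'.symm
  · exact n3 h'
  · exact n2 h'.symm
  · exact n2 h'
  · exact n1 h'.symm
  · exact n1 h'

lemma G15_arrows : ArrowsTo G15 (⊤ : SimpleGraph (Fin 4)) := by
  intro c hc
  by_contra hn
  have prop : ∀ x y z : Fin 7, G15.Adj x y → G15.Adj x z → y ≠ z → c s(x, y) ≠ c s(x, z) := by
    intro x y z h1 h2 h3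
    refine hc _ (by simpa using h1) _ (by simpa using h2) ?_ ⟨x, by simp, by simp⟩
    intro h
    exact h3 (Sym2.congr_right.1 h)
  have key : ∀ y z : Fin 7, 3 ≤ y.val → 3 ≤ z.val → y ≠ z → ∀ x : Fin 7, x.val < 3 → ∀ k,
      c s(x, y) = k → c s(x, z) = k → False := by
    intro y z hy hz hne x hx k h1 h2
    refine prop x y z ((G15_adj _ _).2 ⟨?_, Or.inl hx⟩) ((G15_adj _ _).2 ⟨?_, Or.inl hx⟩) hne
      (h1.trans h2.symm)
    · rintro rfl; omega
    · rintro rfl; omega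
  have k34 := key 3 4 (by decide) (by decide) (by decide)
  have k35 := key 3 5 (by decide) (by decide) (by decide)
  have k36 := key 3 6 (by decide) (by decide) (by decide)
  have k45 := key 4 5 (by decide) (by decide) (by decide)
  have k46 := key 4 6 (by decide) (by decide) (by decide)
  have k56 := key 5 6 (by decide) (by decide) (by decide)
  have z0 : (0 : Fin 7).val < 3 := by decide
  have z1 : (1 : Fin 7).val < 3 := by decide
  have z2 : (2 : Fin 7).val < 3 := by decide
  rcases G15_copy c hc hn 3 (by decide) with a | a | a <;>
  rcases G15_copy c hc hn 4 (by decide) with b | b | b <;>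
  rcases G15_copy c hc hn 5 (by decide) with d | d | d <;>
  rcases G15_copy c hc hn 6 (by decide) with e | e | e <;>
  first
  | exact k34 _ (by assumption) _ a b
  | exact k35 _ (by assumption) _ a d
  | exact k36 _ (by assumption) _ a e
  | exact k45 _ (by assumption) _ b d
  | exact k46 _ (by assumption) _ b e
  | exact k56 _ (by assumption) _ d e

theorem stmt_3 :
    ARs (⊤ : SimpleGraph (Fin 4)) = 15 ∧
    (SimpleGraph.fromRel (fun v w : Fin 7 => v.val < 3 ∨ w.val < 3)).edgeSet.ncard = 15 ∧
    ArrowsTo (SimpleGraph.fromRel (fun v w : Fin 7 => v.val < 3 ∨ w.val < 3))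
      (⊤ : SimpleGraph (Fin 4)) ∧
    (∀ (V : Type) [Fintype V] (G : SimpleGraph V), G.edgeSet.ncard ≤ 14 →
      ¬ ArrowsTo G (⊤ : SimpleGraph (Fin 4))) := by
  have low : ∀ (V : Type) [Fintype V] (G : SimpleGraph V), G.edgeSet.ncard ≤ 14 →
      ¬ ArrowsTo G (⊤ : SimpleGraph (Fin 4)) :=
    fun V _ G h => not_arrows_of_good (all_good _ G rfl h)
  refine ⟨?_, G15_card, G15_arrows, low⟩
  apply le_antisymm
  · exact Nat.sInf_le ⟨7, G15, G15_arrows, G15_card⟩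
  · refine le_csInf ⟨15, 7, G15, G15_arrows, G15_card⟩ ?_
    rintro m ⟨n, G, hG, rfl⟩
    by_contra h
    exact low _ G (by omega) hG
end

section
/- There exist positive constants c₁ and c₂ such that for every n ≥ 2, c₁·n⁵/log n ≤ AR_s(K_n) ≤ c₂·n⁶/(log n)², where K_n is the complete graph on n vertices. -/
open SimpleGraph

section Helpers

open Finset

lemma exp_neg_le_aux {x : ℝ} (h0 : 0 ≤ x) (h1 : x ≤ 1) : Real.exp (-x) ≤ 1 - x / 2 := by
  have h := Real.add_one_le_exp x
  have h2 : Real.exp (-x) * Real.exp x = 1 := by rw [← Real.exp_add]; simp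
  have h3 := Real.exp_pos (-x)
  nlinarith [mul_le_mul_of_nonneg_left h h3.le, mul_nonneg h0 (sub_nonneg.2 h1)]

lemma card_contain_le {V : Type*} [DecidableEq V] (F t : Finset V) (ht : t.Nonempty) :
    2 * #{S ∈ F.powerset | t ⊆ S} ≤ 2 ^ #F := by
  obtain ⟨a, ha⟩ := ht
  have h1 : #{S ∈ F.powerset | t ⊆ S} ≤ #{S ∈ F.powerset | ¬ t ⊆ S} := by
    apply Finset.card_le_card_of_injOn (fun S => S.erase a)
    · intro S hS
      simp only [coe_filter, Finset.mem_powerset, Set.mem_ofPred_eq] at hS ⊢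
      exact ⟨(erase_subset _ _).trans hS.1, fun h => by simpa using h ha⟩
    · intro S hS S' hS' h
      simp only [coe_filter, Finset.mem_powerset, Set.mem_ofPred_eq] at hS hS' h
      rw [← insert_erase (hS.2 ha), h, insert_erase (hS'.2 ha)]
  have h2 := Finset.card_filter_add_card_filter_not (s := F.powerset) (fun S => t ⊆ S)
  rw [card_powerset] at h2
  omega

lemma harris_iter {V ι : Type*} [DecidableEq V] [DecidableEq ι] (F : Finset V) (κ : Finset ι)
    (t : ι → Finset V) (ht : ∀ i ∈ κ, (t i).Nonempty) :
    (2 : ℝ) ^ #F * Real.exp (-(2 * ∑ i ∈ κ, (#{S ∈ F.powerset | t i ⊆ S} : ℝ) / 2 ^ #F)) ≤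
      #{S ∈ F.powerset | ∀ i ∈ κ, ¬ t i ⊆ S} := by
  induction κ using Finset.induction_on with
  | empty => simp
  | insert i κ hi ih =>
    have ih := ih (fun j hj => ht j (mem_insert_of_mem hj))
    have hA : IsLowerSet ((F.powerset.filter (fun S => ¬ t i ⊆ S) : Finset (Finset V)) : Set (Finset V)) := by
      intro S S' hSS hS
      simp only [coe_filter, Finset.mem_powerset, Set.mem_ofPred_eq] at hS ⊢
      exact ⟨hSS.trans hS.1, fun h => hS.2 (h.trans hSS)⟩
    have hB : IsLowerSet ((F.powerset.filter (fun S => ∀ j ∈ κ, ¬ t j ⊆ S) : Finset (Finset V)) : Set (Finset V)) := by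
      intro S S' hSS hS
      simp only [coe_filter, Finset.mem_powerset, Set.mem_ofPred_eq] at hS ⊢
      exact ⟨hSS.trans hS.1, fun j hj h => hS.2 j hj (h.trans hSS)⟩
    have hH := hA.le_card_inter_finset' hB (s := F) (by intro S hS; simpa using (mem_filter.1 hS).1)
      (by intro S hS; simpa using (mem_filter.1 hS).1)
    have hI : (F.powerset.filter (fun S => ¬ t i ⊆ S)) ∩ (F.powerset.filter (fun S => ∀ j ∈ κ, ¬ t j ⊆ S))
        = F.powerset.filter (fun S => ∀ j ∈ insert i κ, ¬ t j ⊆ S) := by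
      ext S; simp; tauto
    rw [hI] at hH
    have h1 := card_contain_le F (t i) (ht i (mem_insert_self _ _))
    have h2 := Finset.card_filter_add_card_filter_not (s := F.powerset) (fun S => t i ⊆ S)
    rw [card_powerset] at h2
    rw [sum_insert hi]
    set X := #{S ∈ F.powerset | t i ⊆ S}
    set Y := #{S ∈ F.powerset | ¬ t i ⊆ S}
    set B := #{S ∈ F.powerset | ∀ j ∈ κ, ¬ t j ⊆ S}
    set Z := #{S ∈ F.powerset | ∀ j ∈ insert i κ, ¬ t j ⊆ S}
    have hp : (0 : ℝ) < 2 ^ #F := by positivity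
    have h1' : (2 : ℝ) * X ≤ 2 ^ #F := by exact_mod_cast h1
    have h2' : (X : ℝ) + Y = 2 ^ #F := by exact_mod_cast h2
    have hH' : (Y : ℝ) * B ≤ 2 ^ #F * Z := by exact_mod_cast hH
    have he := exp_neg_le_aux (x := 2 * ((X : ℝ) / 2 ^ #F)) (by positivity)
      (by rw [← mul_div_assoc]; exact (div_le_one hp).2 h1')
    have he' : Real.exp (-(2 * ((X : ℝ) / 2 ^ #F))) ≤ Y / 2 ^ #F := by
      refine he.trans (le_of_eq ?_)
      field_simp
      linarith
    rw [mul_add, neg_add, Real.exp_add]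
    set E := Real.exp (-(2 * ∑ i ∈ κ, (#{S ∈ F.powerset | t i ⊆ S} : ℝ) / 2 ^ #F))
    have hE : 0 < E := Real.exp_pos _
    calc (2 : ℝ) ^ #F * (Real.exp (-(2 * ((X : ℝ) / 2 ^ #F))) * E)
        = Real.exp (-(2 * ((X : ℝ) / 2 ^ #F))) * (2 ^ #F * E) := by ring
      _ ≤ (Y / 2 ^ #F) * B := mul_le_mul he' ih (by positivity) (by positivity)
      _ = (Y * B) / 2 ^ #F := by ring
      _ ≤ Z := by rw [div_le_iff₀ hp]; linarith

lemma fiber_bound {V ι : Type*} [DecidableEq V] [DecidableEq ι] (F : Finset V) (κ : Finset ι)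
    (t : ι → Finset V) (ht : ∀ i ∈ κ, (t i).Nonempty) (μ : ℝ) :
    Real.exp (-μ) * ∑ S ∈ F.powerset, (1 + μ - 2 * (#{i ∈ κ | t i ⊆ S} : ℝ)) ≤
      #{S ∈ F.powerset | ∀ i ∈ κ, ¬ t i ⊆ S} := by
  refine le_trans ?_ (harris_iter F κ t ht)
  have hp : (0 : ℝ) < 2 ^ #F := by positivity
  have hsw : ∑ S ∈ F.powerset, (#{i ∈ κ | t i ⊆ S} : ℝ) = ∑ i ∈ κ, (#{S ∈ F.powerset | t i ⊆ S} : ℝ) := by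
    simp only [card_filter, Nat.cast_sum]
    rw [sum_comm]
  rw [sum_sub_distrib, ← mul_sum, hsw, ← sum_div]
  set Q := ∑ i ∈ κ, (#{S ∈ F.powerset | t i ⊆ S} : ℝ)
  simp only [sum_const, card_powerset, nsmul_eq_mul, Nat.cast_pow, Nat.cast_ofNat]
  have h := Real.add_one_le_exp (μ - 2 * (Q / 2 ^ #F))
  have h2 : Real.exp (-(2 * (Q / 2 ^ #F))) = Real.exp (-μ) * Real.exp (μ - 2 * (Q / 2 ^ #F)) := by
    rw [← Real.exp_add]; congr 1; ring
  rw [h2]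
  have h3 : (2 : ℝ) ^ #F * (1 + μ) - 2 * Q = 2 ^ #F * (μ - 2 * (Q / 2 ^ #F) + 1) := by
    field_simp; ring
  rw [h3]
  have := Real.exp_pos (-μ)
  calc _ = 2 ^ #F * (Real.exp (-μ) * (μ - 2 * (Q / 2 ^ #F) + 1)) := by ring
    _ ≤ _ := by gcongr

lemma local_bound {V ι : Type*} [DecidableEq V] [DecidableEq ι] (U L : Finset V) (hL : L ⊆ U)
    (P : Finset V → Prop) [DecidablePred P]
    (hdown : ∀ A B, A ⊆ B → P B → P A)
    (hP : ∀ J S, J ⊆ U \ L → S ⊆ L → P J → (∀ a ∈ S, P (insert a J)) → P (J ∪ S))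
    (κ : Finset ι) (T : ι → Finset V) (hT : ∀ i ∈ κ, (T i ∩ L).Nonempty) (μ : ℝ) :
    Real.exp (-μ) * ∑ W ∈ U.powerset with P W, (1 + μ - 2 * (#{i ∈ κ | T i ⊆ W} : ℝ)) ≤
      #{W ∈ U.powerset | P W ∧ ∀ i ∈ κ, ¬ T i ⊆ W} := by
  have hmap : ∀ W ∈ U.powerset.filter P, W \ L ∈ (U \ L).powerset := by
    intro W hW
    rw [Finset.mem_powerset]
    exact sdiff_subset_sdiff (Finset.mem_powerset.1 (mem_filter.1 hW).1) subset_rfl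
  have hmap' : ∀ W ∈ U.powerset.filter (fun W => P W ∧ ∀ i ∈ κ, ¬ T i ⊆ W), W \ L ∈ (U \ L).powerset := by
    intro W hW
    rw [Finset.mem_powerset]
    exact sdiff_subset_sdiff (Finset.mem_powerset.1 (mem_filter.1 hW).1) subset_rfl
  rw [← sum_fiberwise_of_maps_to hmap, card_eq_sum_card_fiberwise hmap', mul_sum, Nat.cast_sum]
  refine sum_le_sum fun J hJ => ?_
  rw [Finset.mem_powerset] at hJ
  have hJL : Disjoint J L := by
    rw [Finset.disjoint_left]; intro a ha; exact (mem_sdiff.1 (hJ ha)).2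
  by_cases hPJ : P J
  swap
  · have : (U.powerset.filter P).filter (fun W => W \ L = J) = ∅ := by
      rw [filter_eq_empty_iff]
      intro W hW hWJ
      exact hPJ (hdown _ W (hWJ ▸ sdiff_subset) (mem_filter.1 hW).2)
    rw [this]; simp
  set F := L.filter (fun a => P (insert a J)) with hF
  set κ' := κ.filter (fun i => T i \ L ⊆ J) with hκ'
  have hFL : F ⊆ L := filter_subset _ _
  have hinj : Set.InjOn (fun S => J ∪ S) (F.powerset : Set (Finset V)) := by
    intro S hS S' hS' h
    have hS1 : S ⊆ L := (Finset.mem_powerset.1 hS).trans hFL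
    have hS2 : S' ⊆ L := (Finset.mem_powerset.1 hS').trans hFL
    simp only at h
    have e1 : (J ∪ S) ∩ L = S := by
      rw [union_inter_distrib_right, disjoint_iff_inter_eq_empty.1 hJL, empty_union, inter_eq_left.2 hS1]
    have e2 : (J ∪ S') ∩ L = S' := by
      rw [union_inter_distrib_right, disjoint_iff_inter_eq_empty.1 hJL, empty_union, inter_eq_left.2 hS2]
    rw [← e1, h, e2]
  have hsub : ∀ S ∈ F.powerset, ∀ i, T i ⊆ J ∪ S ↔ (T i \ L ⊆ J ∧ T i ∩ L ⊆ S) := by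
    intro S hS i
    have hS1 : S ⊆ L := (Finset.mem_powerset.1 hS).trans hFL
    constructor
    · intro h
      constructor
      · intro a ha
        rw [mem_sdiff] at ha
        rcases mem_union.1 (h ha.1) with h' | h'
        · exact h'
        · exact absurd (hS1 h') ha.2
      · intro a ha
        rw [mem_inter] at ha
        rcases mem_union.1 (h ha.1) with h' | h'
        · exact absurd ha.2 (Finset.disjoint_left.1 hJL h')
        · exact h'
    · rintro ⟨h1, h2⟩ a ha
      by_cases haL : a ∈ L
      · exact mem_union_right _ (h2 (mem_inter.2 ⟨ha, haL⟩))
      · exact mem_union_left _ (h1 (mem_sdiff.2 ⟨ha, haL⟩))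
  have him : (U.powerset.filter P).filter (fun W => W \ L = J) = F.powerset.image (fun S => J ∪ S) := by
    ext W
    simp only [mem_filter, Finset.mem_powerset, mem_image]
    constructor
    · rintro ⟨⟨hWU, hPW⟩, hWJ⟩
      refine ⟨W ∩ L, ?_, ?_⟩
      · intro a ha
        rw [mem_inter] at ha
        refine mem_filter.2 ⟨ha.2, hdown _ W ?_ hPW⟩
        rw [insert_subset_iff]
        exact ⟨ha.1, hWJ ▸ sdiff_subset⟩
      · rw [← hWJ]; exact sdiff_union_inter W L
    · rintro ⟨S, hS, rfl⟩
      have hS1 : S ⊆ L := hS.trans hFL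
      refine ⟨⟨union_subset (hJ.trans sdiff_subset) (hS1.trans hL), ?_⟩, ?_⟩
      · exact hP J S hJ hS1 hPJ (fun a ha => (mem_filter.1 (hS ha)).2)
      · rw [union_sdiff_distrib, sdiff_eq_self_of_disjoint hJL, sdiff_eq_empty_iff_subset.2 hS1, union_empty]
  have him' : (U.powerset.filter (fun W => P W ∧ ∀ i ∈ κ, ¬ T i ⊆ W)).filter (fun W => W \ L = J) =
      (F.powerset.filter (fun S => ∀ i ∈ κ', ¬ T i ∩ L ⊆ S)).image (fun S => J ∪ S) := by
    have : (U.powerset.filter (fun W => P W ∧ ∀ i ∈ κ, ¬ T i ⊆ W)).filter (fun W => W \ L = J) =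
        ((U.powerset.filter P).filter (fun W => W \ L = J)).filter (fun W => ∀ i ∈ κ, ¬ T i ⊆ W) := by
      ext W; simp only [mem_filter]; tauto
    rw [this, him, filter_image]
    congr 1
    refine filter_congr fun S hS => ?_
    simp only [hκ', mem_filter, hsub S hS]
    exact ⟨fun h i hi h' => h i hi.1 ⟨hi.2, h'⟩, fun h i hi h' => h i ⟨hi, h'.1⟩ h'.2⟩
  rw [him, him', sum_image hinj, card_image_of_injOn (hinj.mono (by exact_mod_cast filter_subset _ _))]
  refine le_trans (le_of_eq ?_) (fiber_bound F κ' (fun i => T i ∩ L)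
    (fun i hi => hT i (mem_filter.1 hi).1) μ)
  congr 1
  refine sum_congr rfl fun S hS => ?_
  rw [hκ', filter_filter]
  simp only [hsub S hS]

lemma descFactorial_mul_pow_le (m N k : ℕ) (h : m ≤ N) :
    m.descFactorial k * N ^ k ≤ N.descFactorial k * m ^ k := by
  induction k with
  | zero => simp
  | succ k ih =>
    rw [Nat.descFactorial_succ, Nat.descFactorial_succ, pow_succ, pow_succ]
    have h1 : (m - k) * N ≤ (N - k) * m := by
      rw [Nat.sub_mul, Nat.sub_mul, mul_comm N m]
      have : k * m ≤ k * N := Nat.mul_le_mul_left _ h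
      omega
    calc (m - k) * m.descFactorial k * (N ^ k * N)
        = ((m - k) * N) * (m.descFactorial k * N ^ k) := by ring
      _ ≤ ((N - k) * m) * (N.descFactorial k * m ^ k) := Nat.mul_le_mul h1 ih
      _ = _ := by ring

lemma count_supersets {V : Type*} [Fintype V] [DecidableEq V] (S : Finset V) (m : ℕ) :
    #{U ∈ powersetCard m (univ : Finset V) | S ⊆ U} * (Fintype.card V) ^ #S ≤
      (Fintype.card V).choose m * m ^ #S := by
  set N := Fintype.card V with hN
  set k := #S with hk
  have hkN : k ≤ N := card_le_univ S
  by_cases hm : m ≤ N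
  swap
  · rw [powersetCard_eq_empty.2 (by rw [card_univ]; omega)]; simp
  by_cases hkm : k ≤ m
  swap
  · have : (powersetCard m (univ : Finset V)).filter (fun U => S ⊆ U) = ∅ := by
      rw [filter_eq_empty_iff]
      intro U hU hSU
      have := card_le_card hSU
      rw [(mem_powersetCard.1 hU).2] at this
      omega
    rw [this]; simp
  have h1 : #{U ∈ powersetCard m (univ : Finset V) | S ⊆ U} ≤ (N - k).choose (m - k) := by
    have : #(powersetCard (m - k) (univ \ S)) = (N - k).choose (m - k) := by
      rw [card_powersetCard, card_sdiff_of_subset (subset_univ S), card_univ]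
    rw [← this]
    apply card_le_card_of_injOn (fun U => U \ S)
    · intro U hU
      simp only [coe_filter, mem_powersetCard, Set.mem_ofPred_eq] at hU
      simp only [mem_coe, mem_powersetCard]
      refine ⟨sdiff_subset_sdiff (subset_univ _) subset_rfl, ?_⟩
      rw [card_sdiff_of_subset hU.2, hU.1.2]
    · intro U hU U' hU' h
      simp only [coe_filter, mem_powersetCard, Set.mem_ofPred_eq] at hU hU' h
      rw [← sdiff_union_of_subset hU.2, h, sdiff_union_of_subset hU'.2]
  have h2 := Nat.choose_mul (n := N) hkm
  have h3 := descFactorial_mul_pow_le m N k hm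
  rw [Nat.descFactorial_eq_factorial_mul_choose, Nat.descFactorial_eq_factorial_mul_choose] at h3
  have h4 : m.choose k * N ^ k ≤ N.choose k * m ^ k := by
    have hf := Nat.factorial_pos k
    rw [mul_assoc, mul_assoc] at h3
    exact Nat.le_of_mul_le_mul_left h3 hf
  have h5 : 0 < N.choose k := Nat.choose_pos hkN
  refine (Nat.mul_le_mul_right _ h1).trans ?_
  refine Nat.le_of_mul_le_mul_left ?_ h5
  calc N.choose k * ((N - k).choose (m - k) * N ^ k)
      = (N.choose k * (N - k).choose (m - k)) * N ^ k := by ring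
    _ = N.choose m * (m.choose k * N ^ k) := by rw [← h2]; ring
    _ ≤ N.choose m * (N.choose k * m ^ k) := Nat.mul_le_mul_left _ h4
    _ = _ := by ring

open Classical in
lemma count_cfg {V Ω : Type*} [Fintype V] [DecidableEq V] [Fintype Ω] [Nonempty V]
    (F : Ω → V) (S : Ω → Finset V) (k m : ℕ) :
    (#{p ∈ powersetCard m (univ : Finset V) ×ˢ (univ : Finset V) |
      ∃ ω, #(S ω) = k ∧ S ω ⊆ p.1 ∧ F ω = p.2} : ℝ) ≤
      Fintype.card Ω * ((Fintype.card V).choose m * ((m : ℝ) / Fintype.card V) ^ k) := by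
  have hN : (0 : ℝ) < Fintype.card V := by exact_mod_cast Fintype.card_pos
  have hsub : (powersetCard m (univ : Finset V) ×ˢ (univ : Finset V)).filter (fun p =>
      ∃ ω, #(S ω) = k ∧ S ω ⊆ p.1 ∧ F ω = p.2) ⊆
      (univ.filter (fun ω => #(S ω) = k)).biUnion (fun ω =>
        ((powersetCard m (univ : Finset V)).filter (fun U => S ω ⊆ U)).image (fun U => (U, F ω))) := by
    rintro ⟨U, v⟩ hp
    simp only [mem_filter, mem_product, mem_univ, and_true] at hp
    obtain ⟨hU, ω, h1, h2, h3⟩ := hp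
    simp only [mem_biUnion, mem_filter, mem_univ, true_and, mem_image]
    exact ⟨ω, h1, U, ⟨hU, h2⟩, by simp [h3]⟩
  have h1 := (card_le_card hsub).trans card_biUnion_le
  have h2 : ∀ ω ∈ univ.filter (fun ω => #(S ω) = k),
      (#(((powersetCard m (univ : Finset V)).filter (fun U => S ω ⊆ U)).image (fun U => (U, F ω))) : ℝ)
      ≤ (Fintype.card V).choose m * ((m : ℝ) / Fintype.card V) ^ k := by
    intro ω hω
    have hω := (mem_filter.1 hω).2
    have h3 := count_supersets (S ω) m
    rw [hω] at h3
    have h3' : (#((powersetCard m (univ : Finset V)).filter (fun U => S ω ⊆ U)) : ℝ) * (Fintype.card V : ℝ) ^ k ≤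
      (Fintype.card V).choose m * (m : ℝ) ^ k := by exact_mod_cast h3
    calc (#(((powersetCard m (univ : Finset V)).filter (fun U => S ω ⊆ U)).image (fun U => (U, F ω))) : ℝ)
        ≤ #((powersetCard m (univ : Finset V)).filter (fun U => S ω ⊆ U)) := by
          exact_mod_cast card_image_le
      _ ≤ _ := by
          rw [div_pow, ← mul_div_assoc, le_div_iff₀ (by positivity)]
          exact h3'
  calc _ ≤ ∑ ω ∈ univ.filter (fun ω => #(S ω) = k),
      (#(((powersetCard m (univ : Finset V)).filter (fun U => S ω ⊆ U)).image (fun U => (U, F ω))) : ℝ) := by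
        exact_mod_cast h1
    _ ≤ ∑ ω ∈ univ.filter (fun ω => #(S ω) = k), ((Fintype.card V).choose m * ((m : ℝ) / Fintype.card V) ^ k) :=
        sum_le_sum h2
    _ ≤ _ := by
        rw [sum_const, nsmul_eq_mul]
        gcongr
        exact card_le_univ _

lemma count_cfg' {V Ω : Type*} [Fintype V] [DecidableEq V] [Fintype Ω] [Nonempty V]
    (F : Ω → V) (S : Ω → Finset V) (k m : ℕ) :
    ∃ A : Finset (Finset V × V), (#A : ℝ) ≤
      Fintype.card Ω * ((Fintype.card V).choose m * ((m : ℝ) / Fintype.card V) ^ k) ∧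
      ∀ p ∈ powersetCard m (univ : Finset V) ×ˢ (univ : Finset V), ∀ ω,
        #(S ω) = k → S ω ⊆ p.1 → F ω = p.2 → p ∈ A := by
  classical
  refine ⟨_, count_cfg F S k m, fun p hp ω h1 h2 h3 => ?_⟩
  exact mem_filter.2 ⟨hp, ω, h1, h2, h3⟩

/-- Two disjoint edges `ab`, `xy` with the same color. -/
def QC {V : Type*} (c : Sym2 V → ℕ) (a b x y : V) : Prop :=
  a ≠ b ∧ a ≠ x ∧ a ≠ y ∧ b ≠ x ∧ b ≠ y ∧ x ≠ y ∧ c s(a, b) = c s(x, y)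

/-- The set `W` spans no two disjoint edges of the same color. -/
def RbW {V : Type*} (c : Sym2 V → ℕ) (W : Finset V) : Prop :=
  ∀ a ∈ W, ∀ b ∈ W, ∀ x ∈ W, ∀ y ∈ W, ¬ QC c a b x y

open Classical in
/-- The vertex `w` such that `zw` has the color of `xy`. -/
noncomputable def DC {V : Type*} (c : Sym2 V → ℕ) (x y z : V) : V :=
  if h : ∃ w, z ≠ w ∧ c s(x, y) = c s(z, w) then h.choose else z

/-- Properness of an edge coloring of a complete graph. -/
def PropK {V : Type*} (c : Sym2 V → ℕ) : Prop :=
  ∀ z w w', z ≠ w → z ≠ w' → c s(z, w) = c s(z, w') → w = w'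

lemma DC_eq {V : Type*} {c : Sym2 V → ℕ} (hc : PropK c) {x y z w : V} (h : z ≠ w)
    (h' : c s(x, y) = c s(z, w)) : DC c x y z = w := by
  have hex : ∃ w, z ≠ w ∧ c s(x, y) = c s(z, w) := ⟨w, h, h'⟩
  unfold DC
  rw [dif_pos hex]
  exact hc z _ _ hex.choose_spec.1 h (hex.choose_spec.2.symm.trans h')

lemma QC.swap {V : Type*} {c : Sym2 V → ℕ} {a b x y : V} (h : QC c a b x y) : QC c x y a b := by
  obtain ⟨h1, h2, h3, h4, h5, h6, h7⟩ := h
  exact ⟨h6, h2.symm, h4.symm, h3.symm, h5.symm, h1, h7.symm⟩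

lemma QC.left {V : Type*} {c : Sym2 V → ℕ} {a b x y : V} (h : QC c a b x y) : QC c b a x y := by
  obtain ⟨h1, h2, h3, h4, h5, h6, h7⟩ := h
  exact ⟨h1.symm, h4, h5, h2, h3, h6, by rw [Sym2.eq_swap, h7]⟩

lemma QC.right {V : Type*} {c : Sym2 V → ℕ} {a b x y : V} (h : QC c a b x y) : QC c a b y x :=
  h.swap.left.swap

/-- Fourth vertex of a configuration. -/
noncomputable def YC {V : Type*} (c : Sym2 V → ℕ) (φ : Bool) (a b x : V) : V :=
  if φ then DC c a b x else DC c a x b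

/-- the 4-tuple of a configuration -/
noncomputable def SC {V : Type*} (c : Sym2 V → ℕ) (φ : Bool) (a b x : V) : Fin 4 → V :=
  ![a, b, x, YC c φ a b x]

open Classical in
/-- The link vertices of `v` in `U`. -/
noncomputable def LC {V : Type*} (c : Sym2 V → ℕ) (U : Finset V) (v : V) : Finset V :=
  U.filter (fun a => ∃ e ∈ U, ∃ f ∈ U, QC c v a e f)

lemma mem_LC {V : Type*} {c : Sym2 V → ℕ} {U : Finset V} {v a : V} :
    a ∈ LC c U v ↔ a ∈ U ∧ ∃ e ∈ U, ∃ f ∈ U, QC c v a e f := by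
  simp only [LC, mem_filter]

/-- Good pairs. -/
def GoodC {V : Type*} (c : Sym2 V → ℕ) (U : Finset V) (v : V) : Prop :=
  ∀ a ∈ LC c U v, ∀ b ∈ LC c U v, ∀ x ∈ U, ∀ y ∈ U, ¬ QC c a b x y ∧ ¬ QC c a x b y

lemma bad_cases {V : Type*} [DecidableEq V] {c : Sym2 V → ℕ} (hc : PropK c) {U : Finset V} {v : V}
    (_hv : v ∉ U) (hbad : ¬ GoodC c U v) :
    (∃ (φ : Bool) (a b x : V) (i j l : Fin 4), #(univ.image (SC c φ a b x)) = 4 ∧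
      univ.image (SC c φ a b x) ⊆ U ∧ DC c (SC c φ a b x i) (SC c φ a b x j) (SC c φ a b x l) = v) ∨
    (∃ (φ : Bool) (a b x : V) (i j : Fin 4),
      #(insert (DC c v (SC c φ a b x i) (SC c φ a b x j)) (univ.image (SC c φ a b x))) = 5 ∧
      insert (DC c v (SC c φ a b x i) (SC c φ a b x j)) (univ.image (SC c φ a b x)) ⊆ U) ∨
    (∃ (φ : Bool) (a b x e : V),
      #(({e, DC c v a e, DC c v b e} : Finset V) ∪ (univ.image (SC c φ a b x))) = 7 ∧
      (({e, DC c v a e, DC c v b e} : Finset V) ∪ (univ.image (SC c φ a b x))) ⊆ U) ∨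
    (∃ (φ : Bool) (a b x e g : V),
      #(({e, DC c v a e, g, DC c v b g} : Finset V) ∪ (univ.image (SC c φ a b x))) = 8 ∧
      (({e, DC c v a e, g, DC c v b g} : Finset V) ∪ (univ.image (SC c φ a b x))) ⊆ U) := by
  unfold GoodC at hbad
  push Not at hbad
  obtain ⟨a, ha, b, hb, x, hx, y, hy, hR⟩ := hbad
  have hR : QC c a b x y ∨ QC c a x b y := by tauto
  rw [mem_LC] at ha hb
  obtain ⟨haU, e, heU, f, hfU, hef⟩ := ha
  obtain ⟨hbU, g, hgU, h, hhU, hgh⟩ := hb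
  -- the form
  obtain ⟨φ, hφ⟩ : ∃ φ, YC c φ a b x = y := by
    rcases hR with hR | hR
    · exact ⟨true, by unfold YC; rw [if_pos rfl]; exact DC_eq hc hR.2.2.2.2.2.1 hR.2.2.2.2.2.2⟩
    · exact ⟨false, by unfold YC; rw [if_neg (by simp)]; exact DC_eq hc hR.2.2.2.2.2.1 hR.2.2.2.2.2.2⟩
  have hab : a ≠ b := by rcases hR with hR | hR <;> [exact hR.1; exact hR.2.1]
  have hax : a ≠ x := by rcases hR with hR | hR <;> [exact hR.2.1; exact hR.1]
  have hay : a ≠ y := by rcases hR with hR | hR <;> exact hR.2.2.1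
  have hbx : b ≠ x := by rcases hR with hR | hR <;> [exact hR.2.2.2.1; exact hR.2.2.2.1.symm]
  have hby : b ≠ y := by rcases hR with hR | hR <;> [exact hR.2.2.2.2.1; exact hR.2.2.2.2.2.1]
  have hxy : x ≠ y := by rcases hR with hR | hR <;> [exact hR.2.2.2.2.2.1; exact hR.2.2.2.2.1]
  have hS : univ.image (SC c φ a b x) = {a, b, x, y} := by
    unfold SC; rw [hφ]; ext z; simp [Fin.exists_fin_succ, eq_comm]
  have hS4 : #({a, b, x, y} : Finset V) = 4 := by
    rw [card_insert_of_notMem (by simp [hab, hax, hay]), card_insert_of_notMem (by simp [hbx, hby]),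
      card_pair hxy]
  have hSU : ({a, b, x, y} : Finset V) ⊆ U := by
    intro z hz; simp only [mem_insert, mem_singleton] at hz
    rcases hz with rfl | rfl | rfl | rfl <;> assumption
  have hidx : ∀ z ∈ ({a, b, x, y} : Finset V), ∃ i, SC c φ a b x i = z := by
    intro z hz; rw [← hS] at hz; simpa using hz
  -- generic facts on an edge of color c(v w) with w = a or b
  have key : ∀ w ∈ ({a, b, x, y} : Finset V), ∀ p ∈ U, ∀ r ∈ U, QC c v w p r →
      p ∈ ({a, b, x, y} : Finset V) →
      (∃ (i j l : Fin 4), DC c (SC c φ a b x i) (SC c φ a b x j) (SC c φ a b x l) = v) ∨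
      (∃ (i j : Fin 4), DC c v (SC c φ a b x i) (SC c φ a b x j) ∈ U ∧
        DC c v (SC c φ a b x i) (SC c φ a b x j) ∉ ({a, b, x, y} : Finset V)) := by
    intro w hw p hp r hr hQ hpS
    obtain ⟨i, hi⟩ := hidx w hw
    obtain ⟨j, hj⟩ := hidx p hpS
    by_cases hrS : r ∈ ({a, b, x, y} : Finset V)
    · obtain ⟨l, hl⟩ := hidx r hrS
      left
      refine ⟨j, l, i, ?_⟩
      rw [hi, hj, hl]
      exact DC_eq hc hQ.1.symm hQ.left.2.2.2.2.2.2.symm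
    · right
      refine ⟨i, j, ?_⟩
      rw [hi, hj, DC_eq hc hQ.2.2.2.2.2.1 hQ.2.2.2.2.2.2]
      exact ⟨hr, hrS⟩
  have key2 : ∀ w ∈ ({a, b, x, y} : Finset V), ∀ p ∈ U, ∀ r ∈ U, QC c v w p r →
      p ∈ ({a, b, x, y} : Finset V) →
      (∃ (φ : Bool) (a b x : V) (i j l : Fin 4), #(univ.image (SC c φ a b x)) = 4 ∧
      univ.image (SC c φ a b x) ⊆ U ∧ DC c (SC c φ a b x i) (SC c φ a b x j) (SC c φ a b x l) = v) ∨
      (∃ (φ : Bool) (a b x : V) (i j : Fin 4),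
      #(insert (DC c v (SC c φ a b x i) (SC c φ a b x j)) (univ.image (SC c φ a b x))) = 5 ∧
      insert (DC c v (SC c φ a b x i) (SC c φ a b x j)) (univ.image (SC c φ a b x)) ⊆ U) := by
    intro w hw p hp r hr hQ hpS
    rcases key w hw p hp r hr hQ hpS with ⟨i, j, l, h1⟩ | ⟨i, j, h1, h2⟩
    · exact Or.inl ⟨φ, a, b, x, i, j, l, by rw [hS, hS4], by rwa [hS], h1⟩
    · refine Or.inr ⟨φ, a, b, x, i, j, ?_, ?_⟩
      · rw [hS, card_insert_of_notMem h2, hS4]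
      · rw [hS]; exact insert_subset h1 hSU
  have haS : a ∈ ({a, b, x, y} : Finset V) := by simp
  have hbS : b ∈ ({a, b, x, y} : Finset V) := by simp
  by_cases heS : e ∈ ({a, b, x, y} : Finset V)
  · rcases key2 a haS e heU f hfU hef heS with h | h
    · exact Or.inl h
    · exact Or.inr (Or.inl h)
  by_cases hfS : f ∈ ({a, b, x, y} : Finset V)
  · rcases key2 a haS f hfU e heU hef.right hfS with h | h
    · exact Or.inl h
    · exact Or.inr (Or.inl h)
  by_cases hgS : g ∈ ({a, b, x, y} : Finset V)
  · rcases key2 b hbS g hgU h hhU hgh hgS with h | h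
    · exact Or.inl h
    · exact Or.inr (Or.inl h)
  by_cases hhS : h ∈ ({a, b, x, y} : Finset V)
  · rcases key2 b hbS h hhU g hgU hgh.right hhS with h | h
    · exact Or.inl h
    · exact Or.inr (Or.inl h)
  right; right
  -- colors differ
  have hcol : c s(v, a) ≠ c s(v, b) := fun hh => hab (hc v a b hef.1 hgh.1 hh)
  have shared : ∀ e f h, e ∈ U → f ∈ U → h ∈ U → e ∉ ({a, b, x, y} : Finset V) →
      f ∉ ({a, b, x, y} : Finset V) → h ∉ ({a, b, x, y} : Finset V) →
      QC c v a e f → QC c v b e h → (∃ (φ : Bool) (a b x e : V),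
      #(({e, DC c v a e, DC c v b e} : Finset V) ∪ (univ.image (SC c φ a b x))) = 7 ∧
      (({e, DC c v a e, DC c v b e} : Finset V) ∪ (univ.image (SC c φ a b x))) ⊆ U) := by
    intro e f h heU hfU hhU heS hfS hhS h1 h2
    refine ⟨φ, a, b, x, e, ?_⟩
    rw [DC_eq hc h1.2.2.2.2.2.1 h1.2.2.2.2.2.2, DC_eq hc h2.2.2.2.2.2.1 h2.2.2.2.2.2.2, hS]
    have hfh : f ≠ h := by
      rintro rfl
      exact hcol (h1.2.2.2.2.2.2.trans h2.2.2.2.2.2.2.symm)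
    constructor
    · rw [card_union_of_disjoint, hS4, card_insert_of_notMem, card_pair hfh]
      · simp [h1.2.2.2.2.2.1, h2.2.2.2.2.2.1]
      · rw [Finset.disjoint_left]; intro z hz; simp only [mem_insert, mem_singleton] at hz
        rcases hz with rfl | rfl | rfl <;> assumption
    · refine union_subset ?_ hSU
      intro z hz; simp only [mem_insert, mem_singleton] at hz
      rcases hz with rfl | rfl | rfl <;> assumption
  by_cases h1 : e = g
  · subst h1; exact Or.inl (shared e f h heU hfU hhU heS hfS hhS hef hgh)
  by_cases h2 : e = h
  · subst h2; exact Or.inl (shared e f g heU hfU hgU heS hfS hgS hef hgh.right)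
  by_cases h3 : f = g
  · subst h3; exact Or.inl (shared f e h hfU heU hhU hfS heS hhS hef.right hgh)
  by_cases h4 : f = h
  · subst h4; exact Or.inl (shared f e g hfU heU hgU hfS heS hgS hef.right hgh.right)
  right
  refine ⟨φ, a, b, x, e, g, ?_⟩
  rw [DC_eq hc hef.2.2.2.2.2.1 hef.2.2.2.2.2.2, DC_eq hc hgh.2.2.2.2.2.1 hgh.2.2.2.2.2.2, hS]
  constructor
  · rw [card_union_of_disjoint, hS4, card_insert_of_notMem, card_insert_of_notMem,
      card_pair hgh.2.2.2.2.2.1]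
    · simp [h3, h4]
    · simp [h1, h2, hef.2.2.2.2.2.1]
    · rw [Finset.disjoint_left]; intro z hz; simp only [mem_insert, mem_singleton] at hz
      rcases hz with rfl | rfl | rfl | rfl <;> assumption
  · refine union_subset ?_ hSU
    intro z hz; simp only [mem_insert, mem_singleton] at hz
    rcases hz with rfl | rfl | rfl | rfl <;> assumption

open Classical in
lemma bad_count {V : Type*} [Fintype V] [DecidableEq V] [Nonempty V] {c : Sym2 V → ℕ} (hc : PropK c)
    (m N : ℕ) (hN : Fintype.card V = N) (h5 : 1000 * m ^ 5 ≤ N ^ 2) (h8 : 100 * m ^ 8 ≤ N ^ 3) :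
    (#{p ∈ powersetCard m (univ : Finset V) ×ˢ (univ : Finset V) |
      p.2 ∉ p.1 ∧ ¬ GoodC c p.1 p.2} : ℝ) ≤ (N.choose m : ℝ) * ((N : ℝ) / 4) := by
  obtain ⟨A, hA, mA⟩ := count_cfg' (V := V) (Ω := Bool × V × V × V × Fin 4 × Fin 4 × Fin 4)
    (fun ω => DC c (SC c ω.1 ω.2.1 ω.2.2.1 ω.2.2.2.1 ω.2.2.2.2.1) (SC c ω.1 ω.2.1 ω.2.2.1 ω.2.2.2.1 ω.2.2.2.2.2.1)
      (SC c ω.1 ω.2.1 ω.2.2.1 ω.2.2.2.1 ω.2.2.2.2.2.2))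
    (fun ω => univ.image (SC c ω.1 ω.2.1 ω.2.2.1 ω.2.2.2.1)) 4 m
  obtain ⟨B, hB, mB⟩ := count_cfg' (V := V) (Ω := V × Bool × V × V × V × Fin 4 × Fin 4)
    (fun ω => ω.1)
    (fun ω => insert (DC c ω.1 (SC c ω.2.1 ω.2.2.1 ω.2.2.2.1 ω.2.2.2.2.1 ω.2.2.2.2.2.1)
       (SC c ω.2.1 ω.2.2.1 ω.2.2.2.1 ω.2.2.2.2.1 ω.2.2.2.2.2.2))
      (univ.image (SC c ω.2.1 ω.2.2.1 ω.2.2.2.1 ω.2.2.2.2.1))) 5 m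
  obtain ⟨C, hC, mC⟩ := count_cfg' (V := V) (Ω := V × Bool × V × V × V × V)
    (fun ω => ω.1)
    (fun ω => ({ω.2.2.2.2.2, DC c ω.1 ω.2.2.1 ω.2.2.2.2.2, DC c ω.1 ω.2.2.2.1 ω.2.2.2.2.2} : Finset V) ∪
      (univ.image (SC c ω.2.1 ω.2.2.1 ω.2.2.2.1 ω.2.2.2.2.1))) 7 m
  obtain ⟨D, hD, mD⟩ := count_cfg' (V := V) (Ω := V × Bool × V × V × V × V × V)
    (fun ω => ω.1)
    (fun ω => ({ω.2.2.2.2.2.1, DC c ω.1 ω.2.2.1 ω.2.2.2.2.2.1, ω.2.2.2.2.2.2,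
        DC c ω.1 ω.2.2.2.1 ω.2.2.2.2.2.2} : Finset V) ∪
      (univ.image (SC c ω.2.1 ω.2.2.1 ω.2.2.2.1 ω.2.2.2.2.1))) 8 m
  have hsub : (powersetCard m (univ : Finset V) ×ˢ (univ : Finset V)).filter (fun p =>
      p.2 ∉ p.1 ∧ ¬ GoodC c p.1 p.2) ⊆ A ∪ (B ∪ (C ∪ D)) := by
    rintro ⟨U, v⟩ hp
    rw [mem_filter] at hp
    obtain ⟨hp1, hp2, hp3⟩ := hp
    rw [mem_union, mem_union, mem_union]
    rcases bad_cases hc hp2 hp3 with ⟨φ, a, b, x, i, j, l, h1, h2, h3⟩ | ⟨φ, a, b, x, i, j, h1, h2⟩ |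
      ⟨φ, a, b, x, e, h1, h2⟩ | ⟨φ, a, b, x, e, g, h1, h2⟩
    · exact Or.inl (mA _ hp1 (φ, a, b, x, i, j, l) h1 h2 h3)
    · exact Or.inr (Or.inl (mB _ hp1 (v, φ, a, b, x, i, j) h1 h2 rfl))
    · exact Or.inr (Or.inr (Or.inl (mC _ hp1 (v, φ, a, b, x, e) h1 h2 rfl)))
    · exact Or.inr (Or.inr (Or.inr (mD _ hp1 (v, φ, a, b, x, e, g) h1 h2 rfl)))
  have hcard : (#((powersetCard m (univ : Finset V) ×ˢ (univ : Finset V)).filter (fun p =>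
      p.2 ∉ p.1 ∧ ¬ GoodC c p.1 p.2)) : ℝ) ≤ #A + (#B + (#C + #D)) := by
    have h1 := card_le_card hsub
    have h2 := card_union_le A (B ∪ (C ∪ D))
    have h3 := card_union_le B (C ∪ D)
    have h4 := card_union_le C D
    exact_mod_cast (by omega : _ ≤ #A + (#B + (#C + #D)))
  refine hcard.trans ?_
  simp only [Fintype.card_prod, Fintype.card_bool, Fintype.card_fin, hN] at hA hB hC hD
  have hNpos : (0 : ℝ) < N := by rw [← hN]; exact_mod_cast Fintype.card_pos
  have h5' : 1000 * (m : ℝ) ^ 5 ≤ N ^ 2 := by exact_mod_cast h5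
  have h8' : 100 * (m : ℝ) ^ 8 ≤ N ^ 3 := by exact_mod_cast h8
  have h4' : (m : ℝ) ^ 4 ≤ m ^ 5 := by
    rcases Nat.eq_zero_or_pos m with h | h
    · simp [h]
    · exact pow_le_pow_right₀ (by exact_mod_cast h) (by norm_num)
  have h7' : (m : ℝ) ^ 7 ≤ m ^ 8 := by
    rcases Nat.eq_zero_or_pos m with h | h
    · simp [h]
    · exact pow_le_pow_right₀ (by exact_mod_cast h) (by norm_num)
  have hch : (0 : ℝ) ≤ N.choose m := by positivity
  have key : ∀ z w : ℝ, z ≤ (N.choose m : ℝ) * w → ∀ w', w ≤ w' → z ≤ (N.choose m : ℝ) * w' :=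
    fun z w h w' h' => h.trans (mul_le_mul_of_nonneg_left h' hch)
  have hA' := key (#A) (128 * (m : ℝ) ^ 4 / N) (by
    refine hA.trans (le_of_eq ?_); push_cast; field_simp; ring) (128 / 1000 * N) (by
    rw [div_le_iff₀ hNpos]; nlinarith)
  have hB' := key (#B) (32 * (m : ℝ) ^ 5 / N) (by
    refine hB.trans (le_of_eq ?_); push_cast; field_simp; ring) (32 / 1000 * N) (by
    rw [div_le_iff₀ hNpos]; nlinarith)
  have hC' := key (#C) (2 * (m : ℝ) ^ 7 / N ^ 2) (by
    refine hC.trans (le_of_eq ?_); push_cast; field_simp) (2 / 100 * N) (by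
    rw [div_le_iff₀ (by positivity)]; nlinarith)
  have hD' := key (#D) (2 * (m : ℝ) ^ 8 / N ^ 2) (by
    refine hD.trans (le_of_eq ?_); push_cast; field_simp) (2 / 100 * N) (by
    rw [div_le_iff₀ (by positivity)]; nlinarith)
  nlinarith [mul_nonneg hch hNpos.le]

lemma RbW.mono {V : Type*} {c : Sym2 V → ℕ} {A B : Finset V} (h : A ⊆ B) (hB : RbW c B) : RbW c A :=
  fun a ha b hb x hx y hy => hB a (h ha) b (h hb) x (h hx) y (h hy)

lemma good_hP {V : Type*} [DecidableEq V] {c : Sym2 V → ℕ} {U : Finset V} {v : V}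
    (hg : GoodC c U v) (J S : Finset V) (hJ : J ⊆ U \ LC c U v) (hS : S ⊆ LC c U v)
    (hPJ : RbW c J) (hPS : ∀ a ∈ S, RbW c (insert a J)) : RbW c (J ∪ S) := by
  have hLU : LC c U v ⊆ U := fun a ha => (mem_LC.1 ha).1
  have hU : ∀ z ∈ J ∪ S, z ∈ U := by
    intro z hz
    rcases mem_union.1 hz with h | h
    · exact (mem_sdiff.1 (hJ h)).1
    · exact hLU (hS h)
  -- if `p` lies in S, all others lie in J
  have key : ∀ p ∈ S, ∀ q ∈ J ∪ S, ∀ x ∈ J ∪ S, ∀ y ∈ J ∪ S, ¬ QC c p q x y := by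
    intro p hp q hq x hx y hy hQ
    have hq' : q ∈ J := by
      rcases mem_union.1 hq with h | h
      · exact h
      · exact absurd hQ (hg p (hS hp) q (hS h) x (hU x hx) y (hU y hy)).1
    have hx' : x ∈ J := by
      rcases mem_union.1 hx with h | h
      · exact h
      · exact absurd hQ (hg p (hS hp) x (hS h) q (hU q hq) y (hU y hy)).2
    have hy' : y ∈ J := by
      rcases mem_union.1 hy with h | h
      · exact h
      · exact absurd hQ.right (hg p (hS hp) y (hS h) q (hU q hq) x (hU x hx)).2
    exact hPS p hp p (mem_insert_self _ _) q (mem_insert_of_mem hq') x (mem_insert_of_mem hx')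
      y (mem_insert_of_mem hy') hQ
  intro p hp q hq x hx y hy hQ
  rcases mem_union.1 hp with h1 | h1
  swap
  · exact key p h1 q hq x hx y hy hQ
  rcases mem_union.1 hq with h2 | h2
  swap
  · exact key q h2 p hp x hx y hy hQ.left
  rcases mem_union.1 hx with h3 | h3
  swap
  · exact key x h3 y hy p hp q hq hQ.swap
  rcases mem_union.1 hy with h4 | h4
  swap
  · exact key y h4 x hx p hp q hq hQ.swap.left
  exact hPJ p h1 q h2 x h3 y h4 hQ

lemma rbw_insert {V : Type*} [DecidableEq V] {c : Sym2 V → ℕ} {W : Finset V} {v : V}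
    (hW : RbW c W) (h : ∀ a ∈ W, ∀ e ∈ W, ∀ f ∈ W, ¬ QC c v a e f) : RbW c (insert v W) := by
  have key : ∀ q ∈ insert v W, ∀ x ∈ insert v W, ∀ y ∈ insert v W, ¬ QC c v q x y := by
    intro q hq x hx y hy hQ
    exact h q (mem_of_mem_insert_of_ne hq hQ.1.symm) x (mem_of_mem_insert_of_ne hx hQ.2.1.symm)
      y (mem_of_mem_insert_of_ne hy hQ.2.2.1.symm) hQ
  intro p hp q hq x hx y hy hQ
  rcases mem_insert.1 hp with rfl | h1
  · exact key q hq x hx y hy hQ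
  rcases mem_insert.1 hq with rfl | h2
  · exact key p hp x hx y hy hQ.left
  rcases mem_insert.1 hx with rfl | h3
  · exact key y hy p hp q hq hQ.swap
  rcases mem_insert.1 hy with rfl | h4
  · exact key x hx p hp q hq hQ.swap.left
  exact hW p h1 q h2 x h3 y h4 hQ

open Classical in
/-- Number of rainbow subsets of `U`. -/
noncomputable def IC {V : Type*} (c : Sym2 V → ℕ) (U : Finset V) : ℕ :=
  #{W ∈ U.powerset | RbW c W}

open Classical in
/-- Number of rainbow subsets of `U` that stay rainbow after adding `v`. -/
noncomputable def aC {V : Type*} (c : Sym2 V → ℕ) (U : Finset V) (v : V) : ℕ :=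
  #{W ∈ U.powerset | RbW c W ∧ RbW c (insert v W)}

open Classical in
/-- Number of triples in `W` conflicting with `v`. -/
noncomputable def YY {V : Type*} (c : Sym2 V → ℕ) (v : V) (W : Finset V) : ℕ :=
  #{i ∈ W ×ˢ W ×ˢ W | QC c v i.1 i.2.1 i.2.2}

open Classical in
lemma good_bound {V : Type*} {c : Sym2 V → ℕ} {U : Finset V} {v : V}
    (hg : GoodC c U v) (μ : ℝ) :
    Real.exp (-μ) * ∑ W ∈ U.powerset with RbW c W, (1 + μ - 2 * (YY c v W : ℝ)) ≤ aC c U v := by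
  have hLU : LC c U v ⊆ U := fun a ha => (mem_LC.1 ha).1
  have h := local_bound U (LC c U v) hLU (RbW c) (fun A B h hB => RbW.mono h hB)
    (fun J S hJ hS h1 h2 => good_hP hg J S hJ hS h1 h2)
    ((U ×ˢ U ×ˢ U).filter (fun i => QC c v i.1 i.2.1 i.2.2))
    (fun i => {i.1, i.2.1, i.2.2}) (by
      intro i hi
      simp only [mem_filter, mem_product] at hi
      refine ⟨i.1, mem_inter.2 ⟨by simp, mem_LC.2 ⟨hi.1.1, i.2.1, hi.1.2.1, i.2.2, hi.1.2.2, hi.2⟩⟩⟩) μ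
  refine le_trans (le_of_eq ?_) (h.trans ?_)
  · congr 1
    refine sum_congr rfl fun W hW => ?_
    have hWU := Finset.mem_powerset.1 (mem_filter.1 hW).1
    have : YY c v W = #{i ∈ (U ×ˢ U ×ˢ U).filter (fun i => QC c v i.1 i.2.1 i.2.2) |
        ({i.1, i.2.1, i.2.2} : Finset V) ⊆ W} := by
      unfold YY
      congr 1
      ext i
      simp only [mem_filter, mem_product, insert_subset_iff, singleton_subset_iff]
      constructor
      · rintro ⟨⟨h1, h2, h3⟩, h4⟩
        exact ⟨⟨⟨hWU h1, hWU h2, hWU h3⟩, h4⟩, h1, h2, h3⟩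
      · rintro ⟨⟨_, h4⟩, h1, h2, h3⟩
        exact ⟨⟨h1, h2, h3⟩, h4⟩
    rw [this]
  · unfold aC
    norm_cast
    apply card_le_card
    intro W hW
    simp only [mem_filter, Finset.mem_powerset, mem_product] at hW ⊢
    obtain ⟨hWU, hR, h1⟩ := hW
    refine ⟨hWU, hR, rbw_insert hR fun a ha e he f hf hQ => ?_⟩
    refine h1 (a, e, f) ⟨⟨hWU ha, hWU he, hWU hf⟩, hQ⟩ ?_
    simp [insert_subset_iff, ha, he, hf]

open Classical in
lemma sum_YY_le {V : Type*} [Fintype V] {c : Sym2 V → ℕ} (hc : PropK c) (A W : Finset V) :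
    ∑ v ∈ A, YY c v W ≤ #W ^ 3 := by
  unfold YY
  have hc1 : #(W ×ˢ W ×ˢ W) = #W ^ 3 := by rw [card_product, card_product]; ring
  rw [← hc1]
  simp only [card_filter]
  rw [sum_comm, card_eq_sum_ones]
  refine sum_le_sum fun i _ => ?_
  rw [← card_filter, card_le_one]
  intro v hv w hw
  have h1 := (mem_filter.1 hv).2
  have h2 := (mem_filter.1 hw).2
  exact hc i.1 v w h1.left.1 h2.left.1 (h1.left.2.2.2.2.2.2.trans h2.left.2.2.2.2.2.2.symm)

lemma aC_le_IC {V : Type*} (c : Sym2 V → ℕ) (U : Finset V) (v : V) : aC c U v ≤ IC c U := by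
  classical
  unfold aC IC
  apply card_le_card
  intro W hW
  simp only [mem_filter] at hW ⊢
  exact ⟨hW.1, hW.2.1⟩

lemma IC_pos {V : Type*} (c : Sym2 V → ℕ) (U : Finset V) : 0 < IC c U := by
  classical
  unfold IC
  apply card_pos.2
  exact ⟨∅, mem_filter.2 ⟨empty_mem_powerset _, by intro a ha; simp at ha⟩⟩

open Classical in
lemma aC_erase {V : Type*} (c : Sym2 V → ℕ) (U : Finset V) (v : V) (hv : v ∈ U) :
    aC c (U.erase v) v = #{W ∈ U.powerset | RbW c W ∧ v ∈ W} := by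
  unfold aC
  apply card_bij (fun W _ => insert v W)
  · intro W hW
    simp only [mem_filter, Finset.mem_powerset] at hW ⊢
    exact ⟨insert_subset hv (hW.1.trans (erase_subset _ _)), hW.2.2, mem_insert_self _ _⟩
  · intro W hW W' hW' h
    simp only [mem_filter, Finset.mem_powerset] at hW hW'
    have h1 : v ∉ W := fun h => by simpa using hW.1 h
    have h2 : v ∉ W' := fun h => by simpa using hW'.1 h
    rw [← erase_insert h1, h, erase_insert h2]
  · intro W hW
    simp only [mem_filter, Finset.mem_powerset] at hW
    refine ⟨W.erase v, ?_, insert_erase hW.2.2⟩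
    simp only [mem_filter, Finset.mem_powerset]
    rw [insert_erase hW.2.2]
    exact ⟨erase_subset_erase _ hW.1, RbW.mono (erase_subset _ _) hW.2.1, hW.2.1⟩

open Classical in
lemma IC_erase {V : Type*} (c : Sym2 V → ℕ) (U : Finset V) (v : V) (hv : v ∈ U) :
    IC c U ≤ 2 * IC c (U.erase v) := by
  have h1 := aC_le_IC c (U.erase v) v
  rw [aC_erase c U v hv] at h1
  have h2 : IC c U = #{W ∈ U.powerset | RbW c W ∧ v ∈ W} + IC c (U.erase v) := by
    unfold IC
    rw [← card_filter_add_card_filter_not (s := U.powerset.filter (RbW c)) (fun W => v ∈ W), filter_filter,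
      filter_filter]
    congr 2
    ext W
    simp only [mem_filter, Finset.mem_powerset, subset_erase]
    tauto
  omega

open Classical in
lemma sum_aC_le {V : Type*} (c : Sym2 V → ℕ) (U : Finset V) (n : ℕ)
    (hn : ∀ W, RbW c W → #W ≤ n) :
    ∑ v ∈ U, (aC c (U.erase v) v : ℝ) / IC c (U.erase v) ≤ 2 * n := by
  have hI : (0 : ℝ) < IC c U := by exact_mod_cast IC_pos c U
  have h1 : ∑ v ∈ U, (aC c (U.erase v) v : ℝ) ≤ n * IC c U := by
    have : ∑ v ∈ U, aC c (U.erase v) v ≤ n * IC c U := by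
      calc ∑ v ∈ U, aC c (U.erase v) v = ∑ v ∈ U, #{W ∈ U.powerset.filter (RbW c) | v ∈ W} := by
            refine sum_congr rfl fun v hv => ?_
            rw [aC_erase c U v hv, filter_filter]
        _ = ∑ W ∈ U.powerset.filter (RbW c), #{v ∈ U | v ∈ W} := by
            generalize U.powerset.filter (RbW c) = F
            simp only [card_filter]
            exact sum_comm
        _ ≤ ∑ W ∈ U.powerset.filter (RbW c), n := by
            refine sum_le_sum fun W hW => ?_
            refine le_trans (card_le_card ?_) (hn W (mem_filter.1 hW).2)
            intro v hv; exact (mem_filter.1 hv).2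
        _ = n * IC c U := by rw [sum_const, smul_eq_mul, mul_comm]; rfl
    exact_mod_cast this
  calc ∑ v ∈ U, (aC c (U.erase v) v : ℝ) / IC c (U.erase v)
      ≤ ∑ v ∈ U, (2 / IC c U) * (aC c (U.erase v) v : ℝ) := by
        refine sum_le_sum fun v hv => ?_
        have hI' : (0 : ℝ) < IC c (U.erase v) := by exact_mod_cast IC_pos c _
        have h2 : (IC c U : ℝ) ≤ 2 * IC c (U.erase v) := by exact_mod_cast IC_erase c U v hv
        rw [div_le_iff₀ hI']
        have h3 : 1 ≤ 2 / (IC c U : ℝ) * IC c (U.erase v) := by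
          rw [div_mul_eq_mul_div, le_div_iff₀ hI]; linarith
        have h4 : (0 : ℝ) ≤ aC c (U.erase v) v := by positivity
        nlinarith
    _ = (2 / IC c U) * ∑ v ∈ U, (aC c (U.erase v) v : ℝ) := by rw [mul_sum]
    _ ≤ (2 / IC c U) * (n * IC c U) := by gcongr
    _ = 2 * n := by field_simp

lemma sum_reindex {V : Type*} [Fintype V] [DecidableEq V] (m : ℕ) (f : Finset V → V → ℝ) :
    ∑ U ∈ powersetCard m (univ : Finset V), ∑ v ∈ Uᶜ, f U v =
      ∑ U ∈ powersetCard (m + 1) (univ : Finset V), ∑ v ∈ U, f (U.erase v) v := by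
  rw [sum_sigma', sum_sigma']
  refine sum_bij' (fun x _ => ⟨insert x.2 x.1, x.2⟩) (fun x _ => ⟨x.1.erase x.2, x.2⟩) ?_ ?_ ?_ ?_ ?_
  · rintro ⟨U, v⟩ hx
    simp only [mem_sigma, mem_powersetCard, mem_compl, subset_univ, true_and] at hx ⊢
    exact ⟨by rw [card_insert_of_notMem hx.2, hx.1], mem_insert_self _ _⟩
  · rintro ⟨U, v⟩ hx
    simp only [mem_sigma, mem_powersetCard, mem_compl, subset_univ, true_and] at hx ⊢
    exact ⟨by rw [card_erase_of_mem hx.2, hx.1]; rfl, by simp⟩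
  · rintro ⟨U, v⟩ hx
    simp only [mem_sigma, mem_powersetCard, mem_compl, subset_univ, true_and] at hx ⊢
    rw [erase_insert hx.2]
  · rintro ⟨U, v⟩ hx
    simp only [mem_sigma, mem_powersetCard, subset_univ, true_and] at hx ⊢
    rw [insert_erase hx.2]
  · rintro ⟨U, v⟩ hx
    simp only [mem_sigma, mem_powersetCard, mem_compl, subset_univ, true_and] at hx ⊢
    rw [erase_insert hx.2]

open Classical in
theorem main_upper {V : Type*} [Fintype V] {c : Sym2 V → ℕ} (hc : PropK c)
    (m n N : ℕ) (hN : Fintype.card V = N) (hN0 : 0 < N) (h5 : 1000 * m ^ 5 ≤ N ^ 2) (h8 : 100 * m ^ 8 ≤ N ^ 3)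
    (hmN : 2 * m ≤ N) (μ : ℝ) (hμ0 : 0 ≤ μ) (hμ : Real.exp μ * (4 * n) ≤ m)
    (hbig : 8 * (n : ℝ) ^ 3 < μ * N) : ∃ W, RbW c W ∧ n < #W := by
  by_contra hcon
  push Not at hcon
  have : Nonempty V := Fintype.card_pos_iff.1 (by omega)
  have hbad := bad_count hc m N hN h5 h8
  set P := powersetCard m (univ : Finset V) with hP
  set C : ℝ := (N.choose m : ℝ) with hC
  have hCpos : 0 < C := by rw [hC]; exact_mod_cast Nat.choose_pos (by omega)
  have hPc : (#P : ℝ) = C := by rw [hP, card_powersetCard, card_univ, hN]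
  -- first: upper bound on total
  have h1 : ∑ U ∈ P, ∑ v ∈ Uᶜ, (aC c U v : ℝ) / IC c U ≤ C * (N - m) / (m + 1) * (2 * n) := by
    rw [hP, sum_reindex]
    refine (sum_le_sum fun U _ => sum_aC_le c U n hcon).trans ?_
    rw [sum_const, card_powersetCard, card_univ, hN, nsmul_eq_mul]
    have h := Nat.choose_succ_right_eq N m
    have h' : (N.choose (m + 1) : ℝ) * (m + 1) = C * (N - m) := by
      rw [hC, ← Nat.cast_sub (by omega : m ≤ N)]; exact_mod_cast h
    refine le_of_eq ?_
    congr 1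
    rw [eq_div_iff (by positivity), h']
  -- second: lower bound
  have h2 : ∀ U ∈ P, ∀ v ∈ Uᶜ, GoodC c U v →
      Real.exp (-μ) * ((1 + μ) - 2 * ((∑ W ∈ U.powerset with RbW c W, (YY c v W : ℝ)) / IC c U)) ≤
        (aC c U v : ℝ) / IC c U := by
    intro U _ v _ hg
    have hI : (0 : ℝ) < IC c U := by exact_mod_cast IC_pos c U
    have h := good_bound hg μ
    rw [le_div_iff₀ hI]
    refine le_trans (le_of_eq ?_) h
    rw [sum_sub_distrib, sum_const, ← mul_sum, nsmul_eq_mul]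
    have : (#(U.powerset.filter (RbW c)) : ℝ) = IC c U := rfl
    rw [this]
    field_simp
  have h3 : ∀ U ∈ P, ∑ v ∈ Uᶜ, ((∑ W ∈ U.powerset with RbW c W, (YY c v W : ℝ)) / IC c U) ≤ (n : ℝ) ^ 3 := by
    intro U _
    have hI : (0 : ℝ) < IC c U := by exact_mod_cast IC_pos c U
    rw [← sum_div, div_le_iff₀ hI, sum_comm]
    have : ∀ W ∈ U.powerset.filter (RbW c), ∑ v ∈ Uᶜ, (YY c v W : ℝ) ≤ (n : ℝ) ^ 3 := by
      intro W hW
      have h := (sum_YY_le hc Uᶜ W).trans (Nat.pow_le_pow_left (hcon W (mem_filter.1 hW).2) 3)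
      exact_mod_cast h
    refine (sum_le_sum this).trans ?_
    rw [sum_const, nsmul_eq_mul, mul_comm]
    exact le_rfl
  -- combine
  have hind : ∀ U ∈ P, ∀ v ∈ Uᶜ,
      Real.exp (-μ) * ((if GoodC c U v then (1 + μ) else 0) -
        2 * ((∑ W ∈ U.powerset with RbW c W, (YY c v W : ℝ)) / IC c U)) ≤ (aC c U v : ℝ) / IC c U := by
    intro U hU v hv
    by_cases hg : GoodC c U v
    · rw [if_pos hg]; exact h2 U hU v hv hg
    · rw [if_neg hg]
      have hx : (0 : ℝ) ≤ 2 * ((∑ W ∈ U.powerset with RbW c W, (YY c v W : ℝ)) / IC c U) := by positivity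
      have hy : (0 : ℝ) ≤ (aC c U v : ℝ) / IC c U := by positivity
      have := Real.exp_pos (-μ)
      nlinarith
  have hsum := sum_le_sum fun U hU => sum_le_sum (hind U hU)
  simp only [← mul_sum, sum_sub_distrib] at hsum
  have h3' : ∑ U ∈ P, ∑ v ∈ Uᶜ, ((∑ W ∈ U.powerset with RbW c W, (YY c v W : ℝ)) / IC c U) ≤ C * (n : ℝ) ^ 3 := by
    refine (sum_le_sum h3).trans ?_
    rw [sum_const, nsmul_eq_mul, hPc]
  -- count of good
  have hgood : C * (N - m) - C * (N / 4) ≤ ∑ U ∈ P, ∑ v ∈ Uᶜ, (if GoodC c U v then (1 : ℝ) else 0) := by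
    have e1 : ∑ U ∈ P, ∑ v ∈ Uᶜ, (1 : ℝ) = C * (N - m) := by
      have : ∀ U ∈ P, ∑ v ∈ Uᶜ, (1 : ℝ) = (N - m : ℝ) := by
        intro U hU
        rw [sum_const, card_compl, hN, (mem_powersetCard.1 hU).2, nsmul_eq_mul, mul_one,
          Nat.cast_sub (by omega)]
      rw [sum_congr rfl this, sum_const, nsmul_eq_mul, hPc]
    have e2 : ∑ U ∈ P, ∑ v ∈ Uᶜ, (if GoodC c U v then (0 : ℝ) else 1) ≤ C * (N / 4) := by
      refine le_trans (le_of_eq ?_) hbad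
      rw [card_filter, Nat.cast_sum, sum_product]
      refine sum_congr rfl fun U _ => ?_
      rw [← sum_filter_add_sum_filter_not univ (fun v => v ∈ U) (fun v => (((if v ∉ U ∧ ¬ GoodC c U v then 1 else 0) : ℕ) : ℝ))]
      have hz : ∑ v ∈ univ.filter (fun v => v ∈ U), (((if v ∉ U ∧ ¬ GoodC c U v then 1 else 0) : ℕ) : ℝ) = 0 := by
        refine sum_eq_zero fun v hv => ?_
        have : v ∈ U := by simpa using hv
        simp [this]
      rw [hz, zero_add]
      refine sum_congr (by ext; simp) fun v hv => ?_
      have : v ∉ U := by simpa using hv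
      by_cases hg : GoodC c U v <;> simp [hg, this]
    have e3 : ∑ U ∈ P, ∑ v ∈ Uᶜ, (if GoodC c U v then (1 : ℝ) else 0) +
        ∑ U ∈ P, ∑ v ∈ Uᶜ, (if GoodC c U v then (0 : ℝ) else 1) = ∑ U ∈ P, ∑ v ∈ Uᶜ, (1 : ℝ) := by
      rw [← sum_add_distrib]
      refine sum_congr rfl fun U _ => ?_
      rw [← sum_add_distrib]
      refine sum_congr rfl fun v _ => ?_
      split_ifs <;> simp
    linarith
  have hg2 : ∑ U ∈ P, ∑ v ∈ Uᶜ, (if GoodC c U v then (1 + μ) else 0) =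
      (1 + μ) * ∑ U ∈ P, ∑ v ∈ Uᶜ, (if GoodC c U v then (1 : ℝ) else 0) := by
    simp only [mul_sum, mul_ite, mul_one, mul_zero]
  rw [hg2] at hsum
  set Gd := ∑ U ∈ P, ∑ v ∈ Uᶜ, (if GoodC c U v then (1 : ℝ) else 0)
  set Yt := ∑ U ∈ P, ∑ v ∈ Uᶜ, ((∑ W ∈ U.powerset with RbW c W, (YY c v W : ℝ)) / IC c U)
  have hmN' : 2 * (m : ℝ) ≤ N := by exact_mod_cast hmN
  have hGd : C * (N / 4) ≤ Gd := by nlinarith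
  have hGd2 : C * ((N - m) / 2) ≤ Gd := by nlinarith
  have hfin : Real.exp (-μ) * ((1 + μ) * Gd - 2 * Yt) ≤ C * (N - m) / (m + 1) * (2 * n) :=
    hsum.trans h1
  have hexp : Real.exp (-μ) * Real.exp μ = 1 := by rw [← Real.exp_add]; simp
  have hep := Real.exp_pos μ
  have hfin2 : (1 + μ) * Gd - 2 * Yt ≤ C * ((N - m) / 2) := by
    have := mul_le_mul_of_nonneg_left hfin hep.le
    rw [← mul_assoc, mul_comm (Real.exp μ), hexp, one_mul] at this
    refine this.trans ?_
    have e : Real.exp μ * (C * (N - m) / (m + 1) * (2 * n)) =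
      (C * ((N - m) / 2)) * ((Real.exp μ * (4 * n)) / (m + 1)) := by field_simp; ring
    rw [e]
    have hle : (Real.exp μ * (4 * n)) / (m + 1) ≤ 1 := by
      rw [div_le_one (by positivity)]; linarith
    have hnn : 0 ≤ C * (((N : ℝ) - m) / 2) := by
      have : (0 : ℝ) ≤ m := by positivity
      apply mul_nonneg hCpos.le; linarith
    nlinarith
  have : μ * (C * (N / 4)) ≤ 2 * (C * n ^ 3) := by nlinarith
  have h9 : μ * N ≤ 8 * n ^ 3 := by
    have : C * (μ * N) ≤ C * (8 * n ^ 3) := by linarith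
    exact le_of_mul_le_mul_left this hCpos
  linarith

lemma propK_of_proper {V : Type*} {c : Sym2 V → ℕ}
    (h : IsProperEdgeColoring (⊤ : SimpleGraph V) c) : PropK c := by
  intro z w w' h1 h2 h3
  by_contra hne
  refine h s(z, w) ?_ s(z, w') ?_ ?_ ⟨z, by simp, by simp⟩ h3
  · simpa using h1
  · simpa using h2
  · intro he
    rw [Sym2.eq_iff] at he
    rcases he with he | he
    · exact hne he.2
    · exact h2 he.1

lemma copy_of_RbW {V : Type*} {c : Sym2 V → ℕ} (hc : PropK c) (n : ℕ) {W : Finset V}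
    (hW : RbW c W) (hn : n ≤ #W) :
    HasRainbowCopy (⊤ : SimpleGraph V) (⊤ : SimpleGraph (Fin n)) c := by
  classical
  obtain ⟨f⟩ : Nonempty (Fin n ↪ W) := by
    apply Function.Embedding.nonempty_of_card_le
    simpa using hn
  let g : Fin n → V := fun i => (f i : V)
  have hg : Function.Injective g := Subtype.val_injective.comp f.injective
  have hgW : ∀ i, g i ∈ W := fun i => (f i).2
  refine ⟨⟨g, fun {a b} hab => ?_⟩, hg, ?_⟩
  · simp only [SimpleGraph.top_adj] at hab ⊢
    exact fun h => hab (hg h)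
  · intro e₁
    refine Sym2.ind (fun a b => ?_) e₁
    intro hab e₂
    refine Sym2.ind (fun x y => ?_) e₂
    intro hxy hcc
    have hab' : a ≠ b := by simpa using hab
    have hxy' : x ≠ y := by simpa using hxy
    change c s(g a, g b) = c s(g x, g y) at hcc
    have hab2 := hg.ne hab'
    have hxy2 := hg.ne hxy'
    by_cases h1 : a = x
    · subst h1
      rw [hg (hc _ _ _ hab2 hxy2 hcc)]
    by_cases h2 : a = y
    · subst h2
      rw [Sym2.eq_swap (a := g x)] at hcc
      rw [hg (hc _ _ _ hab2 hxy2.symm hcc), Sym2.eq_swap]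
    by_cases h3 : b = x
    · subst h3
      rw [Sym2.eq_swap (a := g a)] at hcc
      rw [hg (hc _ _ _ hab2.symm hxy2 hcc), Sym2.eq_swap]
    by_cases h4 : b = y
    · subst h4
      rw [Sym2.eq_swap (a := g a), Sym2.eq_swap (a := g x)] at hcc
      rw [hg (hc _ _ _ hab2.symm hxy2.symm hcc)]
    exact absurd ⟨hab2, hg.ne h1, hg.ne h2, hg.ne h3, hg.ne h4, hxy2, hcc⟩
      (hW _ (hgW a) _ (hgW b) _ (hgW x) _ (hgW y))

lemma upper_params : ∃ n0 : ℕ, 2 ≤ n0 ∧ ∀ n : ℕ, n0 ≤ n →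
    ∃ N : ℕ, ArrowsTo (⊤ : SimpleGraph (Fin N)) (⊤ : SimpleGraph (Fin n)) ∧
      (N : ℝ) ≤ 257 * (n : ℝ) ^ 3 / Real.log n := by
  have h1 : ∀ᶠ n : ℕ in Filter.atTop, Real.log n ≤ (n : ℝ) ^ (1 / 32 : ℝ) := by
    have := (isLittleO_log_rpow_atTop (by norm_num : (0 : ℝ) < 1 / 32)).bound (one_pos)
    have := tendsto_natCast_atTop_atTop (R := ℝ) |>.eventually this
    filter_upwards [this, Filter.eventually_ge_atTop 1] with n hn hn1
    have hp : (0 : ℝ) ≤ (n : ℝ) ^ (1 / 32 : ℝ) := by positivity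
    rw [one_mul, Real.norm_eq_abs, Real.norm_eq_abs, abs_of_nonneg hp] at hn
    exact (le_abs_self _).trans hn
  have h2 : ∀ᶠ n : ℕ in Filter.atTop, (100 : ℝ) ≤ (n : ℝ) ^ (1 / 32 : ℝ) :=
    ((tendsto_rpow_atTop (by norm_num : (0 : ℝ) < 1 / 32)).comp
      (tendsto_natCast_atTop_atTop (R := ℝ))).eventually_ge_atTop 100
  obtain ⟨n0, hn0⟩ := Filter.eventually_atTop.1 (h1.and h2)
  refine ⟨max 2 n0, le_max_left _ _, fun n hn => ?_⟩
  obtain ⟨hL, ht⟩ := hn0 n (le_trans (le_max_right _ _) hn)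
  have hn2 : 2 ≤ n := le_trans (le_max_left _ _) hn
  have hnR : (2 : ℝ) ≤ n := by exact_mod_cast hn2
  set t : ℝ := (n : ℝ) ^ (1 / 32 : ℝ) with htdef
  set L := Real.log n with hLdef
  have hL0 : 0 < L := Real.log_pos (by linarith)
  have hnt : (n : ℝ) = t ^ 32 := by
    rw [htdef, ← Real.rpow_natCast, ← Real.rpow_mul (by linarith)]
    norm_num
  have hexp : Real.exp (L / 32) = t := by
    rw [htdef, Real.rpow_def_of_pos (by linarith), ← hLdef]
    congr 1; ring
  have ht0 : 0 < t := by linarith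
  have ht1 : 1 ≤ t := by linarith
  set N := ⌊256 * (n : ℝ) ^ 3 / L⌋₊ + 1 with hNdef
  set m := ⌈4 * t ^ 33⌉₊ with hmdef
  have hNlow : 256 * (n : ℝ) ^ 3 / L < N := by
    rw [hNdef]; push_cast; exact Nat.lt_floor_add_one _
  have hNup : (N : ℝ) ≤ 256 * (n : ℝ) ^ 3 / L + 1 := by
    rw [hNdef]; push_cast
    have := Nat.floor_le (by positivity : 0 ≤ 256 * (n : ℝ) ^ 3 / L)
    linarith
  have hmlow : 4 * t ^ 33 ≤ m := Nat.le_ceil _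
  have ht33 : 1 ≤ t ^ 33 := one_le_pow₀ ht1
  have hmup : (m : ℝ) ≤ 5 * t ^ 33 := by
    have := (Nat.ceil_lt_add_one (by positivity : 0 ≤ 4 * t ^ 33)).le
    linarith
  have hN95 : 256 * t ^ 95 ≤ N := by
    refine le_trans ?_ hNlow.le
    rw [le_div_iff₀ hL0, hnt]
    calc 256 * t ^ 95 * L ≤ 256 * t ^ 95 * t := by gcongr
      _ = 256 * (t ^ 32) ^ 3 := by ring
  have key : 1000 * m ^ 5 ≤ N ^ 2 := by
    have : (1000 : ℝ) * m ^ 5 ≤ N ^ 2 := by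
      calc (1000 : ℝ) * m ^ 5 ≤ 1000 * (5 * t ^ 33) ^ 5 := by gcongr
        _ = 3125000 * t ^ 165 := by ring
        _ ≤ (65536 * 100 ^ 25) * t ^ 165 := by gcongr; norm_num
        _ ≤ (65536 * t ^ 25) * t ^ 165 := by gcongr
        _ = (256 * t ^ 95) ^ 2 := by ring
        _ ≤ N ^ 2 := by gcongr
    exact_mod_cast this
  have key8 : 100 * m ^ 8 ≤ N ^ 3 := by
    have : (100 : ℝ) * m ^ 8 ≤ N ^ 3 := by
      calc (100 : ℝ) * m ^ 8 ≤ 100 * (5 * t ^ 33) ^ 8 := by gcongr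
        _ = 39062500 * t ^ 264 := by ring
        _ ≤ (16777216 * 100 ^ 21) * t ^ 264 := by gcongr; norm_num
        _ ≤ (16777216 * t ^ 21) * t ^ 264 := by gcongr
        _ = (256 * t ^ 95) ^ 3 := by ring
        _ ≤ N ^ 3 := by gcongr
    exact_mod_cast this
  have hmN : 2 * m ≤ N := by
    have : (2 : ℝ) * m ≤ N := by
      calc (2 : ℝ) * m ≤ 2 * (5 * t ^ 33) := by gcongr
        _ = 10 * t ^ 33 := by ring
        _ ≤ 256 * t ^ 33 := by gcongr; norm_num
        _ ≤ 256 * t ^ 95 := by gcongr; norm_num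
        _ ≤ N := hN95
    exact_mod_cast this
  refine ⟨N, ?_, ?_⟩
  · intro c hc
    have hc' := propK_of_proper hc
    obtain ⟨W, hW, hcard⟩ := main_upper hc' m n N (Fintype.card_fin N) (by omega) key key8 hmN (L / 32)
      (by positivity) (by rw [hexp, hnt]; refine le_trans (le_of_eq ?_) hmlow; ring)
      (by rw [div_lt_iff₀ hL0] at hNlow; linarith)
    exact copy_of_RbW hc' n hW hcard.le
  · refine hNup.trans ?_
    have : 1 ≤ (n : ℝ) ^ 3 / L := by
      rw [le_div_iff₀ hL0, one_mul, hnt]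
      refine hL.trans ?_
      rw [← pow_mul]
      exact le_self_pow₀ ht1 (by norm_num)
    calc 256 * (n : ℝ) ^ 3 / L + 1 ≤ 256 * (n : ℝ) ^ 3 / L + (n : ℝ) ^ 3 / L := by gcongr
      _ = 257 * (n : ℝ) ^ 3 / L := by ring

lemma arrows_mono {V : Type*} {G : SimpleGraph V} {n n' : ℕ} (h : n ≤ n')
    (hG : ArrowsTo G (⊤ : SimpleGraph (Fin n'))) : ArrowsTo G (⊤ : SimpleGraph (Fin n)) := by
  intro c hc
  obtain ⟨f, hf, hr⟩ := hG c hc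
  let ι : (⊤ : SimpleGraph (Fin n)) →g (⊤ : SimpleGraph (Fin n')) :=
    ⟨Fin.castLE h, fun {a b} hab => by
      simp only [SimpleGraph.top_adj] at hab ⊢
      exact fun he => hab (Fin.castLE_injective h he)⟩
  have hι : Function.Injective ι := Fin.castLE_injective h
  refine ⟨f.comp ι, hf.comp hι, ?_⟩
  intro e₁ h1 e₂ h2 he
  have hm : ∀ e, Sym2.map (f.comp ι) e = Sym2.map f (Sym2.map ι e) := by
    intro e; rw [Sym2.map_map]; rfl
  rw [hm, hm] at he
  have := hr (Sym2.map ι e₁) (SimpleGraph.Hom.map_mem_edgeSet ι h1) (Sym2.map ι e₂)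
    (SimpleGraph.Hom.map_mem_edgeSet ι h2) he
  exact Sym2.map.injective hι this

lemma ARs_le_of_top {n N : ℕ} (h : ArrowsTo (⊤ : SimpleGraph (Fin N)) (⊤ : SimpleGraph (Fin n))) :
    ARs (⊤ : SimpleGraph (Fin n)) ≤ N ^ 2 := by
  have h1 : ARs (⊤ : SimpleGraph (Fin n)) ≤ (⊤ : SimpleGraph (Fin N)).edgeSet.ncard := by
    unfold ARs
    exact Nat.sInf_le ⟨N, ⊤, h, rfl⟩
  refine h1.trans ?_
  have hsub : (⊤ : SimpleGraph (Fin N)).edgeSet ⊆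
      (fun p : Fin N × Fin N => s(p.1, p.2)) '' (Set.univ : Set (Fin N × Fin N)) := by
    intro e _
    induction e using Sym2.ind with
    | _ a b => exact ⟨(a, b), trivial, rfl⟩
  refine (Set.ncard_le_ncard hsub (Set.toFinite _)).trans ((Set.ncard_image_le (Set.toFinite _)).trans ?_)
  rw [Set.ncard_univ]
  simp [sq]

lemma arrows_exists (n : ℕ) : ∃ N : ℕ, ArrowsTo (⊤ : SimpleGraph (Fin N)) (⊤ : SimpleGraph (Fin n)) := by
  obtain ⟨n0, _, h⟩ := upper_params
  obtain ⟨N, hN, _⟩ := h (max n0 n) (le_max_left _ _)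
  exact ⟨N, arrows_mono (le_max_right _ _) hN⟩

lemma upper_final : ∃ c₂ : ℝ, 0 < c₂ ∧ ∀ n : ℕ, 2 ≤ n →
    (ARs (⊤ : SimpleGraph (Fin n)) : ℝ) ≤ c₂ * (n : ℝ) ^ 6 / (Real.log n) ^ 2 := by
  obtain ⟨n0, hn02, h⟩ := upper_params
  obtain ⟨N0, hN0, _⟩ := h n0 le_rfl
  refine ⟨257 ^ 2 + N0 ^ 2, by positivity, fun n hn => ?_⟩
  have hnR : (2 : ℝ) ≤ n := by exact_mod_cast hn
  have hL0 : 0 < Real.log n := Real.log_pos (by linarith)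
  have hLn : Real.log n ≤ n := (Real.log_le_sub_one_of_pos (by linarith)).trans (by linarith)
  by_cases hc : n0 ≤ n
  · obtain ⟨N, hN, hNle⟩ := h n hc
    calc (ARs (⊤ : SimpleGraph (Fin n)) : ℝ) ≤ (N : ℝ) ^ 2 := by exact_mod_cast ARs_le_of_top hN
      _ ≤ (257 * (n : ℝ) ^ 3 / Real.log n) ^ 2 := by gcongr
      _ = 257 ^ 2 * (n : ℝ) ^ 6 / (Real.log n) ^ 2 := by ring
      _ ≤ _ := by gcongr; linarith [sq_nonneg (N0 : ℝ)]
  · have h1 := ARs_le_of_top (arrows_mono (by omega : n ≤ n0) hN0)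
    have h2 : 1 ≤ (n : ℝ) ^ 6 / (Real.log n) ^ 2 := by
      rw [le_div_iff₀ (by positivity), one_mul]
      calc (Real.log n) ^ 2 ≤ (n : ℝ) ^ 2 := by gcongr
        _ ≤ (n : ℝ) ^ 6 := pow_le_pow_right₀ (by linarith) (by norm_num)
    calc (ARs (⊤ : SimpleGraph (Fin n)) : ℝ) ≤ (N0 : ℝ) ^ 2 := by exact_mod_cast h1
      _ ≤ (257 ^ 2 + N0 ^ 2) * 1 := by linarith
      _ ≤ (257 ^ 2 + N0 ^ 2) * ((n : ℝ) ^ 6 / (Real.log n) ^ 2) := by gcongr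
      _ = _ := by ring

/-- list colorings that are proper on `s` for the conflict relation `R` -/
def PropOn {E Γ : Type*} (R : E → E → Prop) (s : Finset E) (χ : E → Γ) : Prop :=
  ∀ e ∈ s, ∀ e' ∈ s, R e e' → χ e ≠ χ e'

open Classical in
lemma greedy_step {E Γ : Type*} [Fintype E] (R : E → E → Prop)
    (hirr : ∀ e, ¬ R e e) (hsym : ∀ e e', R e e' → R e' e) (A : E → Finset Γ) (s : Finset E) (e : E) (he : e ∉ s)
    (d : ℕ) (hd : #{e' ∈ s | R e e'} ≤ d) :
    #{χ ∈ Fintype.piFinset A | PropOn R s χ} * #(A e) ≤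
      #{χ ∈ Fintype.piFinset A | PropOn R (insert e s) χ} * #(A e) +
        d * #{χ ∈ Fintype.piFinset A | PropOn R s χ} := by
  set P := {χ ∈ Fintype.piFinset A | PropOn R s χ} with hP
  set Q := {χ ∈ Fintype.piFinset A | PropOn R (insert e s) χ} with hQ
  have hbad : ∀ e' ∈ s, #{χ ∈ P | χ e = χ e'} * #(A e) ≤ #P := by
    intro e' he'
    have hne : e' ≠ e := fun h => he (h ▸ he')
    rw [← card_product]
    apply card_le_card_of_injOn (fun x => Function.update x.1 e x.2)
    · rintro ⟨χ, γ⟩ hx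
      simp only [coe_product, Set.mem_prod, mem_coe, mem_filter, hP, Fintype.mem_piFinset] at hx ⊢
      obtain ⟨⟨⟨h1, h2⟩, h3⟩, h4⟩ := hx
      refine ⟨fun a => ?_, fun a ha b hb hab => ?_⟩
      · by_cases h : a = e
        · subst h; simpa using h4
        · rw [Function.update_of_ne h]; exact h1 a
      · have ha' : a ≠ e := fun h => he (h ▸ ha)
        have hb' : b ≠ e := fun h => he (h ▸ hb)
        rw [Function.update_of_ne ha', Function.update_of_ne hb']
        exact h2 a ha b hb hab
    · rintro ⟨χ, γ⟩ hx ⟨χ', γ'⟩ hx' h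
      simp only [coe_product, Set.mem_prod, mem_coe, mem_filter] at hx hx'
      simp only at h
      have hg : γ = γ' := by simpa using congrFun h e
      have hout : ∀ a, a ≠ e → χ a = χ' a := by
        intro a ha
        have := congrFun h a
        rwa [Function.update_of_ne ha, Function.update_of_ne ha] at this
      have hE : χ e = χ' e := by
        rw [hx.1.2, hx'.1.2]; exact hout _ hne
      have hχ : χ = χ' := by
        funext a
        by_cases ha : a = e
        · rw [ha, hE]
        · exact hout a ha
      rw [hχ, hg]
  have hsub : P ⊆ Q ∪ ({e' ∈ s | R e e'}).biUnion (fun e' => {χ ∈ P | χ e = χ e'}) := by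
    intro χ hχ
    rw [mem_union]
    by_cases hq : χ ∈ Q
    · exact Or.inl hq
    · right
      by_contra hcon
      apply hq
      simp only [mem_biUnion, mem_filter, not_exists, not_and] at hcon
      have hχ' := mem_filter.1 hχ
      refine mem_filter.2 ⟨hχ'.1, ?_⟩
      intro a ha b hb hab
      rw [mem_insert] at ha hb
      rcases ha with rfl | ha <;> rcases hb with rfl | hb
      · exact absurd hab (hirr _)
      · exact hcon b ⟨hb, hab⟩ hχ
      · exact fun h => hcon a ⟨ha, hsym _ _ hab⟩ hχ h.symm
      · exact hχ'.2 a ha b hb hab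
  have hc := (card_le_card hsub).trans (card_union_le _ _)
  have hc2 : #(({e' ∈ s | R e e'}).biUnion (fun e' => {χ ∈ P | χ e = χ e'})) * #(A e) ≤ d * #P := by
    calc _ ≤ (∑ e' ∈ s with R e e', #{χ ∈ P | χ e = χ e'}) * #(A e) := by
          gcongr; exact card_biUnion_le
      _ = ∑ e' ∈ s with R e e', #{χ ∈ P | χ e = χ e'} * #(A e) := by rw [sum_mul]
      _ ≤ ∑ e' ∈ s with R e e', #P := sum_le_sum fun e' he' => hbad e' (mem_filter.1 he').1
      _ = #{e' ∈ s | R e e'} * #P := by rw [sum_const, smul_eq_mul]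
      _ ≤ _ := by gcongr
  calc #P * #(A e) ≤ (#Q + #(({e' ∈ s | R e e'}).biUnion (fun e' => {χ ∈ P | χ e = χ e'}))) * #(A e) := by
        gcongr
    _ ≤ _ := by rw [add_mul]; gcongr

lemma one_sub_ge_exp {x : ℝ} (h0 : 0 ≤ x) (h1 : x ≤ 1 / 2) : Real.exp (-(2 * x)) ≤ 1 - x := by
  have := exp_neg_le_aux (x := 2 * x) (by linarith) (by linarith)
  linarith

open Classical in
lemma greedy_lower {E Γ : Type*} [Fintype E] (R : E → E → Prop)
    (hirr : ∀ e, ¬ R e e) (hsym : ∀ e e', R e e' → R e' e) (A : E → Finset Γ) (S : Finset E)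
    (d : ℕ) (hd : ∀ e ∈ S, #{e' ∈ S | R e e'} ≤ d) (r : ℝ) (hr0 : 0 < r) (hr : ∀ e ∈ S, r ≤ #(A e))
    (hdr : 2 * (d : ℝ) ≤ r) (s : Finset E) (hs : s ⊆ S) :
    (∏ e, (#(A e) : ℝ)) * Real.exp (-(2 * d / r)) ^ #s ≤
      #{χ ∈ Fintype.piFinset A | PropOn R s χ} := by
  induction s using Finset.induction_on with
  | empty =>
    have : ({χ ∈ Fintype.piFinset A | PropOn R ∅ χ}) = Fintype.piFinset A := by
      apply filter_true_of_mem
      intro χ _ e he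
      simp at he
    rw [this, Fintype.card_piFinset]
    simp
  | insert e s he ih =>
    have heS : e ∈ S := hs (mem_insert_self _ _)
    have hsS : s ⊆ S := (subset_insert _ _).trans hs
    have ih' := ih hsS
    have hst := greedy_step R hirr hsym A s e he d
      ((card_le_card (filter_subset_filter _ hsS)).trans (hd e heS))
    set P := (#{χ ∈ Fintype.piFinset A | PropOn R s χ}) with hP
    set Q := (#{χ ∈ Fintype.piFinset A | PropOn R (insert e s) χ}) with hQ
    have hstR : (P : ℝ) * #(A e) ≤ Q * #(A e) + d * P := by exact_mod_cast hst
    have hrA := hr e heS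
    have hA0 : (0 : ℝ) < #(A e) := by linarith
    have h1 : Real.exp (-(2 * d / r)) ≤ 1 - d / r := by
      have := one_sub_ge_exp (x := (d : ℝ) / r) (by positivity) (by rw [div_le_iff₀ hr0]; linarith)
      rwa [show 2 * ((d : ℝ) / r) = 2 * d / r by ring] at this
    have h2 : (d : ℝ) / #(A e) ≤ d / r := by gcongr
    have h3 : (P : ℝ) * (1 - d / #(A e)) ≤ Q := by
      have : (P : ℝ) * (1 - d / #(A e)) * #(A e) ≤ Q * #(A e) := by
        rw [mul_assoc, sub_mul, div_mul_cancel₀ _ hA0.ne']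
        linarith
      exact le_of_mul_le_mul_right this hA0
    rw [card_insert_of_notMem he, pow_succ, ← mul_assoc]
    calc _ ≤ (P : ℝ) * Real.exp (-(2 * d / r)) := by gcongr
      _ ≤ P * (1 - d / #(A e)) := by gcongr; linarith
      _ ≤ Q := h3

set_option maxHeartbeats 1000000 in
open Classical in
lemma inj_upper {E : Type*} [Fintype E] {q : ℕ} (hq : 0 < q) (A : E → Finset (Fin q)) (S₁ S₂ : Finset E)
    (hdis : Disjoint S₁ S₂) (hA : ∀ e ∈ S₁ ∪ S₂, 3 * (q : ℝ) / 4 ≤ #(A e)) (hS₂ : #S₂ ≤ q) :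
    (#{χ ∈ Fintype.piFinset A | Set.InjOn χ (S₁ ∪ S₂ : Finset E)} : ℝ) ≤
      (∏ e, (#(A e) : ℝ)) * Real.exp (-(#S₂ / (4 * q))) ^ #S₁ := by
  have hqR : (0 : ℝ) < q := by exact_mod_cast hq
  let z : Fin q := ⟨0, hq⟩
  let A1 : E → Finset (Fin q) := fun e => if e ∈ S₁ then A e else {z}
  let A2 : (E → Fin q) → E → Finset (Fin q) := fun f e =>
    if e ∈ S₁ then {z} else if e ∈ S₂ then A e \ S₁.image f else A e
  let F := {f ∈ Fintype.piFinset A1 | Set.InjOn f S₁}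
  have hcard : #{χ ∈ Fintype.piFinset A | Set.InjOn χ (S₁ ∪ S₂ : Finset E)} ≤
      ∑ f ∈ F, #(Fintype.piFinset (A2 f)) := by
    rw [← card_sigma]
    apply card_le_card_of_injOn (fun χ => ⟨S₁.piecewise χ (fun _ => z), S₁.piecewise (fun _ => z) χ⟩)
    · intro χ hχ
      simp only [coe_filter, Set.mem_ofPred_eq, Fintype.mem_piFinset] at hχ
      obtain ⟨h1, h2⟩ := hχ
      simp only [mem_coe, mem_sigma, F, mem_filter, Fintype.mem_piFinset]
      refine ⟨⟨fun a => ?_, ?_⟩, fun a => ?_⟩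
      · by_cases h : a ∈ S₁ <;> simp [A1, h, h1 a]
      · intro a ha b hb hab
        simp only [mem_coe] at ha hb
        simp only [piecewise_eq_of_mem _ _ _ ha, piecewise_eq_of_mem _ _ _ hb] at hab
        exact h2 (by simp [ha]) (by simp [hb]) hab
      · by_cases h : a ∈ S₁
        · simp [A2, h]
        · by_cases h' : a ∈ S₂
          · simp only [A2, h, h', if_true, if_false, piecewise_eq_of_notMem _ _ _ h, mem_sdiff, mem_image, not_exists, not_and]
            refine ⟨h1 a, fun b hb hab => ?_⟩
            rw [piecewise_eq_of_mem _ _ _ hb] at hab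
            exact h (h2 (by simp [hb]) (by simp [h']) hab ▸ hb)
          · simp [A2, h, h', h1 a]
    · intro χ _ χ' _ h
      simp only [Sigma.mk.injEq, heq_eq_eq] at h
      funext a
      by_cases ha : a ∈ S₁
      · have := congrFun h.1 a
        simpa [ha] using this
      · have := congrFun h.2 a
        simpa [ha] using this
  -- weights
  let dd : Fin q → ℕ := fun γ => #{b ∈ S₂ | γ ∈ A b}
  let w : Fin q → ℝ := fun γ => Real.exp (-(dd γ / q))
  let C1 : ℝ := ∏ e, (if e ∈ S₁ then (1 : ℝ) else #(A e))
  have hterm : ∀ f ∈ F, (#(Fintype.piFinset (A2 f)) : ℝ) ≤ C1 * ∏ e, (if e ∈ S₁ then w (f e) else 1) := by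
    intro f hf
    have hinj := (mem_filter.1 hf).2
    rw [Fintype.card_piFinset, Nat.cast_prod]
    have hb : ∀ e ∈ univ, (#(A2 f e) : ℝ) ≤ (if e ∈ S₁ then (1 : ℝ) else #(A e)) *
        (if e ∈ S₂ then Real.exp (-((#{a ∈ S₁ | f a ∈ A e} : ℝ) / q)) else 1) := by
      intro e _
      by_cases h : e ∈ S₁
      · have h' : e ∉ S₂ := fun h' => disjoint_left.1 hdis h h'
        simp [A2, h, h']
      · by_cases h' : e ∈ S₂
        · simp only [A2, h, h', if_true, if_false]
          have hAe : 3 * (q : ℝ) / 4 ≤ #(A e) := hA e (by simp [h'])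
          have hA0 : (0 : ℝ) < #(A e) := by linarith
          have hAq : (#(A e) : ℝ) ≤ q := by
            have := card_le_univ (A e)
            rw [Fintype.card_fin] at this
            exact_mod_cast this
          have e1 : #(S₁.image f ∩ A e) = #{a ∈ S₁ | f a ∈ A e} := by
            rw [← card_image_of_injOn (s := {a ∈ S₁ | f a ∈ A e}) (f := f)
              (hinj.mono (by intro a ha; exact (mem_filter.1 ha).1))]
            congr 1
            ext γ
            simp only [mem_inter, mem_image, mem_filter]
            constructor
            · rintro ⟨⟨a, ha, rfl⟩, h2⟩; exact ⟨a, ⟨ha, h2⟩, rfl⟩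
            · rintro ⟨a, ⟨ha, h2⟩, rfl⟩; exact ⟨⟨a, ha, rfl⟩, h2⟩
          have e2 := card_sdiff_add_card_inter (A e) (S₁.image f)
          rw [inter_comm, e1] at e2
          set u := #{a ∈ S₁ | f a ∈ A e}
          have e3 : (#(A e \ S₁.image f) : ℝ) = #(A e) - u := by
            rw [← e2]; push_cast; ring
          rw [e3]
          have e4 : 1 - (u : ℝ) / #(A e) ≤ Real.exp (-((u : ℝ) / #(A e))) := by
            have := Real.add_one_le_exp (-((u : ℝ) / #(A e)))
            linarith
          have e5 : Real.exp (-((u : ℝ) / #(A e))) ≤ Real.exp (-((u : ℝ) / q)) := by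
            apply Real.exp_le_exp.2
            apply neg_le_neg
            gcongr
          calc (#(A e) : ℝ) - u = #(A e) * (1 - (u : ℝ) / #(A e)) := by field_simp
            _ ≤ _ := by gcongr; exact e4.trans e5
        · simp [A2, h, h']
    refine (prod_le_prod (fun e _ => by positivity) hb).trans (le_of_eq ?_)
    rw [prod_mul_distrib]
    congr 1
    rw [← prod_filter, ← prod_filter, ← Real.exp_sum, ]
    have hf1 : univ.filter (fun a => a ∈ S₁) = S₁ := by ext; simp
    have hf2 : univ.filter (fun a => a ∈ S₂) = S₂ := by ext; simp
    rw [hf1, hf2]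
    simp only [w]
    rw [← Real.exp_sum]
    congr 1
    rw [sum_neg_distrib, sum_neg_distrib, ← sum_div, ← sum_div]
    congr 2
    simp only [dd, card_filter]
    push_cast
    exact sum_comm
  have hfac : ∀ e ∈ S₁, ∑ γ ∈ A e, w γ ≤ #(A e) * Real.exp (-(#S₂ / (4 * q))) := by
    intro e he
    have hAe : 3 * (q : ℝ) / 4 ≤ #(A e) := hA e (by simp [he])
    have hAq : (#(A e) : ℝ) ≤ q := by
      have := card_le_univ (A e)
      rw [Fintype.card_fin] at this
      exact_mod_cast this
    have h1 : ∀ γ ∈ A e, w γ ≤ 1 - (dd γ : ℝ) / q / 2 := by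
      intro γ _
      apply exp_neg_le_aux (by positivity)
      rw [div_le_iff₀ hqR, one_mul]
      exact_mod_cast (card_filter_le _ _).trans hS₂
    have h2 : (#S₂ : ℝ) * (q / 2) ≤ ∑ γ ∈ A e, (dd γ : ℝ) := by
      have : ∑ γ ∈ A e, (dd γ : ℝ) = ∑ b ∈ S₂, (#(A e ∩ A b) : ℝ) := by
        have h : ∑ γ ∈ A e, dd γ = ∑ b ∈ S₂, #{γ ∈ A e | γ ∈ A b} := by
          simp only [dd, card_filter]
          exact sum_comm
        simp only [filter_mem_eq_inter] at h
        exact_mod_cast h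
      rw [this, ← nsmul_eq_mul]
      apply card_nsmul_le_sum
      intro b hb
      have hAb : 3 * (q : ℝ) / 4 ≤ #(A b) := hA b (by simp [hb])
      have hu := card_union_add_card_inter (A e) (A b)
      have hu2 := card_le_univ (A e ∪ A b)
      rw [Fintype.card_fin] at hu2
      have hu' : (#(A e ∪ A b) : ℝ) + #(A e ∩ A b) = #(A e) + #(A b) := by exact_mod_cast hu
      have hu2' : (#(A e ∪ A b) : ℝ) ≤ q := by exact_mod_cast hu2
      linarith
    calc ∑ γ ∈ A e, w γ ≤ ∑ γ ∈ A e, (1 - (dd γ : ℝ) / q / 2) := sum_le_sum h1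
      _ = #(A e) - (∑ γ ∈ A e, (dd γ : ℝ)) / q / 2 := by
          rw [sum_sub_distrib, ← sum_div, ← sum_div]; simp
      _ ≤ #(A e) - ((#S₂ : ℝ) * (q / 2)) / q / 2 := by gcongr
      _ = #(A e) - q * (#S₂ / (4 * q)) := by field_simp; ring
      _ ≤ #(A e) - #(A e) * (#S₂ / (4 * q)) := by gcongr
      _ = #(A e) * (1 - #S₂ / (4 * q)) := by ring
      _ ≤ _ := by
          gcongr
          have := Real.add_one_le_exp (-((#S₂ : ℝ) / (4 * q)))
          linarith
  have hw0 : ∀ γ, 0 ≤ w γ := fun γ => (Real.exp_pos _).le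
  have hC1 : 0 ≤ C1 := prod_nonneg fun e _ => by positivity
  calc (#{χ ∈ Fintype.piFinset A | Set.InjOn χ (S₁ ∪ S₂ : Finset E)} : ℝ)
      ≤ ∑ f ∈ F, (#(Fintype.piFinset (A2 f)) : ℝ) := by exact_mod_cast hcard
    _ ≤ ∑ f ∈ F, C1 * ∏ e, (if e ∈ S₁ then w (f e) else 1) := sum_le_sum hterm
    _ ≤ ∑ f ∈ Fintype.piFinset A1, C1 * ∏ e, (if e ∈ S₁ then w (f e) else 1) := by
        apply sum_le_sum_of_subset_of_nonneg (filter_subset _ _)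
        intro f _ _
        refine mul_nonneg hC1 (prod_nonneg fun e _ => ?_)
        split_ifs
        · exact hw0 _
        · exact zero_le_one
    _ = C1 * ∏ e, ∑ γ ∈ A1 e, (if e ∈ S₁ then w γ else 1) := by
        rw [← mul_sum, prod_univ_sum]
    _ ≤ C1 * ∏ e, (if e ∈ S₁ then #(A e) * Real.exp (-(#S₂ / (4 * q))) else 1) := by
        refine mul_le_mul_of_nonneg_left (prod_le_prod (fun e _ => ?_) fun e _ => ?_) hC1
        · refine sum_nonneg fun γ _ => ?_
          split_ifs
          · exact hw0 _
          · exact zero_le_one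
        · by_cases he : e ∈ S₁
          · simp only [A1, he, if_true]; exact hfac e he
          · simp [A1, he]
    _ = ∏ e, ((#(A e) : ℝ) * (if e ∈ S₁ then Real.exp (-(#S₂ / (4 * q))) else 1)) := by
        rw [← prod_mul_distrib]
        refine prod_congr rfl fun e _ => ?_
        split_ifs <;> ring
    _ = _ := by
        rw [prod_mul_distrib, ← prod_filter]
        have hf1 : univ.filter (fun a => a ∈ S₁) = S₁ := by ext; simp
        rw [hf1, prod_const]

open Classical in
lemma fiber_ratio {E : Type*} [Fintype E] {q : ℕ} (hq : 0 < q) (R : E → E → Prop)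
    (hirr : ∀ e, ¬ R e e) (hsym : ∀ e e', R e e' → R e' e) (D : ℕ) (hD : ∀ e, #{e' | R e e'} ≤ D)
    (hDq : 4 * D ≤ q) (S : Finset E) (h d : ℕ) (hS : 2 * h ≤ #S) (hhq : h ≤ q)
    (hd : ∀ e ∈ S, #{e' ∈ S | R e e'} ≤ d) (hdq : 8 * d ≤ 3 * q) (ψ : E → Fin q) :
    (#{φ : E → Fin q | (PropOn R univ φ ∧ Set.InjOn φ S) ∧ S.piecewise (fun _ => ⟨0, hq⟩) φ = ψ} : ℝ) ≤
      Real.exp (-((h : ℝ) ^ 2 / (4 * q)) + 8 * d * #S / (3 * q)) *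
      #{φ : E → Fin q | PropOn R univ φ ∧ S.piecewise (fun _ => ⟨0, hq⟩) φ = ψ} := by
  have hqR : (0 : ℝ) < q := by exact_mod_cast hq
  by_cases hne : ({φ : E → Fin q | (PropOn R univ φ ∧ Set.InjOn φ S) ∧
      S.piecewise (fun _ => ⟨0, hq⟩) φ = ψ} : Finset (E → Fin q)).Nonempty
  swap
  · rw [not_nonempty_iff_eq_empty] at hne
    rw [hne]; simp only [card_empty, Nat.cast_zero]; positivity
  obtain ⟨φ₀, hφ₀⟩ := hne
  obtain ⟨⟨hp₀, -⟩, hψ⟩ := (mem_filter.1 hφ₀).2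
  have hψout : ∀ e, e ∉ S → ψ e = φ₀ e := by
    intro e he; rw [← hψ, piecewise_eq_of_notMem _ _ _ he]
  let A : E → Finset (Fin q) := fun e =>
    if e ∈ S then univ \ ({e' | R e e' ∧ e' ∉ S} : Finset E).image ψ else {ψ e}
  have hA : ∀ e ∈ S, 3 * (q : ℝ) / 4 ≤ #(A e) := by
    intro e he
    simp only [A, he, if_true]
    have h1 : #(({e' | R e e' ∧ e' ∉ S} : Finset E).image ψ) ≤ D :=
      card_image_le.trans ((card_le_card (by intro x hx; simp only [mem_filter] at hx ⊢; exact ⟨hx.1, hx.2.1⟩)).trans (hD e))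
    have h2 := le_card_sdiff (({e' | R e e' ∧ e' ∉ S} : Finset E).image ψ) (univ : Finset (Fin q))
    rw [card_univ, Fintype.card_fin] at h2
    have h3 : 3 * q ≤ 4 * #(univ \ ({e' | R e e' ∧ e' ∉ S} : Finset E).image ψ) := by omega
    have h3' : (3 : ℝ) * q ≤ 4 * #(univ \ ({e' | R e e' ∧ e' ∉ S} : Finset E).image ψ) := by exact_mod_cast h3
    linarith
  obtain ⟨S₁, hS₁, hc₁⟩ := exists_subset_card_eq (s := S) (n := h) (by omega)
  obtain ⟨S₂, hS₂, hc₂⟩ := exists_subset_card_eq (s := S \ S₁) (n := h)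
    (by rw [card_sdiff_of_subset hS₁]; omega)
  have hdis : Disjoint S₁ S₂ := disjoint_sdiff.mono_right hS₂
  have hS₂' : S₂ ⊆ S := hS₂.trans sdiff_subset
  have hun : S₁ ∪ S₂ ⊆ S := union_subset hS₁ hS₂'
  have up := inj_upper hq A S₁ S₂ hdis (fun e he => hA e (hun he)) (by omega)
  have low := greedy_lower R hirr hsym A S d hd (3 * (q : ℝ) / 4) (by positivity) hA
    (by have : (8 : ℝ) * d ≤ 3 * q := by exact_mod_cast hdq
        linarith) S subset_rfl
  rw [hc₁, hc₂, ← Real.exp_nat_mul] at up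
  rw [← Real.exp_nat_mul] at low
  have c1 : #{φ : E → Fin q | (PropOn R univ φ ∧ Set.InjOn φ S) ∧ S.piecewise (fun _ => ⟨0, hq⟩) φ = ψ} ≤
      #{χ ∈ Fintype.piFinset A | Set.InjOn χ (S₁ ∪ S₂ : Finset E)} := by
    apply card_le_card
    intro φ hφ
    obtain ⟨⟨hp, hi⟩, hpsi⟩ := (mem_filter.1 hφ).2
    have hout : ∀ e, e ∉ S → ψ e = φ e := by
      intro e he; rw [← hpsi, piecewise_eq_of_notMem _ _ _ he]
    refine mem_filter.2 ⟨Fintype.mem_piFinset.2 fun e => ?_, hi.mono (by exact_mod_cast hun)⟩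
    by_cases he : e ∈ S
    · simp only [A, he, if_true, mem_sdiff, mem_univ, true_and, mem_image, mem_filter, not_exists, not_and]
      rintro e' ⟨h1, h2⟩ h3
      rw [hout e' h2] at h3
      exact hp e (mem_univ _) e' (mem_univ _) h1 h3.symm
    · simp [A, he, hout e he]
  have c2 : #{χ ∈ Fintype.piFinset A | PropOn R S χ} ≤
      #{φ : E → Fin q | PropOn R univ φ ∧ S.piecewise (fun _ => ⟨0, hq⟩) φ = ψ} := by
    apply card_le_card
    intro χ hχ
    obtain ⟨hχ1, hχ2⟩ := mem_filter.1 hχ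
    rw [Fintype.mem_piFinset] at hχ1
    have hout : ∀ e, e ∉ S → χ e = ψ e := by
      intro e he
      have := hχ1 e
      simpa [A, he] using this
    have hin : ∀ e ∈ S, ∀ e', R e e' → e' ∉ S → χ e ≠ ψ e' := by
      intro e he e' hr he' heq
      have := hχ1 e
      simp only [A, he, if_true, mem_sdiff, mem_univ, true_and, mem_image, mem_filter, not_exists, not_and] at this
      exact this e' ⟨hr, he'⟩ heq.symm
    refine mem_filter.2 ⟨mem_univ _, ?_, ?_⟩
    · intro e _ e' _ hr
      by_cases he : e ∈ S <;> by_cases he' : e' ∈ S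
      · exact hχ2 e he e' he' hr
      · rw [hout e' he']; exact hin e he e' hr he'
      · rw [hout e he]; exact (hin e' he' e (hsym _ _ hr) he).symm
      · rw [hout e he, hout e' he', hψout e he, hψout e' he']
        exact hp₀ e (mem_univ _) e' (mem_univ _) hr
    · funext e
      by_cases he : e ∈ S
      · rw [piecewise_eq_of_mem _ _ _ he, ← hψ, piecewise_eq_of_mem _ _ _ he]
      · rw [piecewise_eq_of_notMem _ _ _ he, hout e he]
  have c1R : (#{φ : E → Fin q | (PropOn R univ φ ∧ Set.InjOn φ S) ∧ S.piecewise (fun _ => ⟨0, hq⟩) φ = ψ} : ℝ) ≤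
      #{χ ∈ Fintype.piFinset A | Set.InjOn χ (S₁ ∪ S₂ : Finset E)} := by exact_mod_cast c1
  have c2R : (#{χ ∈ Fintype.piFinset A | PropOn R S χ} : ℝ) ≤
      #{φ : E → Fin q | PropOn R univ φ ∧ S.piecewise (fun _ => ⟨0, hq⟩) φ = ψ} := by exact_mod_cast c2
  refine c1R.trans (up.trans ?_)
  refine le_trans (le_of_eq ?_) (mul_le_mul_of_nonneg_left (low.trans c2R) (Real.exp_pos _).le)
  rw [mul_left_comm, ← Real.exp_add]
  congr 2
  field_simp
  ring

open Classical in
lemma total_ratio {E : Type*} [Fintype E] {q : ℕ} (hq : 0 < q) (R : E → E → Prop)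
    (hirr : ∀ e, ¬ R e e) (hsym : ∀ e e', R e e' → R e' e) (D : ℕ) (hD : ∀ e, #{e' | R e e'} ≤ D)
    (hDq : 4 * D ≤ q) (S : Finset E) (h d : ℕ) (hS : 2 * h ≤ #S) (hhq : h ≤ q)
    (hd : ∀ e ∈ S, #{e' ∈ S | R e e'} ≤ d) (hdq : 8 * d ≤ 3 * q) :
    (#{φ : E → Fin q | PropOn R univ φ ∧ Set.InjOn φ S} : ℝ) ≤
      Real.exp (-((h : ℝ) ^ 2 / (4 * q)) + 8 * d * #S / (3 * q)) *
      #{φ : E → Fin q | PropOn R univ φ} := by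
  have f := fun (X : Finset (E → Fin q)) => card_eq_sum_card_fiberwise (s := X) (t := univ)
    (f := fun φ : E → Fin q => S.piecewise (fun _ => (⟨0, hq⟩ : Fin q)) φ) (by intro x _; simp)
  rw [f, f ({φ : E → Fin q | PropOn R univ φ})]
  push_cast
  rw [mul_sum]
  refine sum_le_sum fun ψ _ => ?_
  rw [filter_filter, filter_filter]
  exact fiber_ratio hq R hirr hsym D hD hDq S h d hS hhq hd hdq ψ

open Classical in
lemma exists_coloring {E : Type*} [Fintype E] {q : ℕ} (hq : 0 < q) (R : E → E → Prop)
    (hirr : ∀ e, ¬ R e e) (hsym : ∀ e e', R e e' → R e' e) (D : ℕ) (hD : ∀ e, #{e' | R e e'} ≤ D)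
    (hDq : 4 * D ≤ q) (𝓢 : Finset (Finset E)) (h d M : ℕ) (hM : ∀ S ∈ 𝓢, #S = M) (hS : 2 * h ≤ M) (hhq : h ≤ q)
    (hd : ∀ S ∈ 𝓢, ∀ e ∈ S, #{e' ∈ S | R e e'} ≤ d) (hdq : 8 * d ≤ 3 * q)
    (hlt : #𝓢 * Real.exp (-((h : ℝ) ^ 2 / (4 * q)) + 8 * d * M / (3 * q)) < 1) :
    ∃ φ : E → Fin q, PropOn R univ φ ∧ ∀ S ∈ 𝓢, ¬ Set.InjOn φ S := by
  by_contra hcon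
  push Not at hcon
  have hqR : (0 : ℝ) < q := by exact_mod_cast hq
  have hpos : (0 : ℝ) < #{φ : E → Fin q | PropOn R univ φ} := by
    have low := greedy_lower R hirr hsym (fun _ => (univ : Finset (Fin q))) univ D (fun e _ => hD e) (q : ℝ)
      hqR (by simp) (by have : (4 : ℝ) * D ≤ q := by exact_mod_cast hDq
                        have : (0 : ℝ) ≤ D := by positivity
                        linarith) univ subset_rfl
    rw [Fintype.piFinset_univ] at low
    refine lt_of_lt_of_le ?_ low
    simp only [card_univ, Fintype.card_fin]
    positivity
  have hsub : ({φ : E → Fin q | PropOn R univ φ} : Finset (E → Fin q)) ⊆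
      𝓢.biUnion (fun S => {φ : E → Fin q | PropOn R univ φ ∧ Set.InjOn φ S}) := by
    intro φ hφ
    have hp := (mem_filter.1 hφ).2
    obtain ⟨S, hS, hi⟩ := hcon φ hp
    exact mem_biUnion.2 ⟨S, hS, mem_filter.2 ⟨mem_univ _, hp, hi⟩⟩
  have h1 := (card_le_card hsub).trans card_biUnion_le
  have h1R : (#{φ : E → Fin q | PropOn R univ φ} : ℝ) ≤
      ∑ S ∈ 𝓢, (#{φ : E → Fin q | PropOn R univ φ ∧ Set.InjOn φ S} : ℝ) := by exact_mod_cast h1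
  have h2 : ∑ S ∈ 𝓢, (#{φ : E → Fin q | PropOn R univ φ ∧ Set.InjOn φ S} : ℝ) ≤
      ∑ S ∈ 𝓢, Real.exp (-((h : ℝ) ^ 2 / (4 * q)) + 8 * d * M / (3 * q)) *
        #{φ : E → Fin q | PropOn R univ φ} := by
    refine sum_le_sum fun S hSS => ?_
    have := total_ratio hq R hirr hsym D hD hDq S h d (by rw [hM S hSS]; exact hS) hhq (hd S hSS) hdq
    rwa [hM S hSS] at this
  rw [sum_const, nsmul_eq_mul, ← mul_assoc] at h2
  nlinarith

/-- pairs inside `K` -/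
def pairsOf {V : Type*} [DecidableEq V] (K : Finset V) : Finset (Sym2 V) :=
  K.offDiag.image (fun p => s(p.1, p.2))

lemma mem_pairsOf {V : Type*} [DecidableEq V] {K : Finset V} {a b : V} :
    s(a, b) ∈ pairsOf K ↔ a ∈ K ∧ b ∈ K ∧ a ≠ b := by
  unfold pairsOf
  simp only [mem_image, mem_offDiag, Prod.exists, Sym2.eq_iff]
  constructor
  · rintro ⟨x, y, ⟨h1, h2, h3⟩, ⟨rfl, rfl⟩ | ⟨rfl, rfl⟩⟩
    · exact ⟨h1, h2, h3⟩
    · exact ⟨h2, h1, h3.symm⟩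
  · rintro h
    exact ⟨a, b, h, Or.inl ⟨rfl, rfl⟩⟩

lemma card_pairsOf {V : Type*} [DecidableEq V] (K : Finset V) : #(pairsOf K) = (#K).choose 2 := by
  rw [← Sym2.card_image_offDiag]
  rfl

open Classical in
theorem graph_lower {V : Type*} [Fintype V] (G : SimpleGraph V) (n k q Δ h : ℕ) (hkn : 2 * k ≤ n) (hk : 2 ≤ k)
    (hq : 0 < q) (hΔq : 8 * Δ ≤ q) (hΔ : 0 < Δ) (he : 2 * G.edgeSet.ncard ≤ Δ ^ 2)
    (hh : 2 * h ≤ k.choose 2) (hhq : h ≤ q) (hkq : 16 * k ≤ 3 * q)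
    (hlt : ((Δ : ℝ) ^ 2) ^ k *
      Real.exp (-((h : ℝ) ^ 2 / (4 * q)) + 8 * (2 * k : ℕ) * (k.choose 2 : ℕ) / (3 * q)) < 1) :
    ¬ ArrowsTo G (⊤ : SimpleGraph (Fin n)) := by
  have hsumdeg : ∑ v, G.degree v ≤ Δ ^ 2 := by
    rw [G.sum_degrees_eq_twice_card_edges]
    rwa [← SimpleGraph.coe_edgeFinset, Set.ncard_coe_finset] at he
  set B : Finset V := {v | Δ < G.degree v} with hB
  have hBcard : #B ≤ Δ := by
    have h1 : #B * Δ ≤ ∑ v ∈ B, G.degree v := by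
      rw [← smul_eq_mul]
      exact card_nsmul_le_sum _ _ _ fun v hv => (mem_filter.1 hv).2.le
    have h2 : ∑ v ∈ B, G.degree v ≤ ∑ v, G.degree v := sum_le_sum_of_subset (subset_univ _)
    have h3 : #B * Δ ≤ Δ * Δ := by rw [← sq]; omega
    exact Nat.le_of_mul_le_mul_right h3 hΔ
  let E' : Set (Sym2 V) := {e | e ∈ G.edgeSet ∧ ((∀ v ∈ e, v ∈ B) ∨ (∀ v ∈ e, v ∉ B))}
  let R : Sym2 V → Sym2 V → Prop := fun e e' => e ∈ E' ∧ e' ∈ E' ∧ e ≠ e' ∧ ∃ v, v ∈ e ∧ v ∈ e'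
  have hirr : ∀ e, ¬ R e e := fun e h => h.2.2.1 rfl
  have hsym : ∀ e e', R e e' → R e' e := by
    rintro e e' ⟨h1, h2, h3, v, h4, h5⟩
    exact ⟨h2, h1, h3.symm, v, h5, h4⟩
  let Nb : V → Finset V := fun v => {w | s(v, w) ∈ E'}
  have hNb : ∀ v, #(Nb v) ≤ Δ := by
    intro v
    by_cases hv : v ∈ B
    · refine (card_le_card ?_).trans hBcard
      intro w hw
      have hw' : s(v, w) ∈ E' := by simpa [Nb] using hw
      rcases hw'.2 with h1 | h1
      · exact h1 w (by simp)
      · exact absurd hv (h1 v (by simp))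
    · have hv' : G.degree v ≤ Δ := by simpa [hB] using hv
      refine (card_le_card ?_).trans hv'
      intro w hw
      have hw' : s(v, w) ∈ E' := by simpa [Nb] using hw
      simpa using hw'.1
  have hD : ∀ e, #{e' | R e e'} ≤ 2 * Δ := by
    intro e
    induction e using Sym2.ind with
    | _ a b =>
    have hsub : ({e' | R s(a, b) e'} : Finset (Sym2 V)) ⊆
        (Nb a).image (fun w => s(a, w)) ∪ (Nb b).image (fun w => s(b, w)) := by
      intro e' he'
      obtain ⟨-, h2, -, v, h4, h5⟩ := (mem_filter.1 he').2
      obtain ⟨w, rfl⟩ := h5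
      rw [mem_union, mem_image, mem_image]
      rcases Sym2.mem_iff.1 h4 with rfl | rfl
      · left; exact ⟨w, by simpa [Nb] using h2, rfl⟩
      · right; exact ⟨w, by simpa [Nb] using h2, rfl⟩
    have h1 := (card_le_card hsub).trans (card_union_le _ _)
    have h2 := (card_image_le (s := Nb a) (f := fun w => s(a, w))).trans (hNb a)
    have h3 := (card_image_le (s := Nb b) (f := fun w => s(b, w))).trans (hNb b)
    omega
  let W : Finset V := {v | 0 < G.degree v}
  have hW : #W ≤ Δ ^ 2 := by
    refine le_trans ?_ hsumdeg
    calc #W = ∑ v ∈ W, 1 := by simp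
      _ ≤ ∑ v ∈ W, G.degree v := sum_le_sum fun v hv => (mem_filter.1 hv).2
      _ ≤ _ := sum_le_sum_of_subset (subset_univ _)
  let 𝓢 : Finset (Finset (Sym2 V)) := (powersetCard k W).image pairsOf
  have h𝓢 : #𝓢 ≤ (Δ ^ 2) ^ k := by
    refine card_image_le.trans ?_
    rw [card_powersetCard]
    exact (Nat.choose_le_pow _ _).trans (Nat.pow_le_pow_left hW k)
  have h𝓢R : (#𝓢 : ℝ) ≤ ((Δ : ℝ) ^ 2) ^ k := by exact_mod_cast h𝓢
  have hM : ∀ S ∈ 𝓢, #S = k.choose 2 := by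
    intro S hS
    obtain ⟨K, hK, rfl⟩ := mem_image.1 hS
    rw [card_pairsOf, (mem_powersetCard.1 hK).2]
  have hd : ∀ S ∈ 𝓢, ∀ e ∈ S, #{e' ∈ S | R e e'} ≤ 2 * k := by
    intro S hS
    obtain ⟨K, hK, rfl⟩ := mem_image.1 hS
    have hKc := (mem_powersetCard.1 hK).2
    intro e
    induction e using Sym2.ind with
    | _ a b =>
    intro _
    have hsub : ({e' ∈ pairsOf K | R s(a, b) e'}) ⊆
        K.image (fun w => s(a, w)) ∪ K.image (fun w => s(b, w)) := by
      intro e' he'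
      obtain ⟨h1, -, h2, -, v, h4, h5⟩ := mem_filter.1 he'
      obtain ⟨w, rfl⟩ := h5
      rw [mem_pairsOf] at h1
      rw [mem_union, mem_image, mem_image]
      rcases Sym2.mem_iff.1 h4 with rfl | rfl
      · left; exact ⟨w, h1.2.1, rfl⟩
      · right; exact ⟨w, h1.2.1, rfl⟩
    have h1 := (card_le_card hsub).trans (card_union_le _ _)
    have h2 := (card_image_le (s := K) (f := fun w => s(a, w)))
    have h3 := (card_image_le (s := K) (f := fun w => s(b, w)))
    omega
  obtain ⟨φ, hφp, hφi⟩ := exists_coloring hq R hirr hsym (2 * Δ) (fun e => by convert hD e) (by omega) 𝓢 h (2 * k) (k.choose 2)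
    hM hh hhq (fun S hS e he => by convert hd S hS e he) (by omega) (lt_of_le_of_lt (mul_le_mul_of_nonneg_right h𝓢R (Real.exp_pos _).le) hlt)
  let c : Sym2 V → ℕ := fun e => if e ∈ E' then (φ e : ℕ) else q + (Fintype.equivFin (Sym2 V) e : ℕ)
  have hc : IsProperEdgeColoring G c := by
    intro e₁ h1 e₂ h2 hne hv heq
    by_cases k1 : e₁ ∈ E' <;> by_cases k2 : e₂ ∈ E'
    · simp only [c, k1, k2, if_true] at heq
      exact hφp e₁ (mem_univ _) e₂ (mem_univ _) ⟨k1, k2, hne, hv⟩ (Fin.ext heq)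
    · simp only [c, k1, k2, if_true, if_false] at heq
      have := (φ e₁).2; omega
    · simp only [c, k1, k2, if_true, if_false] at heq
      have := (φ e₂).2; omega
    · simp only [c, k1, k2, if_false] at heq
      exact hne ((Fintype.equivFin (Sym2 V)).injective (Fin.ext (by omega)))
  intro harr
  obtain ⟨f, hf, hr⟩ := harr c hc
  let T : Finset V := univ.image f
  have hT : #T = n := by
    simp only [T]
    rw [card_image_of_injective _ hf, card_univ, Fintype.card_fin]
  have hsplit := card_filter_add_card_filter_not (s := T) (fun v => v ∈ B)
  have hex : ∃ K ⊆ T, #K = k ∧ ((∀ v ∈ K, v ∈ B) ∨ (∀ v ∈ K, v ∉ B)) := by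
    by_cases hc1 : k ≤ #{v ∈ T | v ∈ B}
    · obtain ⟨K, hK, hKc⟩ := exists_subset_card_eq hc1
      exact ⟨K, hK.trans (filter_subset _ _), hKc, Or.inl fun v hv => (mem_filter.1 (hK hv)).2⟩
    · obtain ⟨K, hK, hKc⟩ := exists_subset_card_eq (s := {v ∈ T | v ∉ B}) (n := k) (by omega)
      exact ⟨K, hK.trans (filter_subset _ _), hKc, Or.inr fun v hv => (mem_filter.1 (hK hv)).2⟩
  obtain ⟨K, hKT, hKc, hKB⟩ := hex
  have hpre : ∀ e ∈ pairsOf K, e ∈ E' ∧ ∃ e₀ ∈ (⊤ : SimpleGraph (Fin n)).edgeSet, Sym2.map f e₀ = e := by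
    intro e
    induction e using Sym2.ind with
    | _ a b =>
    intro hab
    rw [mem_pairsOf] at hab
    obtain ⟨ha, hb, hne⟩ := hab
    obtain ⟨i, -, hi⟩ := mem_image.1 (hKT ha)
    obtain ⟨j, -, hj⟩ := mem_image.1 (hKT hb)
    have hij : i ≠ j := by rintro rfl; exact hne (hi.symm.trans hj)
    have hadj : (⊤ : SimpleGraph (Fin n)).Adj i j := hij
    refine ⟨⟨?_, ?_⟩, s(i, j), hadj, by rw [Sym2.map_mk, hi, hj]⟩
    · rw [← hi, ← hj]; exact f.map_adj hadj
    · rcases hKB with hK | hK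
      · left; intro v hv
        rcases Sym2.mem_iff.1 hv with rfl | rfl
        · exact hK _ ha
        · exact hK _ hb
      · right; intro v hv
        rcases Sym2.mem_iff.1 hv with rfl | rfl
        · exact hK _ ha
        · exact hK _ hb
  have hKW : K ⊆ W := by
    intro a ha
    have : 1 < #K := by omega
    obtain ⟨b, hb, hne⟩ := exists_mem_ne this a
    have h1 := (hpre s(a, b) (mem_pairsOf.2 ⟨ha, hb, hne.symm⟩)).1.1
    refine mem_filter.2 ⟨mem_univ _, ?_⟩
    rw [SimpleGraph.degree_pos_iff_exists_adj]
    exact ⟨b, h1⟩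
  refine hφi (pairsOf K) (mem_image.2 ⟨K, mem_powersetCard.2 ⟨hKW, hKc⟩, rfl⟩) ?_
  intro e₁ h1 e₂ h2 heq
  obtain ⟨k1, x, hx, rfl⟩ := hpre e₁ h1
  obtain ⟨k2, y, hy, rfl⟩ := hpre e₂ h2
  have : x = y := by
    apply hr x hx y hy
    simp only [c, k1, k2, if_true, heq]
  rw [this]

lemma ARs_attained (n : ℕ) : ∃ (N : ℕ) (G : SimpleGraph (Fin N)),
    ArrowsTo G (⊤ : SimpleGraph (Fin n)) ∧ G.edgeSet.ncard = ARs (⊤ : SimpleGraph (Fin n)) := by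
  obtain ⟨N, hN⟩ := arrows_exists n
  have : ({m | ∃ (N : ℕ) (G : SimpleGraph (Fin N)), ArrowsTo G (⊤ : SimpleGraph (Fin n)) ∧
      G.edgeSet.ncard = m} : Set ℕ).Nonempty := ⟨_, N, ⊤, hN, rfl⟩
  exact Nat.sInf_mem this

lemma ARs_pos (n : ℕ) (hn : 2 ≤ n) : 1 ≤ ARs (⊤ : SimpleGraph (Fin n)) := by
  obtain ⟨N, G, hG, he⟩ := ARs_attained n
  rw [← he]
  by_contra hcon
  have h0 : G.edgeSet.ncard = 0 := by omega
  rw [Set.ncard_eq_zero (Set.toFinite _)] at h0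
  obtain ⟨f, -, -⟩ := hG (fun _ => 0) (by intro e₁ h1; rw [h0] at h1; exact absurd h1 (Set.notMem_empty _))
  have hadj : (⊤ : SimpleGraph (Fin n)).Adj ⟨0, by omega⟩ ⟨1, by omega⟩ := by
    simp
  have h2 : s(f ⟨0, by omega⟩, f ⟨1, by omega⟩) ∈ G.edgeSet := f.map_adj hadj
  rw [h0] at h2
  exact h2

set_option maxHeartbeats 2000000 in
lemma lower_large (n : ℕ) (hn : 10 ^ 12 ≤ n) :
    (n : ℝ) ^ 6 / (10 ^ 16 * (Real.log n) ^ 2) ≤ (ARs (⊤ : SimpleGraph (Fin n)) : ℝ) := by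
  have hnR : (10 : ℝ) ^ 12 ≤ n := by exact_mod_cast hn
  have hn0 : (0 : ℝ) < n := by linarith [show (0 : ℝ) < 10 ^ 12 by norm_num]
  have hn1 : (1 : ℝ) < n := by linarith [show (1 : ℝ) < 10 ^ 12 by norm_num]
  set L := Real.log n with hL
  have hL0 : 0 < L := Real.log_pos hn1
  have hLn : 10 ^ 6 * L ≤ 2 * n := by
    have h1 : L ≤ 2 * Real.sqrt n := by
      have h2 := Real.log_le_sub_one_of_pos (Real.sqrt_pos.2 hn0)
      rw [Real.log_sqrt hn0.le] at h2
      linarith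
    have h3 : (10 : ℝ) ^ 6 ≤ Real.sqrt n := by
      apply Real.le_sqrt_of_sq_le
      norm_num at hnR ⊢; exact hnR
    have h4 := Real.mul_self_sqrt hn0.le
    nlinarith [Real.sqrt_nonneg (n : ℝ)]
  set Q : ℝ := (n : ℝ) ^ 3 / (10 ^ 6 * L) with hQ
  have hQn : (n : ℝ) ^ 2 / 2 ≤ Q := by
    rw [hQ, le_div_iff₀ (by positivity)]
    nlinarith [sq_nonneg (n : ℝ)]
  have hQL : Q * (10 ^ 6 * L) = (n : ℝ) ^ 3 := by rw [hQ]; field_simp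
  have hn2 : (10 : ℝ) ^ 12 * n ≤ (n : ℝ) ^ 2 := by nlinarith
  set q := ⌊Q⌋₊ with hq
  have hqQ : (q : ℝ) ≤ Q := Nat.floor_le (by linarith [sq_nonneg (n : ℝ)])
  have hQq : Q < q + 1 := Nat.lt_floor_add_one _
  have hQbig : (10 : ℝ) ^ 12 ≤ Q := by nlinarith
  have hq2 : Q / 2 ≤ q := by linarith [show (2 : ℝ) ≤ 10 ^ 12 by norm_num]
  have hqbig : (1000 : ℝ) ≤ q := by linarith [show (2000 : ℝ) ≤ 10 ^ 12 by norm_num]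
  have hqbigN : 1000 ≤ q := by exact_mod_cast hqbig
  have hq0 : (0 : ℝ) < q := by linarith
  set Δ := q / 8 with hΔ
  have hΔ1 : 8 * Δ ≤ q := by omega
  have hΔ2 : q ≤ 16 * Δ := by omega
  have hΔ2R : (q : ℝ) ≤ 16 * Δ := by exact_mod_cast hΔ2
  have hΔ1R : 8 * (Δ : ℝ) ≤ q := by exact_mod_cast hΔ1
  set k := n / 2 with hk
  have hk1 : 2 * k ≤ n := by omega
  have hk2 : n ≤ 3 * k := by omega
  have hk1R : 2 * (k : ℝ) ≤ n := by exact_mod_cast hk1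
  have hk2R : (n : ℝ) ≤ 3 * k := by exact_mod_cast hk2
  have hkpos : (0 : ℝ) < k := by linarith
  have hkbig : (100 : ℝ) ≤ k := by linarith [show (300 : ℝ) ≤ 10 ^ 12 by norm_num]
  have hch : ((k.choose 2 : ℕ) : ℝ) = k * (k - 1) / 2 := Nat.cast_choose_two ℝ k
  set h := k.choose 2 / 2 with hh
  have hh1 : 2 * h ≤ k.choose 2 := by omega
  have hh2 : k.choose 2 ≤ 2 * h + 1 := by omega
  have hh1R : 2 * (h : ℝ) ≤ k * (k - 1) / 2 := by rw [← hch]; exact_mod_cast hh1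
  have hh2R : (k : ℝ) * (k - 1) / 2 ≤ 2 * h + 1 := by rw [← hch]; exact_mod_cast hh2
  have hhlow : (n : ℝ) ^ 2 / 144 ≤ h := by nlinarith
  have hhup : (h : ℝ) ≤ (n : ℝ) ^ 2 / 16 := by nlinarith
  have hhq : h ≤ q := by
    have : (h : ℝ) ≤ q := by nlinarith [sq_nonneg (n : ℝ)]
    exact_mod_cast this
  have hkq : 16 * k ≤ 3 * q := by
    have : 16 * (k : ℝ) ≤ 3 * q := by nlinarith
    exact_mod_cast this
  by_contra hcon
  push Not at hcon
  obtain ⟨N, G, hG, he⟩ := ARs_attained n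
  have hDR : (n : ℝ) ^ 3 / (32 * 10 ^ 6 * L) ≤ Δ := by
    have : (n : ℝ) ^ 3 / (32 * 10 ^ 6 * L) = Q / 32 := by rw [hQ]; field_simp
    rw [this]; linarith
  have h2e : 2 * G.edgeSet.ncard ≤ Δ ^ 2 := by
    have : 2 * (G.edgeSet.ncard : ℝ) ≤ (Δ : ℝ) ^ 2 := by
      rw [he]
      calc 2 * (ARs (⊤ : SimpleGraph (Fin n)) : ℝ) ≤ 2 * ((n : ℝ) ^ 6 / (10 ^ 16 * L ^ 2)) := by linarith
        _ ≤ ((n : ℝ) ^ 3 / (32 * 10 ^ 6 * L)) ^ 2 := by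
            rw [div_pow, ← mul_div_assoc, div_le_div_iff₀ (by positivity) (by positivity)]
            have : (0 : ℝ) ≤ (n : ℝ) ^ 6 * L ^ 2 := by positivity
            nlinarith
        _ ≤ _ := by gcongr
    exact_mod_cast this
  refine graph_lower G n k q Δ h hk1 (by omega) (by omega) hΔ1 (by omega) h2e hh1 hhq hkq ?_ hG
  -- numeric estimate
  have hΔn : (Δ : ℝ) ≤ (n : ℝ) ^ 3 := by
    have : Q ≤ (n : ℝ) ^ 3 := by
      rw [hQ]
      apply div_le_self (by positivity)
      have : Real.log 2 ≤ L := Real.log_le_log (by norm_num) (by linarith [show (2 : ℝ) ≤ 10 ^ 12 by norm_num])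
      have := Real.log_two_gt_d9
      linarith
    linarith [show (0 : ℝ) ≤ Δ by positivity]
  have hpow : ((Δ : ℝ) ^ 2) ^ k ≤ Real.exp (3 * n * L) := by
    have h1 : (n : ℝ) = Real.exp L := (Real.exp_log hn0).symm
    calc ((Δ : ℝ) ^ 2) ^ k ≤ (((n : ℝ) ^ 3) ^ 2) ^ k := by gcongr
      _ = (n : ℝ) ^ (6 * k) := by rw [← pow_mul, ← pow_mul]; congr 1; ring
      _ = Real.exp ((6 * k : ℕ) * L) := by rw [Real.exp_nat_mul, ← h1]
      _ ≤ Real.exp (3 * n * L) := by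
          apply Real.exp_le_exp.2
          push_cast
          have := mul_le_mul_of_nonneg_right hk1R hL0.le
          linarith
  refine lt_of_le_of_lt (mul_le_mul_of_nonneg_right hpow (Real.exp_pos _).le) ?_
  rw [← Real.exp_add, Real.exp_lt_one_iff]
  have t1 : 12 * n * L ≤ (h : ℝ) ^ 2 / (4 * q) := by
    rw [le_div_iff₀ (by positivity)]
    have a1 : ((n : ℝ) ^ 2 / 144) ^ 2 ≤ (h : ℝ) ^ 2 := by gcongr
    have a2 : 12 * n * L * (4 * q) ≤ 12 * n * L * (4 * Q) := by gcongr
    have a3 : 12 * n * L * (4 * Q) = 48 * n * (n : ℝ) ^ 3 / 10 ^ 6 := by rw [← hQL]; ring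
    have a4 : (0 : ℝ) ≤ (n : ℝ) ^ 4 := by positivity
    nlinarith
  have t2 : 8 * ((2 * k : ℕ) : ℝ) * ((k.choose 2 : ℕ) : ℝ) / (3 * q) ≤ 10 ^ 6 * L := by
    rw [div_le_iff₀ (by positivity), hch]
    push_cast
    have b1 : (k : ℝ) * (k * (k - 1)) ≤ (n : ℝ) ^ 3 / 8 := by
      have : (k : ℝ) ^ 3 ≤ ((n : ℝ) / 2) ^ 3 := by gcongr; linarith
      nlinarith
    have b2 : 10 ^ 6 * L * (3 * (Q / 2)) ≤ 10 ^ 6 * L * (3 * q) := by gcongr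
    have b3 : 10 ^ 6 * L * (3 * (Q / 2)) = 3 / 2 * (n : ℝ) ^ 3 := by rw [← hQL]; ring
    have b4 : (0 : ℝ) ≤ (n : ℝ) ^ 3 := by positivity
    nlinarith
  have t3 : 10 ^ 6 * L < 9 * n * L := by
    apply mul_lt_mul_of_pos_right _ hL0
    linarith [show (10 : ℝ) ^ 6 < 9 * 10 ^ 12 by norm_num]
  linarith

lemma lower_final : ∃ c₁ : ℝ, 0 < c₁ ∧ ∀ n : ℕ, 2 ≤ n →
    c₁ * (n : ℝ) ^ 5 / Real.log n ≤ (ARs (⊤ : SimpleGraph (Fin n)) : ℝ) := by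
  refine ⟨1 / 10 ^ 70, by positivity, fun n hn => ?_⟩
  have hnR : (2 : ℝ) ≤ n := by exact_mod_cast hn
  have hL2 : Real.log 2 ≤ Real.log n := Real.log_le_log (by norm_num) hnR
  have hl2 := Real.log_two_gt_d9
  have hL0 : 0 < Real.log n := by linarith
  have hLn : Real.log n ≤ n := (Real.log_le_sub_one_of_pos (by linarith)).trans (by linarith)
  by_cases hc : 10 ^ 12 ≤ n
  · refine le_trans ?_ (lower_large n hc)
    rw [div_le_div_iff₀ hL0 (by positivity)]
    calc 1 / 10 ^ 70 * (n : ℝ) ^ 5 * (10 ^ 16 * Real.log n ^ 2)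
        = (10 ^ 16 / 10 ^ 70) * ((n : ℝ) ^ 5 * Real.log n * Real.log n) := by ring
      _ ≤ 1 * ((n : ℝ) ^ 5 * Real.log n * n) := by gcongr; norm_num
      _ = _ := by ring
  · have h1 : (1 : ℝ) ≤ ARs (⊤ : SimpleGraph (Fin n)) := by exact_mod_cast ARs_pos n hn
    refine le_trans ?_ h1
    have hnl : (n : ℝ) ≤ 10 ^ 12 := by exact_mod_cast (by omega : n ≤ 10 ^ 12)
    rw [div_le_iff₀ hL0]
    have h5 : (n : ℝ) ^ 5 ≤ (10 ^ 12) ^ 5 := by gcongr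
    calc 1 / 10 ^ 70 * (n : ℝ) ^ 5 ≤ 1 / 10 ^ 70 * (10 ^ 12) ^ 5 := by gcongr
      _ ≤ 1 / 2 := by norm_num
      _ ≤ _ := by linarith

end Helpers

theorem stmt_5 :
    ∃ c₁ c₂ : ℝ, 0 < c₁ ∧ 0 < c₂ ∧ ∀ n : ℕ, 2 ≤ n →
      c₁ * (n : ℝ) ^ 5 / Real.log n ≤ (ARs (⊤ : SimpleGraph (Fin n)) : ℝ) ∧
      (ARs (⊤ : SimpleGraph (Fin n)) : ℝ) ≤ c₂ * (n : ℝ) ^ 6 / (Real.log n) ^ 2 := by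
  obtain ⟨c₁, h1, H1⟩ := lower_final
  obtain ⟨c₂, h2, H2⟩ := upper_final
  exact ⟨c₁, c₂, h1, h2, fun n hn => ⟨H1 n hn, H2 n hn⟩⟩
end
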